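/- Let Δ⁺ₙ = n² − 4 for integers n ≥ 3, and let h(Δ⁺ₙ) denote the order of the (wide) class group of the quadratic order of discriminant Δ⁺ₙ. Then log h(Δ⁺ₙ) = log n + o(log n) as n → ∞; that is, (log h(Δ⁺ₙ) − log n)/log n → 0 as n → ∞. -/

import Mathlib

noncomputable section

/-- A complex square root of an integer `d`. -/
def sqrtD (d : ℤ) : ℂ :=
  if 0 ≤ d then ((Real.sqrt d : ℝ) : ℂ) else Complex.I * ((Real.sqrt (-d) : ℝ) : ℂ)

/-- The element `(Δ + √Δ)/2` generating the quadratic order of discriminant `Δ`. -/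
def omegaD (d : ℤ) : ℂ := ((d : ℂ) + sqrtD d) / 2

/-- The quadratic order `O_Δ = ℤ[(Δ + √Δ)/2]` of discriminant `Δ`, as a subring of `ℂ`. -/
def QOrder (d : ℤ) : Subring ℂ := Subring.closure {omegaD d}

/-- The class number `h_Δ`: the order of the (wide) class group of `O_Δ`,
the group of invertible fractional ideals modulo principal fractional ideals. -/
def classNumber (d : ℤ) : ℕ := Nat.card (ClassGroup (QOrder d))

/-!
The order `O` of discriminant `n² - 4` is `ℤ[ω]` with `ω² = nω - 1`, so it contains the unit `ω`,
whose larger real conjugate `ε` is less than `n`.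

*Upper bound.* Gauss reduction shows that every ideal class contains some `(m, ω - t)` with
`0 < t < n`, `m ∣ t² - nt + 1`. By the divisor bound there are at most `n ^ (1 + o(1))` of these.

*Lower bound.* The number of invertible ideals `(a, ω - t)` with `a ≤ X` and `a` coprime to `n² - 4`
is at least of order `L(1, χ) X`, up to a factor `n ^ o(1)`, where `χ` is the quadratic character of
discriminant `n² - 4`. On the other hand, the ideals in a single class correspond to elements of a
fixed lattice whose norm is at most a constant times `X`, taken modulo multiplication by `ω`;
cutting this region into `O(log n)` boxes shows that there are at most
`O(X log n / n) + O_n(√X)` of them.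
Letting `X → ∞` gives `h ≥ L(1, χ) n ^ (1 - o(1))`, and `L(1, χ) ≥ n ^ (-o(1))` by Siegel's theorem,
which is proved here by Estermann's method.
-/

/-! ### The divisor bound -/

lemma natCast_add_one_le_mul_pow {x C : ℝ} (hx : 1 < x) (hC : 1 ≤ C)
    (hCx : 1 ≤ C * Real.log x) (k : ℕ) : (k : ℝ) + 1 ≤ C * x ^ k := by
  have hexp : 1 + k * Real.log x ≤ x ^ k := by
    rw [← Real.rpow_natCast, Real.rpow_def_of_pos (by linarith)]
    linarith [Real.add_one_le_exp (Real.log x * k)]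
  calc (k : ℝ) + 1 ≤ k * (C * Real.log x) + C := by
        gcongr; exact le_mul_of_one_le_right (by positivity) hCx
    _ = C * (1 + k * Real.log x) := by ring
    _ ≤ C * x ^ k := by gcongr

lemma natCast_add_one_le_pow {x : ℝ} (hx : 2 ≤ x) (k : ℕ) : (k : ℝ) + 1 ≤ x ^ k :=
  calc (k : ℝ) + 1 ≤ 2 ^ k := mod_cast Nat.lt_two_pow_self
    _ ≤ x ^ k := by gcongr

lemma prod_primeFactors_rpow_pow_factorization {m : ℕ} (hm : m ≠ 0) (δ : ℝ) :
    ∏ p ∈ m.primeFactors, ((p : ℝ) ^ δ) ^ m.factorization p = (m : ℝ) ^ δ := by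
  conv_rhs => rw [Nat.prod_primeFactors_pow_factorization hm]
  push_cast
  rw [← Real.finsetProd_rpow _ _ fun p _ => by positivity]
  exact Finset.prod_congr rfl fun p _ => (Real.rpow_pow_comm p.cast_nonneg δ _)

lemma prod_primeFactors_ite_lt_le {C : ℝ} (hC : 1 ≤ C) (M m : ℕ) :
    ∏ p ∈ m.primeFactors, (if p < M then C else 1) ≤ C ^ M := by
  rw [Finset.prod_ite, Finset.prod_const, Finset.prod_const_one, mul_one]
  refine pow_le_pow_right₀ hC ?_
  calc (m.primeFactors.filter (· < M)).card ≤ (Finset.range M).card :=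
        Finset.card_le_card fun p hp => Finset.mem_range.2 (Finset.mem_filter.1 hp).2
    _ = M := Finset.card_range M

theorem exists_card_divisors_le {δ : ℝ} (hδ : 0 < δ) :
    ∃ C : ℝ, 0 < C ∧ ∀ m : ℕ, m ≠ 0 → (m.divisors.card : ℝ) ≤ C * (m : ℝ) ^ δ := by
  set C : ℝ := max 1 (1 / (δ * Real.log 2))
  have hC1 : 1 ≤ C := le_max_left _ _
  obtain ⟨M, hM⟩ := exists_nat_gt ((2 : ℝ) ^ (1 / δ))
  have hlocal (p k : ℕ) (hp : 2 ≤ p) :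
      (k : ℝ) + 1 ≤ (if p < M then C else 1) * ((p : ℝ) ^ δ) ^ k := by
    have hp2 : (2 : ℝ) ≤ p := mod_cast hp
    split_ifs with h
    · refine natCast_add_one_le_mul_pow (Real.one_lt_rpow (by linarith) hδ) hC1 ?_ k
      rw [Real.log_rpow (by linarith)]
      calc 1 ≤ C * (δ * Real.log 2) := (div_le_iff₀ (by positivity)).1 (le_max_right _ _)
        _ ≤ C * (δ * Real.log p) := by gcongr
    · rw [one_mul]
      refine natCast_add_one_le_pow ?_ k
      calc (2 : ℝ) = ((2 : ℝ) ^ (1 / δ)) ^ δ := by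
            rw [← Real.rpow_mul (by norm_num), one_div_mul_cancel hδ.ne', Real.rpow_one]
        _ ≤ (p : ℝ) ^ δ := by
            gcongr
            exact hM.le.trans (mod_cast not_lt.1 h)
  refine ⟨C ^ M, by positivity, fun m hm => ?_⟩
  rw [Nat.card_divisors hm]
  push_cast
  calc ∏ p ∈ m.primeFactors, ((m.factorization p : ℝ) + 1)
      ≤ ∏ p ∈ m.primeFactors, ((if p < M then C else 1) * ((p : ℝ) ^ δ) ^ m.factorization p) :=
        Finset.prod_le_prod (fun p _ => by positivity)
          fun p hp => hlocal p _ (Nat.prime_of_mem_primeFactors hp).two_le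
    _ = (∏ p ∈ m.primeFactors, (if p < M then C else 1)) * (m : ℝ) ^ δ := by
        rw [Finset.prod_mul_distrib, prod_primeFactors_rpow_pow_factorization hm]
    _ ≤ C ^ M * (m : ℝ) ^ δ := by
        gcongr
        exact prod_primeFactors_ite_lt_le hC1 M m

lemma prod_primeFactors_one_sub_inv_nonneg (m : ℕ) :
    0 ≤ ∏ p ∈ m.primeFactors, (1 - (p : ℝ)⁻¹) :=
  Finset.prod_nonneg fun _ _ => sub_nonneg.2 (Nat.cast_inv_le_one _)

lemma inv_card_divisors_le_prod_one_sub_inv {m : ℕ} (hm : m ≠ 0) :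
    (m.divisors.card : ℝ)⁻¹ ≤ ∏ p ∈ m.primeFactors, (1 - (p : ℝ)⁻¹) := by
  rw [Nat.card_divisors hm]
  push_cast
  rw [← Finset.prod_inv_distrib]
  refine Finset.prod_le_prod (fun p _ => by positivity) fun p hp => ?_
  have hpp := Nat.prime_of_mem_primeFactors hp
  have hk : (1 : ℝ) ≤ m.factorization p :=
    mod_cast hpp.factorization_pos_of_dvd hm (Nat.dvd_of_mem_primeFactors hp)
  have hp2 : (2 : ℝ) ≤ p := mod_cast hpp.two_le
  calc ((m.factorization p : ℝ) + 1)⁻¹ ≤ 1 - (2 : ℝ)⁻¹ := by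
        rw [inv_le_comm₀ (by positivity) (by norm_num)]; linarith
    _ ≤ 1 - (p : ℝ)⁻¹ := by gcongr

lemma exists_le_prod_one_sub_inv {δ : ℝ} (hδ : 0 < δ) :
    ∃ c : ℝ, 0 < c ∧ ∀ m : ℕ, m ≠ 0 →
      c * (m : ℝ) ^ (-δ) ≤ ∏ p ∈ m.primeFactors, (1 - (p : ℝ)⁻¹) := by
  obtain ⟨C, hC0, hC⟩ := exists_card_divisors_le hδ
  refine ⟨C⁻¹, inv_pos.2 hC0, fun m hm => ?_⟩
  have hcard : (0 : ℝ) < m.divisors.card :=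
    mod_cast Finset.card_pos.2 (Nat.nonempty_divisors.2 hm)
  calc C⁻¹ * (m : ℝ) ^ (-δ) = (C * (m : ℝ) ^ δ)⁻¹ := by
        rw [Real.rpow_neg m.cast_nonneg, mul_inv]
    _ ≤ (m.divisors.card : ℝ)⁻¹ := by gcongr; exact hC m hm
    _ ≤ _ := inv_card_divisors_le_prod_one_sub_inv hm

/-! ### Estermann's method -/

section TaylorCoefficients

open Complex Filter

/-- The `m`-th coefficient of the real part of `F` in powers of `c - x`, so that
`re F(x) = ∑ₘ altTaylorCoeff F c m * (c - x) ^ m` for real `x`. The sign `(-1) ^ m` makes the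
coefficients of a Dirichlet series with nonnegative coefficients nonnegative. -/
def altTaylorCoeff (F : ℂ → ℂ) (c : ℝ) (m : ℕ) : ℝ :=
  ((-1) ^ m * iteratedDeriv m F c).re / m.factorial

@[simp]
lemma altTaylorCoeff_zero (F : ℂ → ℂ) (c : ℝ) : altTaylorCoeff F c 0 = (F c).re := by
  simp [altTaylorCoeff]

lemma hasSum_altTaylorCoeff {F : ℂ → ℂ} (hF : Differentiable ℂ F) (c x : ℝ) :
    HasSum (fun m => altTaylorCoeff F c m * (c - x) ^ m) (F x).re := by
  convert! hasSum_re (hasSum_taylorSeries_of_entire hF c x) using 2 with m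
  have hterm : (m.factorial : ℂ)⁻¹ • ((x : ℂ) - c) ^ m • iteratedDeriv m F c =
      (((c - x) ^ m / m.factorial : ℝ) : ℂ) * ((-1) ^ m * iteratedDeriv m F c) := by
    rw [smul_eq_mul, smul_eq_mul, show ((x : ℂ) - c) = (c - x) * -1 by ring, mul_pow]
    push_cast
    ring
  rw [hterm, re_ofReal_mul, altTaylorCoeff]
  ring

lemma abs_altTaylorCoeff_le {F : ℂ → ℂ} (hF : Differentiable ℂ F) {c r C : ℝ} (hr : 0 < r)
    (hC : ∀ s ∈ Metric.sphere (c : ℂ) r, ‖F s‖ ≤ C) (m : ℕ) :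
    |altTaylorCoeff F c m| ≤ C / r ^ m := by
  have hm : (0 : ℝ) < m.factorial := by positivity
  rw [altTaylorCoeff, abs_div, abs_of_pos hm, div_le_iff₀ hm]
  calc |((-1) ^ m * iteratedDeriv m F c).re|
      ≤ ‖(-1) ^ m * iteratedDeriv m F c‖ := abs_re_le_norm _
    _ = ‖iteratedDeriv m F c‖ := by simp
    _ ≤ m.factorial * C / r ^ m :=
      norm_iteratedDeriv_le_of_forall_mem_sphere_norm_le m hr hF.diffContOnCl hC
    _ = C / r ^ m * m.factorial := by ring

lemma differentiable_dslope {G : ℂ → ℂ} (hG : Differentiable ℂ G) (w : ℂ) :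
    Differentiable ℂ (dslope G w) :=
  differentiableOn_univ.1 ((differentiableOn_dslope univ_mem).2 hG.differentiableOn)

lemma norm_dslope_le_of_sphere {G : ℂ → ℂ} (hG : Differentiable ℂ G) {c w : ℂ} {r B : ℝ}
    (hw : dist w c < r) (hB : ∀ s ∈ Metric.sphere c r, ‖G s‖ ≤ B) {s : ℂ}
    (hs : s ∈ Metric.sphere c r) : ‖dslope G w s‖ ≤ 2 * B / (r - dist w c) := by
  have hr : r ≠ 0 := (dist_nonneg.trans_lt hw).ne'
  have hGw : ‖G w‖ ≤ B :=
    norm_le_of_forall_mem_frontier_norm_le Metric.isBounded_ball hG.diffContOnCl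
      (by rwa [frontier_ball c hr]) (subset_closure (Metric.mem_ball.2 hw))
  have hdist : r - dist w c ≤ ‖s - w‖ := by
    have := dist_triangle s w c
    rw [Metric.mem_sphere.1 hs, dist_eq_norm s w] at this
    linarith
  have hne : s ≠ w := by
    rintro rfl
    exact hw.ne (Metric.mem_sphere.1 hs)
  rw [dslope_of_ne _ hne, slope_def_field, norm_div]
  have hnum : ‖G s - G w‖ ≤ 2 * B := by linarith [norm_sub_le (G s) (G w), hB s hs]
  gcongr
  exact (norm_nonneg _).trans hnum

end TaylorCoefficients

section Estermann

open Complex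
open scoped ComplexOrder

variable {a : ℕ → ℂ} {G : ℂ → ℂ}

lemma abscissaOfAbsConv_lt_two (hsum : ∀ s : ℂ, 1 < s.re → LSeriesSummable a s) :
    LSeries.abscissaOfAbsConv a < ((2 : ℝ) : EReal) :=
  (LSeries.abscissaOfAbsConv_le_of_forall_lt_LSeriesSummable (x := 1)
    fun y hy => hsum y (by simpa using hy)).trans_lt (by exact_mod_cast one_lt_two)

lemma altTaylorCoeff_LSeries_nonneg (ha : 0 ≤ a) {c : ℝ}
    (hc : LSeries.abscissaOfAbsConv a < c) (m : ℕ) : 0 ≤ altTaylorCoeff (LSeries a) c m :=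
  div_nonneg (nonneg_iff.1 (LSeries.iteratedDeriv_alternating ha hc m)).1 (by positivity)

lemma one_le_re_LSeries (ha : 0 ≤ a) (ha1 : 1 ≤ a 1) {x : ℝ} (hx : LSeriesSummable a x) :
    1 ≤ (LSeries a x).re := by
  have hle := le_hasSum (hasSum_re hx.hasSum) 1
    fun m _ => (nonneg_iff.1 (LSeries.term_nonneg (ha m) x)).1
  refine le_trans ?_ hle
  simpa [LSeries.term_def] using (Complex.le_def.1 ha1).1

lemma altTaylorCoeff_inv_sub_one (l : ℂ) (m : ℕ) :
    altTaylorCoeff (fun s => l * (s - 1)⁻¹) (2 : ℝ) m = l.re := by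
  have hderiv : iteratedDeriv m (fun s : ℂ => l * (s - 1)⁻¹) 2 = l * ((-1) ^ m * m.factorial) := by
    have hinv := iter_deriv_inv (𝕜 := ℂ) m 1
    rw [one_zpow, mul_one, ← iteratedDeriv_eq_iterate] at hinv
    rw [iteratedDeriv_const_mul_field]
    rw [iteratedDeriv_comp_sub_const m (fun z : ℂ => z⁻¹) 1]
    norm_num [← hinv]
  have hsign : (-1 : ℂ) ^ m * (l * ((-1) ^ m * m.factorial)) = (m.factorial : ℝ) * l := by
    have : (-1 : ℂ) ^ m * (-1) ^ m = 1 := by rw [← mul_pow]; simp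
    push_cast
    linear_combination (l * m.factorial) * this
  rw [altTaylorCoeff, ofReal_ofNat, hderiv, hsign, re_ofReal_mul]
  field_simp

/-- Subtracting the pole: near `2`, `LSeries a s = dslope G 1 s + G 1 / (s - 1)`. -/
lemma altTaylorCoeff_LSeries_eq (hG : Differentiable ℂ G)
    (hGa : ∀ s : ℂ, 1 < s.re → LSeries a s = G s / (s - 1)) (m : ℕ) :
    altTaylorCoeff (LSeries a) (2 : ℝ) m = altTaylorCoeff (dslope G 1) (2 : ℝ) m + (G 1).re := by
  have hEq : Set.EqOn (LSeries a) (dslope G 1 + fun s => G 1 * (s - 1)⁻¹) {s : ℂ | 1 < s.re} := by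
    intro s hs
    have hs1 : s ≠ 1 := by rintro rfl; simp at hs
    rw [hGa s hs, Pi.add_apply, dslope_of_ne _ hs1, slope_def_field]
    ring
  have hpole : ContDiffAt ℂ m (fun s : ℂ => G 1 * (s - 1)⁻¹) 2 :=
    contDiffAt_const.mul (ContDiffAt.inv (by fun_prop) (by norm_num))
  have hopen : IsOpen {s : ℂ | 1 < s.re} := continuous_re.isOpen_preimage _ isOpen_Ioi
  rw [← altTaylorCoeff_inv_sub_one (G 1) m]
  simp only [altTaylorCoeff, ofReal_ofNat]
  rw [hEq.iteratedDeriv_of_isOpen hopen m (by simp : (2 : ℂ) ∈ {s : ℂ | 1 < s.re}),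
    iteratedDeriv_add (differentiable_dslope hG 1).contDiff.contDiffAt hpole, mul_add, add_re,
    add_div]

lemma one_le_of_hasSum_coeff {c : ℕ → ℝ} {l C x S : ℝ} (hl : ∀ m, -l ≤ c m) (h0 : 1 - l ≤ c 0)
    (hC : ∀ m, |c m| ≤ C * (2 / 3) ^ m) (hx : 1 < x) (hx' : x ≤ 9 / 8)
    (hS : HasSum (fun m => c m * x ^ m) S) {M : ℕ} (hM : M ≠ 0) :
    1 ≤ S + l * (x ^ M - 1) / (x - 1) + 4 * C * (3 / 4) ^ M := by
  have hx0 : 0 ≤ x := by linarith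
  have hC0 : 0 ≤ C := by simpa using (abs_nonneg _).trans (hC 0)
  have hhead : 1 - l * ∑ m ∈ Finset.range M, x ^ m ≤ ∑ m ∈ Finset.range M, c m * x ^ m := by
    obtain ⟨M, rfl⟩ := Nat.exists_eq_succ_of_ne_zero hM
    have hterm : ∑ i ∈ Finset.range M, -(l * x ^ (i + 1)) ≤
        ∑ i ∈ Finset.range M, c (i + 1) * x ^ (i + 1) := by
      refine Finset.sum_le_sum fun i _ => ?_
      nlinarith [mul_le_mul_of_nonneg_right (hl (i + 1)) (pow_nonneg hx0 (i + 1))]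
    rw [Finset.sum_neg_distrib, ← Finset.mul_sum] at hterm
    rw [Nat.succ_eq_add_one, Finset.sum_range_succ', Finset.sum_range_succ', mul_add]
    linarith
  have htail : |∑' m, c (m + M) * x ^ (m + M)| ≤ 4 * C * (3 / 4) ^ M := by
    have hgeom : HasSum (fun m : ℕ => C * (3 / 4 : ℝ) ^ M * (3 / 4) ^ m)
        (C * (3 / 4) ^ M * (1 - 3 / 4)⁻¹) :=
      (hasSum_geometric_of_lt_one (by norm_num) (by norm_num)).mul_left _
    rw [← Real.norm_eq_abs,
      show 4 * C * (3 / 4 : ℝ) ^ M = C * (3 / 4) ^ M * (1 - 3 / 4)⁻¹ by ring]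
    refine tsum_of_norm_bounded hgeom fun m => ?_
    calc ‖c (m + M) * x ^ (m + M)‖ = |c (m + M)| * x ^ (m + M) := by
          rw [Real.norm_eq_abs, abs_mul, abs_of_nonneg (pow_nonneg hx0 _)]
      _ ≤ C * (2 / 3) ^ (m + M) * (9 / 8) ^ (m + M) := by gcongr; exact hC _
      _ = C * (3 / 4) ^ M * (3 / 4) ^ m := by
          rw [mul_assoc, ← mul_pow, mul_assoc, ← pow_add, add_comm m M]; norm_num
  have hsplit := hS.summable.sum_add_tsum_nat_add M
  rw [hS.tsum_eq] at hsplit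
  rw [geom_sum_eq hx.ne', ← mul_div_assoc] at hhead
  linarith [(abs_le.1 htail).1]

lemma one_le_re_div_add_pow (ha : 0 ≤ a) (ha1 : 1 ≤ a 1) (hG : Differentiable ℂ G)
    (hGa : ∀ s : ℂ, 1 < s.re → LSeriesHasSum a s (G s / (s - 1)))
    {B : ℝ} (hB : ∀ s ∈ Metric.sphere (2 : ℂ) (3 / 2), ‖G s‖ ≤ B)
    {σ : ℝ} (hσ : 7 / 8 ≤ σ) (hσ1 : σ < 1) {M : ℕ} (hM : M ≠ 0) :
    1 ≤ (G σ).re / (σ - 1) + (G 1).re * (2 - σ) ^ M / (1 - σ) + 16 * B * (3 / 4) ^ M := by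
  have habs := abscissaOfAbsConv_lt_two fun s hs => (hGa s hs).LSeriesSummable
  have hrel := altTaylorCoeff_LSeries_eq hG fun s hs => (hGa s hs).LSeries_eq
  have hl (m : ℕ) : -(G 1).re ≤ altTaylorCoeff (dslope G 1) (2 : ℝ) m := by
    linarith [hrel m, altTaylorCoeff_LSeries_nonneg ha habs m]
  have h0 : 1 - (G 1).re ≤ altTaylorCoeff (dslope G 1) (2 : ℝ) 0 := by
    have h2 := one_le_re_LSeries (x := 2) ha ha1 (hGa _ (by simp)).LSeriesSummable
    linarith [hrel 0, altTaylorCoeff_zero (LSeries a) 2]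
  have hC (m : ℕ) : |altTaylorCoeff (dslope G 1) (2 : ℝ) m| ≤ 4 * B * (2 / 3) ^ m := by
    have hdist : dist (1 : ℂ) 2 = 1 := by rw [dist_eq_norm]; norm_num
    refine (abs_altTaylorCoeff_le (differentiable_dslope hG 1) (by norm_num : (0 : ℝ) < 3 / 2)
      (fun s hs => norm_dslope_le_of_sphere hG (by rw [hdist]; norm_num) hB
        (by simpa using hs)) m).trans_eq ?_
    rw [hdist, show (2 / 3 : ℝ) = (3 / 2)⁻¹ by norm_num, inv_pow]
    ring
  have hval : (dslope G 1 σ).re = ((G σ).re - (G 1).re) / (σ - 1) := by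
    have hne : (σ : ℂ) ≠ 1 := by exact_mod_cast hσ1.ne
    rw [dslope_of_ne _ hne, slope_def_field, ← ofReal_one, ← ofReal_sub, div_ofReal_re, sub_re]
  have hmain := one_le_of_hasSum_coeff hl h0 hC (x := 2 - σ) (by linarith) (by linarith)
    (hasSum_altTaylorCoeff (differentiable_dslope hG 1) 2 σ) hM
  rw [hval] at hmain
  refine hmain.trans_eq ?_
  have : σ - 1 ≠ 0 := by linarith
  have : 1 - σ ≠ 0 := by linarith
  rw [show 2 - σ - 1 = 1 - σ by ring, show σ - 1 = -(1 - σ) by ring]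
  field_simp
  ring

/-- Estermann's inequality: if `L(1)`, the residue `G 1`, were small compared to `1 - σ`, then
`G` would have to be substantially negative at `σ`. It is obtained by expanding
`(G s - G 1) / (s - 1)` at `s = 2`, where the first coefficient is at least `1 - G 1` and all others
are at least `-G 1`. -/
lemma half_le_re_div_add_rpow (ha : 0 ≤ a) (ha1 : 1 ≤ a 1) (hG : Differentiable ℂ G)
    (hGa : ∀ s : ℂ, 1 < s.re → LSeriesHasSum a s (G s / (s - 1)))
    {B : ℝ} (hB : ∀ s ∈ Metric.sphere (2 : ℂ) (3 / 2), ‖G s‖ ≤ B)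
    {σ : ℝ} (hσ : 7 / 8 ≤ σ) (hσ1 : σ < 1) (hB1 : 1 ≤ B) (hl0 : 0 ≤ (G 1).re) :
    1 / 2 ≤ (G σ).re / (σ - 1) + 3 * (G 1).re / (1 - σ) * (32 * B) ^ (4 * (1 - σ)) := by
  have : 0 < 1 - σ := by linarith
  set y := Real.log (32 * B) / Real.log (4 / 3) with hy
  have hlog43 : 1 / 4 ≤ Real.log (4 / 3) := by
    have := Real.one_sub_inv_le_log_of_pos (x := 4 / 3) (by norm_num)
    norm_num at this ⊢
    linarith
  have hlogB : 0 < Real.log (32 * B) := Real.log_pos (by linarith)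
  have hypos : 0 < y := div_pos hlogB (by linarith)
  have htail : 16 * B * (3 / 4) ^ ⌈y⌉₊ ≤ 1 / 2 := by
    have hceil : Real.log (32 * B) ≤ ⌈y⌉₊ * Real.log (4 / 3) :=
      (div_le_iff₀ (by linarith)).1 (Nat.le_ceil y)
    rw [← Real.log_pow, Real.log_le_log_iff (by linarith) (by positivity)] at hceil
    rw [show (3 / 4 : ℝ) = (4 / 3)⁻¹ by norm_num, inv_pow, ← div_eq_mul_inv,
      div_le_iff₀ (by positivity)]
    linarith
  have hpow : (2 - σ) ^ ⌈y⌉₊ ≤ 3 * (32 * B) ^ (4 * (1 - σ)) := by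
    have hceil : (⌈y⌉₊ : ℝ) ≤ 4 * Real.log (32 * B) + 1 := by
      have : y ≤ 4 * Real.log (32 * B) := by
        rw [hy, div_le_iff₀ (by linarith)]
        nlinarith
      linarith [Nat.ceil_lt_add_one hypos.le]
    calc (2 - σ) ^ ⌈y⌉₊ ≤ (Real.exp (1 - σ)) ^ ⌈y⌉₊ := by
          gcongr
          · linarith
          · linarith [Real.add_one_le_exp (1 - σ)]
      _ = Real.exp (⌈y⌉₊ * (1 - σ)) := by rw [← Real.exp_nat_mul]
      _ ≤ Real.exp (1 + Real.log (32 * B) * (4 * (1 - σ))) := Real.exp_le_exp.2 (by nlinarith)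
      _ = Real.exp 1 * (32 * B) ^ (4 * (1 - σ)) := by
          rw [Real.exp_add, Real.rpow_def_of_pos (by linarith)]
      _ ≤ 3 * (32 * B) ^ (4 * (1 - σ)) := by
          gcongr
          exact Real.exp_one_lt_three.le
  calc (1 / 2 : ℝ)
      ≤ (G σ).re / (σ - 1) + (G 1).re * (2 - σ) ^ ⌈y⌉₊ / (1 - σ) := by
        linarith [one_le_re_div_add_pow ha ha1 hG hGa hB hσ hσ1 (Nat.ceil_pos.2 hypos).ne']
    _ ≤ (G σ).re / (σ - 1) + (G 1).re * (3 * (32 * B) ^ (4 * (1 - σ))) / (1 - σ) := by gcongr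
    _ = _ := by ring

end Estermann

/-! ### Siegel's theorem -/

section DirichletCharacters

open MeasureTheory Set DirichletCharacter

variable {N : ℕ}

lemma sum_range_natCast_zmod {M : Type*} [AddCommMonoid M] [NeZero N] (f : ZMod N → M) :
    ∑ k ∈ Finset.range N, f k = ∑ x, f x := by
  obtain ⟨m, rfl⟩ := Nat.exists_eq_succ_of_ne_zero (NeZero.ne N)
  rw [Finset.sum_range]
  exact Finset.sum_congr rfl fun x _ => congrArg f (Fin.cast_val_eq_self x)

/-- The partial sum `∑_{1 ≤ k ≤ t} χ(k)` for a real bound `t`. -/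
def charSum (χ : DirichletCharacter ℂ N) (t : ℝ) : ℂ :=
  ∑ k ∈ Finset.Icc 1 ⌊t⌋₊, χ k

lemma measurable_charSum (χ : DirichletCharacter ℂ N) : Measurable (charSum χ) :=
  (measurable_from_nat (f := fun n : ℕ => ∑ k ∈ Finset.Icc 1 n, χ (k : ZMod N))).comp
    Nat.measurable_floor

lemma norm_charSum_le_self (χ : DirichletCharacter ℂ N) {t : ℝ} (ht : 0 ≤ t) :
    ‖charSum χ t‖ ≤ t := by
  calc ‖charSum χ t‖ ≤ ∑ _ ∈ Finset.Icc 1 ⌊t⌋₊, (1 : ℝ) :=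
        norm_sum_le_of_le _ fun k _ => χ.norm_le_one k
    _ = ⌊t⌋₊ := by simp
    _ ≤ t := Nat.floor_le ht

lemma mellin_indicator_charSum_neg (χ : DirichletCharacter ℂ N) (s : ℂ) :
    mellin ((Ioi (1 : ℝ)).indicator (charSum χ)) (-s) =
      ∫ t in Ioi (1 : ℝ), charSum χ t * (t : ℂ) ^ (-(s + 1)) := by
  have hterm (t : ℝ) : (t : ℂ) ^ (-s - 1) • (Ioi (1 : ℝ)).indicator (charSum χ) t =
      (Ioi (1 : ℝ)).indicator (fun t => charSum χ t * (t : ℂ) ^ (-(s + 1))) t := by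
    by_cases ht : t ∈ Ioi (1 : ℝ)
    · simp only [indicator_of_mem ht, smul_eq_mul, mul_comm, neg_add']
    · simp only [indicator_of_notMem ht, smul_zero]
  simp only [mellin, hterm, setIntegral_indicator measurableSet_Ioi, Ioi_inter_Ioi]
  norm_num

lemma norm_charSum_mul_cpow_le {χ : DirichletCharacter ℂ N} {t C : ℝ} (ht : 0 < t)
    (hC : ‖charSum χ t‖ ≤ C) (s : ℂ) :
    ‖charSum χ t * (t : ℂ) ^ (-(s + 1))‖ ≤ C * t ^ (-(s.re + 1)) := by
  rw [norm_mul, Complex.norm_cpow_eq_rpow_re_of_pos ht]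
  simp only [Complex.neg_re, Complex.add_re, Complex.one_re]
  gcongr

variable [NeZero N] {χ : DirichletCharacter ℂ N}

lemma periodic_sum_range (hχ : χ ≠ 1) :
    Function.Periodic (fun n : ℕ => ∑ k ∈ Finset.range n, χ k) N := by
  intro n
  have hperiod : ∑ k ∈ Finset.range N, χ ((n + k : ℕ) : ZMod N) = 0 := by
    push_cast
    rw [sum_range_natCast_zmod fun x : ZMod N => χ (n + x), ← MulChar.sum_eq_zero_of_ne_one hχ]
    exact Fintype.sum_equiv (Equiv.addLeft (n : ZMod N)) _ _ fun _ => rfl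
  simp only [Finset.sum_range_add, hperiod, add_zero]

lemma norm_charSum_le (hχ : χ ≠ 1) (t : ℝ) : ‖charSum χ t‖ ≤ N := by
  have hzero : χ (0 : ZMod N) = 0 := by
    have : Fact (1 < N) := ⟨(NeZero.one_le (n := N)).lt_of_ne fun h => hχ (by
      subst h; exact level_one χ)⟩
    exact χ.map_zero
  have hrange : charSum χ t = ∑ k ∈ Finset.range (⌊t⌋₊ + 1), χ k := by
    rw [Finset.range_eq_Ico, Finset.sum_eq_sum_Ico_succ_bot (by omega), Nat.cast_zero, hzero,
      zero_add]
    rfl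
  have hmod : charSum χ t = ∑ k ∈ Finset.range ((⌊t⌋₊ + 1) % N), χ k :=
    hrange.trans ((periodic_sum_range hχ).map_mod_nat _).symm
  calc ‖charSum χ t‖ ≤ ∑ _ ∈ Finset.range ((⌊t⌋₊ + 1) % N), (1 : ℝ) :=
        hmod ▸ norm_sum_le_of_le _ fun k _ => χ.norm_le_one k
    _ = ((⌊t⌋₊ + 1) % N : ℕ) := by simp
    _ ≤ N := by exact_mod_cast (Nat.mod_lt _ (NeZero.pos N)).le

lemma differentiableAt_mellin_indicator_charSum (hχ : χ ≠ 1) {s : ℂ} (hs : s.re < 0) :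
    DifferentiableAt ℂ (mellin ((Ioi (1 : ℝ)).indicator (charSum χ))) s := by
  have hbound (t : ℝ) : ‖(Ioi (1 : ℝ)).indicator (charSum χ) t‖ ≤ N :=
    (norm_indicator_le_norm_self _ _).trans (norm_charSum_le hχ t)
  refine mellin_differentiableAt_of_isBigO_rpow (a := 0) (b := s.re - 1) ?_ ?_ hs ?_ (by simp)
  · refine LocallyIntegrable.locallyIntegrableOn ?_ _
    have hconst : LocallyIntegrable fun _ : ℝ => (N : ℝ) := locallyIntegrable_const _
    exact hconst.mono ((measurable_charSum χ).indicator measurableSet_Ioi).aestronglyMeasurable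
      (.of_forall fun t => by simpa using hbound t)
  · exact .of_bound N (.of_forall fun t => by simpa using hbound t)
  · refine .of_bound 0 ?_
    filter_upwards [Ioo_mem_nhdsGT (one_pos : (0 : ℝ) < 1)] with t ht
    simp [ht.2.le]

lemma LFunction_eq_mul_integral_charSum (hχ : χ ≠ 1) {s : ℂ} (hs : 0 < s.re) :
    LFunction χ s = s * ∫ t in Ioi (1 : ℝ), charSum χ t * (t : ℂ) ^ (-(s + 1)) := by
  rw [← mellin_indicator_charSum_neg]
  set f : ℝ → ℂ := (Ioi (1 : ℝ)).indicator (charSum χ) with hf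
  have hopen : IsOpen {s : ℂ | 0 < s.re} := Complex.continuous_re.isOpen_preimage _ isOpen_Ioi
  have hmellin : AnalyticOnNhd ℂ (fun s => s * mellin f (-s)) {s : ℂ | 0 < s.re} := by
    refine DifferentiableOn.analyticOnNhd (fun s hs => ?_) hopen
    have hneg : DifferentiableAt ℂ (fun s : ℂ => mellin f (-s)) s :=
      (differentiableAt_mellin_indicator_charSum hχ (s := -s) (by simpa using hs)).comp s
        differentiableAt_id.neg
    exact (differentiableAt_id.mul hneg).differentiableWithinAt
  have hL : AnalyticOnNhd ℂ (LFunction χ) {s : ℂ | 0 < s.re} :=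
    (differentiable_LFunction hχ).differentiableOn.analyticOnNhd hopen
  have heq : LFunction χ =ᶠ[nhds (2 : ℂ)] fun s => s * mellin f (-s) := by
    have hmem : {s : ℂ | 1 < s.re} ∈ nhds (2 : ℂ) :=
      (Complex.continuous_re.isOpen_preimage _ isOpen_Ioi).mem_nhds (by simp)
    filter_upwards [hmem] with s (hs : 1 < s.re)
    rw [LFunction_eq_LSeries χ hs, hf, mellin_indicator_charSum_neg,
      LSeries_eq_mul_integral (fun n : ℕ => χ n) (r := 0) le_rfl (by linarith)
        (LSeriesSummable_of_one_lt_re χ hs)]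
    · rfl
    · refine .of_bound N (.of_forall fun n => ?_)
      simpa [charSum] using norm_charSum_le hχ n
  exact hL.eqOn_of_preconnected_of_eventuallyEq hmellin
    (convex_halfSpace_re_gt 0).isPreconnected (z₀ := 2) (by simp) heq hs

lemma norm_LFunction_le (hχ : χ ≠ 1) {s : ℂ} (hs : 0 < s.re) :
    ‖LFunction χ s‖ ≤ ‖s‖ * N / s.re := by
  rw [LFunction_eq_mul_integral_charSum hχ hs, norm_mul, mul_div_assoc]
  gcongr
  have hint : IntegrableOn (fun t : ℝ => (N : ℝ) * t ^ (-(s.re + 1))) (Ioi 1) :=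
    (integrableOn_Ioi_rpow_of_lt (by linarith) one_pos).const_mul _
  refine (norm_integral_le_of_norm_le hint ?_).trans_eq ?_
  · filter_upwards [ae_restrict_mem measurableSet_Ioi] with t ht
    exact norm_charSum_mul_cpow_le (one_pos.trans ht) (norm_charSum_le hχ t) s
  · rw [integral_const_mul, integral_Ioi_rpow_of_lt (by linarith) one_pos, Real.one_rpow, neg_add,
      neg_add_cancel_right, neg_div_neg_eq, mul_one_div]

/-- The partial sums are bounded by `t` up to `t = N` and by `N` afterwards. -/
lemma norm_LFunction_one_le (hχ : χ ≠ 1) : ‖LFunction χ 1‖ ≤ Real.log N + 1 := by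
  rw [LFunction_eq_mul_integral_charSum hχ (by simp), one_mul]
  have hN1 : (1 : ℝ) ≤ N := by exact_mod_cast NeZero.one_le
  have hN0 : (0 : ℝ) < N := by linarith
  set F : ℝ → ℂ := fun t => charSum χ t * (t : ℂ) ^ (-((1 : ℂ) + 1))
  have hlarge (t : ℝ) (ht : 1 < t) : ‖F t‖ ≤ N * t ^ (-2 : ℝ) := by
    refine (norm_charSum_mul_cpow_le (by linarith) (norm_charSum_le hχ t) 1).trans_eq ?_
    norm_num
  have hsmall (t : ℝ) (ht : 1 < t) : ‖F t‖ ≤ t⁻¹ := by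
    have ht0 : 0 < t := by linarith
    refine (norm_charSum_mul_cpow_le ht0 (norm_charSum_le_self χ ht0.le) 1).trans_eq ?_
    rw [Complex.one_re, Real.rpow_neg ht0.le, one_add_one_eq_two, Real.rpow_two]
    field_simp
  have hintN : IntegrableOn (fun t : ℝ => (N : ℝ) * t ^ (-2 : ℝ)) (Ioi 1) :=
    (integrableOn_Ioi_rpow_of_lt (by norm_num) one_pos).const_mul _
  have hFmeas : Measurable F := (measurable_charSum χ).mul (Complex.measurable_ofReal.pow_const _)
  have hFint : IntegrableOn F (Ioi 1) := by
    refine Integrable.mono' hintN hFmeas.aestronglyMeasurable ?_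
    filter_upwards [ae_restrict_mem measurableSet_Ioi] with t ht using hlarge t ht
  have hhead : ‖∫ t in Ioc 1 (N : ℝ), F t‖ ≤ Real.log N := by
    have hinv : IntegrableOn (fun t : ℝ => t⁻¹) (Ioc 1 (N : ℝ)) := by
      rw [← intervalIntegrable_iff_integrableOn_Ioc_of_le hN1]
      refine intervalIntegral.intervalIntegrable_inv (fun x hx => ?_) continuousOn_id
      rw [uIcc_of_le hN1] at hx
      exact (one_pos.trans_le hx.1).ne'
    refine (norm_integral_le_of_norm_le hinv ?_).trans_eq ?_
    · filter_upwards [ae_restrict_mem measurableSet_Ioc] with t ht using hsmall t ht.1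
    · rw [← intervalIntegral.integral_of_le hN1, integral_inv_of_pos one_pos hN0, div_one]
  have htail : ‖∫ t in Ioi (N : ℝ), F t‖ ≤ 1 := by
    refine (norm_integral_le_of_norm_le (hintN.mono_set (Ioi_subset_Ioi hN1)) ?_).trans_eq ?_
    · filter_upwards [ae_restrict_mem measurableSet_Ioi] with t ht
      exact hlarge t (hN1.trans_lt ht)
    · rw [integral_const_mul, integral_Ioi_rpow_of_lt (by norm_num) hN0]
      norm_num [Real.rpow_neg hN0.le, hN0.ne']
  rw [← Ioc_union_Ioi_eq_Ioi hN1, setIntegral_union Ioc_disjoint_Ioi_same measurableSet_Ioi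
    (hFint.mono_set Ioc_subset_Ioi_self) (hFint.mono_set (Ioi_subset_Ioi hN1))]
  exact (norm_add_le _ _).trans (add_le_add hhead htail)

lemma LFunction_ofReal_im (hχ : χ ≠ 1) (hreal : ∀ x, (χ x).im = 0) {σ : ℝ} (hσ : 0 < σ) :
    (LFunction χ σ).im = 0 := by
  have hint : ∫ t in Ioi (1 : ℝ), charSum χ t * (t : ℂ) ^ (-((σ : ℂ) + 1)) =
      ((∫ t in Ioi (1 : ℝ), (charSum χ t).re * t ^ (-(σ + 1)) : ℝ) : ℂ) := by
    rw [← integral_complex_ofReal]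
    refine setIntegral_congr_fun measurableSet_Ioi fun t ht => ?_
    have hsum : charSum χ t = ((charSum χ t).re : ℂ) :=
      Complex.ext (by simp) (by simp [charSum, Complex.im_sum, hreal])
    have hpow : (t : ℂ) ^ (-((σ : ℂ) + 1)) = ((t ^ (-(σ + 1)) : ℝ) : ℂ) := by
      rw [Complex.ofReal_cpow (one_pos.trans ht).le]
      push_cast
      rfl
    simp only [Complex.ofReal_mul]
    rw [← hsum, hpow]
  rw [LFunction_eq_mul_integral_charSum hχ (by simpa using hσ), hint, ← Complex.ofReal_mul,
    Complex.ofReal_im]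

end DirichletCharacters

section BiquadraticZeta

open DirichletCharacter ArithmeticFunction
open scoped ComplexOrder

variable {N M : ℕ} {χ : DirichletCharacter ℂ N} {ψ : DirichletCharacter ℂ M}

lemma characterMul_apply_natCast (χ : DirichletCharacter ℂ N) (ψ : DirichletCharacter ℂ M) (n : ℕ) :
    χ.mul ψ n = χ n * ψ n := by
  rw [DirichletCharacter.mul, MulChar.mul_apply]
  by_cases hn : n.Coprime (N.lcm M)
  · have hn' : IsCoprime (n : ℤ) (N.lcm M : ℤ) := Nat.isCoprime_iff_coprime.2 hn
    simpa using congrArg₂ (· * ·)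
      (changeLevel_eq_cast_of_dvd' χ (N.dvd_lcm_left M) hn')
      (changeLevel_eq_cast_of_dvd' ψ (N.dvd_lcm_right M) hn')
  · rw [MulChar.map_nonunit _ (mt (ZMod.isUnit_iff_coprime n _).1 hn), zero_mul, eq_comm,
      mul_eq_zero]
    contrapose! hn
    have hcop {K : ℕ} {φ : DirichletCharacter ℂ K} (h : φ n ≠ 0) : n.Coprime K :=
      (ZMod.isUnit_iff_coprime n K).1 (not_not.1 (mt (MulChar.map_nonunit φ) h))
    exact ((hcop hn.1).mul_right (hcop hn.2)).coprime_dvd_right (Nat.lcm_dvd_mul N M)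

lemma characterMul_sq_eq_one (hχ : χ ^ 2 = 1) (hψ : ψ ^ 2 = 1) : χ.mul ψ ^ 2 = 1 := by
  rw [DirichletCharacter.mul, mul_pow, ← map_pow, ← map_pow, hχ, hψ, map_one, map_one, one_mul]

lemma toArithmeticFunction_mul_apply {K : ℕ} {θ : DirichletCharacter ℂ K}
    (hθ : ∀ n : ℕ, θ n = χ n * ψ n) (n : ℕ) :
    (toArithmeticFunction (χ ·) * toArithmeticFunction (θ ·)) n = χ n * zetaMul ψ n := by
  rw [zetaMul, coe_zeta_mul_apply, ArithmeticFunction.mul_apply,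
    ← Nat.sum_divisorsAntidiagonal' fun _ e => toArithmeticFunction (ψ ·) e, Finset.mul_sum]
  refine Finset.sum_congr rfl fun x hx => ?_
  obtain ⟨rfl, hn⟩ := Nat.mem_divisorsAntidiagonal.1 hx
  simp [toArithmeticFunction, left_ne_zero_of_mul hn, right_ne_zero_of_mul hn, hθ, mul_assoc]

/-- The Dirichlet convolution `1 * χ * ψ * χψ`, whose L-series is
`ζ(s) L(s, χ) L(s, ψ) L(s, χψ)`. -/
def biquadraticZeta (χ : DirichletCharacter ℂ N) (ψ : DirichletCharacter ℂ M) :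
    ArithmeticFunction ℂ :=
  zetaMul χ * (toArithmeticFunction (ψ ·) * toArithmeticFunction (χ.mul ψ ·))

lemma biquadraticZeta_comm (χ : DirichletCharacter ℂ N) (ψ : DirichletCharacter ℂ M) :
    biquadraticZeta χ ψ = biquadraticZeta ψ χ := by
  have hcomm : toArithmeticFunction (χ.mul ψ ·) = toArithmeticFunction (ψ.mul χ ·) :=
    toArithmeticFunction_congr fun _ => by simp only [characterMul_apply_natCast, mul_comm]
  rw [biquadraticZeta, biquadraticZeta, hcomm, zetaMul, zetaMul]
  ring

lemma isMultiplicative_biquadraticZeta (χ : DirichletCharacter ℂ N) (ψ : DirichletCharacter ℂ M) :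
    (biquadraticZeta χ ψ).IsMultiplicative :=
  χ.isMultiplicative_zetaMul.mul <| (isMultiplicative_toArithmeticFunction ψ).mul <|
    isMultiplicative_toArithmeticFunction _

lemma biquadraticZeta_apply (χ : DirichletCharacter ℂ N) (ψ : DirichletCharacter ℂ M) (n : ℕ) :
    biquadraticZeta χ ψ n =
      ∑ x ∈ n.divisorsAntidiagonal, zetaMul χ x.1 * (ψ x.2 * zetaMul χ x.2) := by
  have hcomm : toArithmeticFunction (χ.mul ψ ·) = toArithmeticFunction (ψ.mul χ ·) :=
    toArithmeticFunction_congr fun _ => by simp only [characterMul_apply_natCast, mul_comm]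
  simp only [biquadraticZeta, hcomm, ArithmeticFunction.mul_apply (f := zetaMul χ),
    toArithmeticFunction_mul_apply (characterMul_apply_natCast _ _)]

lemma zetaMul_prime_pow_of_eq_neg_one {p : ℕ} (hp : p.Prime) (hχp : χ p = -1) (k : ℕ) :
    zetaMul χ (p ^ k) = if Even k then 1 else 0 := by
  rw [zetaMul, coe_zeta_mul_apply, Nat.sum_divisors_prime_pow hp]
  simp [toArithmeticFunction, hp.ne_zero, hχp, neg_one_geom_sum, Nat.even_add_one,
    -Nat.not_even_iff_odd]

lemma mul_zetaMul_prime_pow_nonneg (hχ : χ ^ 2 = 1) (hψ : ψ ^ 2 = 1) {p : ℕ} (hp : p.Prime)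
    (h : 0 ≤ ψ p ∨ χ p = -1) (k : ℕ) : 0 ≤ ψ ↑(p ^ k) * zetaMul χ (p ^ k) := by
  rw [Nat.cast_pow, map_pow]
  rcases h with hψp | hχp
  · exact mul_nonneg (pow_nonneg hψp k) (zetaMul_nonneg hχ _)
  · rw [zetaMul_prime_pow_of_eq_neg_one hp hχp]
    split_ifs with hk
    · rw [mul_one]
      rcases MulChar.isQuadratic_iff_sq_eq_one.2 hψ p with h | h | h <;> simp [h, hk.neg_one_pow]
    · rw [mul_zero]

lemma biquadraticZeta_prime_pow_nonneg (hχ : χ ^ 2 = 1) (hψ : ψ ^ 2 = 1) {p : ℕ} (hp : p.Prime)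
    (k : ℕ) : 0 ≤ biquadraticZeta χ ψ (p ^ k) := by
  wlog h : 0 ≤ ψ p ∨ χ p = -1 generalizing N M χ ψ
  · rw [biquadraticZeta_comm]
    refine this hψ hχ (.inr ?_)
    have hψp := MulChar.isQuadratic_iff_sq_eq_one.2 hψ p
    contrapose! h
    exact .inl (by rcases hψp with h0 | h1 | h2 <;> simp_all)
  rw [biquadraticZeta_apply]
  refine Finset.sum_nonneg fun x hx => mul_nonneg (zetaMul_nonneg hχ _) ?_
  obtain ⟨j, -, hj⟩ := (Nat.dvd_prime_pow hp).1
    (Nat.snd_mem_divisors_of_mem_antidiagonal hx |> Nat.dvd_of_mem_divisors)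
  exact hj ▸ mul_zetaMul_prime_pow_nonneg hχ hψ hp h j

theorem biquadraticZeta_nonneg (hχ : χ ^ 2 = 1) (hψ : ψ ^ 2 = 1) (n : ℕ) :
    0 ≤ biquadraticZeta χ ψ n := by
  rcases eq_or_ne n 0 with rfl | hn
  · simp
  · rw [(isMultiplicative_biquadraticZeta χ ψ).multiplicative_factorization _ hn]
    exact Finset.prod_nonneg fun p hp =>
      biquadraticZeta_prime_pow_nonneg hχ hψ (Nat.prime_of_mem_primeFactors hp) _

lemma LSeriesHasSum_toArithmeticFunction [NeZero N] (χ : DirichletCharacter ℂ N) {s : ℂ}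
    (hs : 1 < s.re) : LSeriesHasSum (toArithmeticFunction (χ ·)) s (LFunction χ s) := by
  rw [LFunction_eq_LSeries χ hs]
  exact (LSeriesHasSum_congr _ _ fun hn => χ.apply_eq_toArithmeticFunction_apply hn).1
    (LSeriesSummable_of_one_lt_re χ hs).LSeriesHasSum

lemma LSeriesHasSum_zetaMul [NeZero N] (χ : DirichletCharacter ℂ N) {s : ℂ} (hs : 1 < s.re) :
    LSeriesHasSum (zetaMul χ) s (riemannZeta s * LFunction χ s) :=
  LSeriesHasSum_mul (by simpa using LSeriesHasSum_zeta hs) (LSeriesHasSum_toArithmeticFunction χ hs)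

lemma LSeriesHasSum_biquadraticZeta [NeZero N] [NeZero M] [NeZero (N.lcm M)]
    (χ : DirichletCharacter ℂ N) (ψ : DirichletCharacter ℂ M) {s : ℂ} (hs : 1 < s.re) :
    LSeriesHasSum (biquadraticZeta χ ψ) s
      (riemannZeta s * (LFunction χ s * (LFunction ψ s * LFunction (χ.mul ψ) s))) := by
  rw [← mul_assoc]
  exact LSeriesHasSum_mul (LSeriesHasSum_zetaMul χ hs) <| LSeriesHasSum_mul
    (LSeriesHasSum_toArithmeticFunction ψ hs) (LSeriesHasSum_toArithmeticFunction _ hs)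

end BiquadraticZeta

section Siegel

open DirichletCharacter Complex
open scoped ComplexOrder

/-- The entire function `(s - 1) ζ(s)`. -/
def entireZeta : ℂ → ℂ := LFunctionTrivChar₁ 1

lemma differentiable_entireZeta : Differentiable ℂ entireZeta :=
  differentiable_LFunctionTrivChar₁ 1

lemma entireZeta_one : entireZeta 1 = 1 := by simp [entireZeta, LFunctionTrivChar₁]

lemma entireZeta_of_ne_one {s : ℂ} (hs : s ≠ 1) : entireZeta s = (s - 1) * riemannZeta s := by
  simp [entireZeta, LFunctionTrivChar₁, Function.update_of_ne hs, LFunctionTrivChar]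

lemma entireZeta_ofReal_im (σ : ℝ) : (entireZeta σ).im = 0 := by
  rcases eq_or_ne (σ : ℂ) 1 with h | h
  · rw [h, entireZeta_one, one_im]
  · have hζ : (riemannZeta σ).im = 0 := by
      rw [← conj_eq_iff_im, ← riemannZeta_conj, conj_ofReal]
    rw [entireZeta_of_ne_one h, mul_im, hζ]
    simp

lemma exists_entireZeta_re_pos :
    ∃ δ : ℝ, 0 < δ ∧ ∀ σ : ℝ, 1 - δ < σ → σ ≤ 1 → 0 < (entireZeta σ).re := by
  have hcont : Continuous fun σ : ℝ => (entireZeta σ).re :=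
    continuous_re.comp (differentiable_entireZeta.continuous.comp continuous_ofReal)
  have hev : ∀ᶠ σ : ℝ in nhds 1, 0 < (entireZeta σ).re :=
    hcont.continuousAt.eventually (lt_mem_nhds (by simp [entireZeta_one]))
  obtain ⟨δ, hδ, h⟩ := Metric.eventually_nhds_iff.1 hev
  exact ⟨δ, hδ, fun σ h1 h2 => h (by rw [Real.dist_eq, abs_lt]; constructor <;> linarith)⟩

lemma exists_norm_entireZeta_le :
    ∃ C : ℝ, 1 ≤ C ∧ ∀ s ∈ Metric.sphere (2 : ℂ) (3 / 2), ‖entireZeta s‖ ≤ C := by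
  obtain ⟨C, hC⟩ := (isCompact_sphere (2 : ℂ) (3 / 2)).exists_bound_of_continuousOn
    differentiable_entireZeta.continuous.continuousOn
  exact ⟨max 1 C, le_max_left _ _, fun s hs => (hC s hs).trans (le_max_right _ _)⟩

variable {a : ℕ → ℂ} {H : ℂ → ℂ}

lemma apply_one_nonneg_of_LSeriesHasSum (ha : 0 ≤ a) (hH : Continuous H)
    (hHa : ∀ s, 1 < s.re → LSeriesHasSum a s (riemannZeta s * H s)) : 0 ≤ H 1 := by
  have hright (σ : ℝ) (hσ : 1 < σ) : 0 ≤ entireZeta σ * H σ := by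
    have hsum := (hHa σ (by simpa using hσ)).LSeries_eq
    rw [entireZeta_of_ne_one (by exact_mod_cast hσ.ne'), mul_assoc, ← hsum]
    refine mul_nonneg (by exact_mod_cast sub_nonneg.2 hσ.le) (tsum_nonneg fun m => ?_)
    exact LSeries.term_nonneg (ha m) σ
  have hlim : Filter.Tendsto (fun σ : ℝ => entireZeta σ * H σ) (nhdsWithin 1 (Set.Ioi 1))
      (nhds (entireZeta (1 : ℝ) * H (1 : ℝ))) :=
    (((differentiable_entireZeta.continuous.mul hH).comp continuous_ofReal).tendsto
      1).mono_left nhdsWithin_le_nhds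
  simpa [entireZeta_one] using ge_of_tendsto hlim
    (Filter.eventually_of_mem self_mem_nhdsWithin hright)

/-- The lower bound of Estermann's method for the residue at `1` of `ζ(s) H(s)`, a Dirichlet
series with nonnegative coefficients, in terms of a real point `σ < 1` at which it is `≤ 0`. -/
theorem le_re_apply_one_of_LSeriesHasSum (ha : 0 ≤ a) (ha1 : 1 ≤ a 1) (hH : Differentiable ℂ H)
    (hHa : ∀ s, 1 < s.re → LSeriesHasSum a s (riemannZeta s * H s)) {C B σ : ℝ}
    (hC1 : 1 ≤ C) (hC : ∀ s ∈ Metric.sphere (2 : ℂ) (3 / 2), ‖entireZeta s‖ ≤ C)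
    (hB1 : 1 ≤ B) (hB : ∀ s ∈ Metric.sphere (2 : ℂ) (3 / 2), ‖H s‖ ≤ B)
    (hσ : 7 / 8 ≤ σ) (hσ1 : σ < 1) (hHσ : 0 ≤ (entireZeta σ * H σ).re) :
    (1 - σ) / 6 * (32 * (C * B)) ^ (-(4 * (1 - σ))) ≤ (H 1).re := by
  have hH1 := (Complex.nonneg_iff.1 (apply_one_nonneg_of_LSeriesHasSum ha hH.continuous hHa)).1
  have hmain := half_le_re_div_add_rpow (G := fun s => entireZeta s * H s) (B := C * B) ha ha1
    (differentiable_entireZeta.mul hH)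
    (fun s hs => by
      have hs1 : s ≠ 1 := by rintro rfl; simp at hs
      rw [entireZeta_of_ne_one hs1, mul_assoc, mul_div_cancel_left₀ _ (sub_ne_zero.2 hs1)]
      exact hHa s hs)
    (fun s hs => by
      rw [norm_mul]
      gcongr
      exacts [hC s hs, hB s hs])
    hσ hσ1 (one_le_mul_of_one_le_of_one_le hC1 hB1) (by simpa [entireZeta_one] using hH1)
  have hle : (entireZeta σ * H σ).re / (σ - 1) ≤ 0 :=
    div_nonpos_of_nonneg_of_nonpos hHσ (by linarith)
  simp only [entireZeta_one, one_mul] at hmain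
  have hp : 0 < (32 * (C * B)) ^ (4 * (1 - σ)) := by positivity
  have h1σ : 0 < 1 - σ := by linarith
  rw [Real.rpow_neg (by positivity), ← div_eq_mul_inv, div_le_iff₀ hp]
  have : (1 - σ) * (1 / 2) ≤ 3 * (H 1).re * (32 * (C * B)) ^ (4 * (1 - σ)) := by
    rw [← le_div_iff₀' h1σ]
    calc 1 / 2 ≤ _ := hmain.trans (add_le_of_nonpos_left hle)
      _ = _ := by ring
  linarith

variable {N M : ℕ} [NeZero N] [NeZero M] {χ : DirichletCharacter ℂ N} {ψ : DirichletCharacter ℂ M}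

lemma norm_LFunction_le_of_mem_sphere (hχ : χ ≠ 1) {s : ℂ}
    (hs : s ∈ Metric.sphere (2 : ℂ) (3 / 2)) : ‖LFunction χ s‖ ≤ 7 * N := by
  rw [mem_sphere_iff_norm] at hs
  have hre : 1 / 2 ≤ s.re := by
    have := (abs_le.1 (abs_re_le_norm (s - 2))).1
    rw [sub_re, re_ofNat] at this
    linarith
  have hnorm : ‖s‖ ≤ 7 / 2 := by
    have := norm_add_le (s - 2) 2
    rw [sub_add_cancel, hs, Complex.norm_ofNat] at this
    linarith
  calc ‖LFunction χ s‖ ≤ ‖s‖ * N / s.re := norm_LFunction_le hχ (by linarith)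
    _ ≤ 7 / 2 * N / (1 / 2) := by gcongr
    _ = 7 * N := by ring

lemma LFunction_ofReal_eq_re (hχ : χ ≠ 1) (hχ2 : χ ^ 2 = 1) {σ : ℝ} (hσ : 0 < σ) :
    LFunction χ σ = ((LFunction χ σ).re : ℂ) := by
  refine Complex.ext rfl (LFunction_ofReal_im hχ (fun x => ?_) hσ)
  rcases MulChar.isQuadratic_iff_sq_eq_one.2 hχ2 x with h | h | h <;> simp [h]

lemma LFunction_one_eq_re (hχ : χ ≠ 1) (hχ2 : χ ^ 2 = 1) :
    LFunction χ 1 = ((LFunction χ 1).re : ℂ) := by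
  simpa using LFunction_ofReal_eq_re hχ hχ2 one_pos

lemma LFunction_one_re_pos (hχ : χ ≠ 1) (hχ2 : χ ^ 2 = 1) : 0 < (LFunction χ 1).re := by
  have hnonneg := apply_one_nonneg_of_LSeriesHasSum (zetaMul_nonneg hχ2)
    (differentiable_LFunction hχ).continuous fun _ => LSeriesHasSum_zetaMul χ
  have hlt : 0 < LFunction χ 1 := hnonneg.lt_of_ne (LFunction_apply_one_ne_zero hχ).symm
  exact (Complex.lt_def.1 hlt).1

lemma LFunction_one_re_le (hχ : χ ≠ 1) : (LFunction χ 1).re ≤ Real.log N + 1 :=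
  (re_le_norm _).trans (norm_LFunction_one_le hχ)

end Siegel

section Siegel

open DirichletCharacter Complex
open scoped ComplexOrder

variable {N M : ℕ} {χ : DirichletCharacter ℂ N} {ψ : DirichletCharacter ℂ M}

lemma prod_one_sub_inv_le_norm_prod (χ : DirichletCharacter ℂ N) (K : ℕ) :
    ∏ p ∈ K.primeFactors, (1 - (p : ℝ)⁻¹) ≤
      ‖∏ p ∈ K.primeFactors, (1 - χ p * (p : ℂ) ^ (-1 : ℂ))‖ := by
  rw [norm_prod]
  refine Finset.prod_le_prod (fun p _ => sub_nonneg.2 (Nat.cast_inv_le_one p)) fun p _ => ?_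
  calc 1 - (p : ℝ)⁻¹ ≤ ‖(1 : ℂ)‖ - ‖χ p * (p : ℂ) ^ (-1 : ℂ)‖ := by
        rw [norm_one, norm_mul, cpow_neg_one, norm_inv, norm_natCast]
        gcongr
        exact mul_le_of_le_one_left (by positivity) (norm_le_one χ p)
    _ ≤ _ := norm_sub_norm_le _ _

lemma norm_prod_mul_prod_one_sub_inv_le_one (χ : DirichletCharacter ℂ N) (K : ℕ) :
    ‖∏ p ∈ K.primeFactors, (1 - χ p * (p : ℂ) ^ (-1 : ℂ))‖ *
      ∏ p ∈ K.primeFactors, (1 - (p : ℝ)⁻¹) ≤ 1 := by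
  rw [norm_prod, ← Finset.prod_mul_distrib]
  have hinv (p : ℕ) : 0 ≤ 1 - (p : ℝ)⁻¹ := sub_nonneg.2 (Nat.cast_inv_le_one p)
  refine Finset.prod_le_one (fun p _ => mul_nonneg (norm_nonneg _) (hinv p)) fun p _ => ?_
  have hle : ‖1 - χ p * (p : ℂ) ^ (-1 : ℂ)‖ ≤ 1 + (p : ℝ)⁻¹ := by
    refine (norm_sub_le _ _).trans ?_
    rw [norm_one, norm_mul, cpow_neg_one, norm_inv, norm_natCast]
    gcongr
    exact mul_le_of_le_one_left (by positivity) (norm_le_one χ p)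
  calc _ ≤ (1 + (p : ℝ)⁻¹) * (1 - (p : ℝ)⁻¹) := by gcongr; exact hinv p
    _ = 1 - (p : ℝ)⁻¹ ^ 2 := by ring
    _ ≤ 1 := sub_le_self _ (by positivity)

lemma changeLevel_eq_changeLevel_of_mul_eq_one (hψ : ψ ^ 2 = 1) (h : χ.mul ψ = 1) :
    changeLevel (N.dvd_lcm_left M) χ = changeLevel (N.dvd_lcm_right M) ψ := by
  have hsq : changeLevel (N.dvd_lcm_right M) ψ * changeLevel (N.dvd_lcm_right M) ψ = 1 := by
    rw [← sq, ← map_pow, hψ, map_one]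
  exact mul_right_cancel (h.trans hsq.symm)

variable [NeZero N] [NeZero M]

lemma norm_LFunction_one_mul_le {K : ℕ} [NeZero K] (hN : N ∣ K) (hM : M ∣ K) (hχ : χ ≠ 1)
    (hψ : ψ ≠ 1) (h : changeLevel hN χ = changeLevel hM ψ) :
    ‖LFunction ψ 1‖ * (∏ p ∈ K.primeFactors, (1 - (p : ℝ)⁻¹)) ^ 2 ≤ ‖LFunction χ 1‖ := by
  have heq := LFunction_changeLevel hN χ (s := 1) (.inl hχ)
  rw [h, LFunction_changeLevel hM ψ (.inl hψ)] at heq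
  set R := ∏ p ∈ K.primeFactors, (1 - (p : ℝ)⁻¹)
  have hR : 0 ≤ R := prod_primeFactors_one_sub_inv_nonneg K
  calc ‖LFunction ψ 1‖ * R ^ 2 = ‖LFunction ψ 1‖ * R * R := by ring
    _ ≤ ‖LFunction ψ 1‖ * ‖∏ p ∈ K.primeFactors, (1 - ψ p * (p : ℂ) ^ (-1 : ℂ))‖ * R := by
        gcongr
        exact prod_one_sub_inv_le_norm_prod ψ K
    _ = ‖LFunction χ 1‖ * (‖∏ p ∈ K.primeFactors, (1 - χ p * (p : ℂ) ^ (-1 : ℂ))‖ * R) := by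
        rw [← norm_mul, heq, norm_mul, mul_assoc]
    _ ≤ ‖LFunction χ 1‖ :=
        mul_le_of_le_one_right (norm_nonneg _) (norm_prod_mul_prod_one_sub_inv_le_one χ K)

lemma norm_LFunction_one_eq_re (hχ : χ ≠ 1) (hχ2 : χ ^ 2 = 1) :
    ‖LFunction χ 1‖ = (LFunction χ 1).re := by
  conv_lhs => rw [LFunction_one_eq_re hχ hχ2, norm_real,
    Real.norm_of_nonneg (LFunction_one_re_pos hχ hχ2).le]

lemma natCast_lcm_le (N M : ℕ) [NeZero N] [NeZero M] : (N.lcm M : ℝ) ≤ N * M := mod_cast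
  Nat.le_of_dvd (Nat.mul_pos (NeZero.pos N) (NeZero.pos M)) (Nat.lcm_dvd_mul N M)

lemma exists_le_LFunction_one_re_of_mul_eq_one (hψ : ψ ≠ 1) (hψ2 : ψ ^ 2 = 1) {δ : ℝ}
    (hδ : 0 < δ) :
    ∃ c : ℝ, 0 < c ∧ ∀ (N : ℕ) [NeZero N] (χ : DirichletCharacter ℂ N), χ ≠ 1 → χ ^ 2 = 1 →
      χ.mul ψ = 1 → c * (N : ℝ) ^ (-δ) ≤ (LFunction χ 1).re := by
  obtain ⟨c, hc, hR⟩ := exists_le_prod_one_sub_inv (half_pos hδ)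
  have hM : (0 : ℝ) < M := mod_cast NeZero.pos M
  have hLψ := LFunction_one_re_pos hψ hψ2
  refine ⟨(LFunction ψ 1).re * (c * (M : ℝ) ^ (-(δ / 2))) ^ 2, by positivity,
    fun N _ χ hχ hχ2 hmul => ?_⟩
  have hN : (0 : ℝ) < N := mod_cast NeZero.pos N
  have hlcm : N.lcm M ≠ 0 := Nat.lcm_ne_zero (NeZero.ne N) (NeZero.ne M)
  have : NeZero (N.lcm M) := ⟨hlcm⟩
  have hle := norm_LFunction_one_mul_le _ _ hχ hψ
    (changeLevel_eq_changeLevel_of_mul_eq_one hψ2 hmul)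
  rw [norm_LFunction_one_eq_re hχ hχ2, norm_LFunction_one_eq_re hψ hψ2] at hle
  refine le_trans ?_ hle
  calc (LFunction ψ 1).re * (c * (M : ℝ) ^ (-(δ / 2))) ^ 2 * (N : ℝ) ^ (-δ)
      = (LFunction ψ 1).re * (c * ((N : ℝ) * M) ^ (-(δ / 2))) ^ 2 := by
        rw [Real.mul_rpow hN.le hM.le, show -δ = -(δ / 2) * (2 : ℕ) by push_cast; ring,
          Real.rpow_mul hN.le, Real.rpow_natCast]
        ring
    _ ≤ (LFunction ψ 1).re * (c * (N.lcm M : ℝ) ^ (-(δ / 2))) ^ 2 := by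
        have hpow : ((N : ℝ) * M) ^ (-(δ / 2)) ≤ (N.lcm M : ℝ) ^ (-(δ / 2)) :=
          Real.rpow_le_rpow_of_nonpos (mod_cast NeZero.pos (N.lcm M)) (natCast_lcm_le N M)
            (by linarith)
        gcongr
    _ ≤ _ := by
        gcongr
        exact hR _ hlcm

lemma le_LFunction_one_re (hχ : χ ≠ 1) (hχ2 : χ ^ 2 = 1) {C σ : ℝ} (hC1 : 1 ≤ C)
    (hC : ∀ s ∈ Metric.sphere (2 : ℂ) (3 / 2), ‖entireZeta s‖ ≤ C) (hσ : 7 / 8 ≤ σ) (hσ1 : σ < 1)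
    (hZ : 0 ≤ (entireZeta σ).re) (hL : 0 ≤ (LFunction χ σ).re) :
    (1 - σ) / 6 * (32 * (C * (7 * N))) ^ (-(4 * (1 - σ))) ≤ (LFunction χ 1).re := by
  have hN : (1 : ℝ) ≤ N := mod_cast NeZero.one_le
  refine le_re_apply_one_of_LSeriesHasSum (zetaMul_nonneg hχ2)
    (isMultiplicative_zetaMul χ).map_one.ge (differentiable_LFunction hχ)
    (fun _ => LSeriesHasSum_zetaMul χ) hC1 hC (by linarith)
    (fun s hs => norm_LFunction_le_of_mem_sphere hχ hs) hσ hσ1 ?_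
  rw [mul_re, entireZeta_ofReal_im, zero_mul, sub_zero]
  exact mul_nonneg hZ hL

lemma le_LFunction_one_re_mul (hχ : χ ≠ 1) (hχ2 : χ ^ 2 = 1) (hψ : ψ ≠ 1) (hψ2 : ψ ^ 2 = 1)
    (hχψ : χ.mul ψ ≠ 1) {C σ : ℝ} (hC1 : 1 ≤ C)
    (hC : ∀ s ∈ Metric.sphere (2 : ℂ) (3 / 2), ‖entireZeta s‖ ≤ C) (hσ : 7 / 8 ≤ σ) (hσ1 : σ < 1)
    (hzero : LFunction ψ σ = 0) :
    (1 - σ) / 6 * (32 * (C * (7 ^ 3 * (N * M) ^ 2))) ^ (-(4 * (1 - σ))) ≤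
      (LFunction χ 1).re * ((LFunction ψ 1).re * (Real.log (N * M) + 1)) := by
  have hN : (1 : ℝ) ≤ N := mod_cast NeZero.one_le
  have hM : (1 : ℝ) ≤ M := mod_cast NeZero.one_le
  have : NeZero (N.lcm M) := ⟨Nat.lcm_ne_zero (NeZero.ne N) (NeZero.ne M)⟩
  have hlcm := natCast_lcm_le N M
  have hχψ2 := characterMul_sq_eq_one hχ2 hψ2
  have hmain := le_re_apply_one_of_LSeriesHasSum (B := 7 ^ 3 * (N * M) ^ 2)
    (biquadraticZeta_nonneg hχ2 hψ2) (isMultiplicative_biquadraticZeta χ ψ).map_one.ge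
    ((differentiable_LFunction hχ).mul
      ((differentiable_LFunction hψ).mul (differentiable_LFunction hχψ)))
    (fun _ => LSeriesHasSum_biquadraticZeta χ ψ) hC1 hC
    (one_le_mul_of_one_le_of_one_le (by norm_num)
      (one_le_pow₀ (one_le_mul_of_one_le_of_one_le hN hM)))
    (fun s hs => by
      simp only [Pi.mul_apply, norm_mul]
      calc _ ≤ 7 * (N : ℝ) * (7 * M * (7 * (N * M))) := by
            gcongr
            · exact norm_LFunction_le_of_mem_sphere hχ hs
            · exact norm_LFunction_le_of_mem_sphere hψ hs
            · exact (norm_LFunction_le_of_mem_sphere hχψ hs).trans (by gcongr)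
        _ = _ := by ring)
    hσ hσ1 (by simp [hzero])
  refine hmain.trans ?_
  rw [Pi.mul_apply, Pi.mul_apply, LFunction_one_eq_re hχ hχ2, LFunction_one_eq_re hψ hψ2,
    LFunction_one_eq_re hχψ hχψ2]
  simp only [← ofReal_mul, ofReal_re]
  have hlog : (LFunction (χ.mul ψ) 1).re ≤ Real.log (N * M) + 1 :=
    (LFunction_one_re_le hχψ).trans (by gcongr; exact mod_cast NeZero.pos _)
  have := LFunction_one_re_pos hχ hχ2
  have := LFunction_one_re_pos hψ hψ2
  gcongr

end Siegel

section Siegel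

open DirichletCharacter Complex

lemma exists_le_LFunction_one_re_of_forall_ne_zero {σ δ : ℝ} (hσ : 7 / 8 ≤ σ) (hσ1 : σ < 1)
    (hZ : 0 ≤ (entireZeta σ).re) (hδ : 4 * (1 - σ) ≤ δ) :
    ∃ c : ℝ, 0 < c ∧ ∀ (N : ℕ) [NeZero N] (χ : DirichletCharacter ℂ N), χ ≠ 1 → χ ^ 2 = 1 →
      (∀ τ : ℝ, σ ≤ τ → τ < 1 → LFunction χ τ ≠ 0) →
      c * (N : ℝ) ^ (-δ) ≤ (LFunction χ 1).re := by
  obtain ⟨C, hC1, hC⟩ := exists_norm_entireZeta_le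
  have : 0 < 1 - σ := by linarith
  refine ⟨(1 - σ) / 6 * (32 * (C * 7)) ^ (-(4 * (1 - σ))), by positivity,
    fun N _ χ hχ hχ2 hne => ?_⟩
  have hN : (1 : ℝ) ≤ N := mod_cast NeZero.one_le
  have hL : 0 ≤ (LFunction χ σ).re := by
    by_contra! hneg
    have hcont : Continuous fun τ : ℝ => (LFunction χ τ).re :=
      continuous_re.comp ((differentiable_LFunction hχ).continuous.comp continuous_ofReal)
    have hpos : 0 < (LFunction χ (1 : ℝ)).re := by
      simpa using LFunction_one_re_pos hχ hχ2
    obtain ⟨τ, hτ, hτ0⟩ := intermediate_value_Icc hσ1.le hcont.continuousOn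
      (⟨hneg.le, hpos.le⟩ : (0 : ℝ) ∈ Set.Icc _ _)
    dsimp only at hτ0
    have hτ1 : τ ≠ 1 := by
      rintro rfl
      exact hpos.ne' hτ0
    refine hne τ hτ.1 (hτ.2.lt_of_ne hτ1) ?_
    rw [LFunction_ofReal_eq_re hχ hχ2 (by linarith [hτ.1]), hτ0, ofReal_zero]
  calc _ ≤ (1 - σ) / 6 * (32 * (C * 7)) ^ (-(4 * (1 - σ))) * (N : ℝ) ^ (-(4 * (1 - σ))) := by
        gcongr
    _ = (1 - σ) / 6 * (32 * (C * (7 * N))) ^ (-(4 * (1 - σ))) := by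
        rw [mul_assoc, ← Real.mul_rpow (by positivity) (by positivity)]
        ring_nf
    _ ≤ _ := le_LFunction_one_re hχ hχ2 hC1 hC hσ hσ1 hZ hL

lemma log_add_one_le_rpow {x η : ℝ} (hx : 1 ≤ x) (hη : 0 < η) :
    Real.log x + 1 ≤ (1 / η + 1) * x ^ η :=
  calc Real.log x + 1 ≤ x ^ η / η + x ^ η :=
        add_le_add (Real.log_le_rpow_div (by linarith) hη) (Real.one_le_rpow hx hη.le)
    _ = (1 / η + 1) * x ^ η := by ring

lemma exists_le_LFunction_one_re_of_mul_ne_one {M : ℕ} [NeZero M] {ψ : DirichletCharacter ℂ M}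
    (hψ : ψ ≠ 1) (hψ2 : ψ ^ 2 = 1) {σ δ : ℝ} (hσ : 7 / 8 ≤ σ) (hσ1 : σ < 1)
    (hzero : LFunction ψ σ = 0) (hδ : 9 * (1 - σ) ≤ δ) :
    ∃ c : ℝ, 0 < c ∧ ∀ (N : ℕ) [NeZero N] (χ : DirichletCharacter ℂ N), χ ≠ 1 → χ ^ 2 = 1 →
      χ.mul ψ ≠ 1 → c * (N : ℝ) ^ (-δ) ≤ (LFunction χ 1).re := by
  obtain ⟨C, hC1, hC⟩ := exists_norm_entireZeta_le
  have hM : (1 : ℝ) ≤ M := mod_cast NeZero.one_le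
  have hLψ := LFunction_one_re_pos hψ hψ2
  set η := 1 - σ
  have hη : 0 < η := by linarith
  set K : ℝ := 32 * (C * (7 ^ 3 * M ^ 2))
  set F : ℝ := (LFunction ψ 1).re * ((1 / η + 1) * (M : ℝ) ^ η)
  have : 0 < F := by positivity
  refine ⟨η / 6 * K ^ (-(4 * η)) / F, by positivity, fun N _ χ hχ hχ2 hχψ => ?_⟩
  have hN : (1 : ℝ) ≤ N := mod_cast NeZero.one_le
  have hLχ := LFunction_one_re_pos hχ hχ2
  have hupper : (LFunction χ 1).re * ((LFunction ψ 1).re * (Real.log (N * M) + 1)) ≤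
      (LFunction χ 1).re * (F * (N : ℝ) ^ η) := by
    refine mul_le_mul_of_nonneg_left ?_ hLχ.le
    calc (LFunction ψ 1).re * (Real.log (N * M) + 1)
        ≤ (LFunction ψ 1).re * ((1 / η + 1) * ((N : ℝ) * M) ^ η) := by
          gcongr
          exact log_add_one_le_rpow (one_le_mul_of_one_le_of_one_le hN hM) hη
      _ = F * (N : ℝ) ^ η := by
          rw [Real.mul_rpow (by positivity) (by positivity)]
          ring
  have hlower : η / 6 * K ^ (-(4 * η)) * (N : ℝ) ^ (-(8 * η)) ≤
      (LFunction χ 1).re * (F * (N : ℝ) ^ η) := by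
    refine le_trans (le_of_eq ?_)
      ((le_LFunction_one_re_mul hχ hχ2 hψ hψ2 hχψ hC1 hC hσ hσ1 hzero).trans hupper)
    rw [show 32 * (C * (7 ^ 3 * ((N : ℝ) * M) ^ 2)) = K * (N : ℝ) ^ 2 by ring,
      Real.mul_rpow (x := K) (by positivity) (by positivity), ← Real.rpow_natCast (N : ℝ) 2,
      ← Real.rpow_mul (by positivity), Nat.cast_ofNat,
      show (2 : ℝ) * (-(4 * (1 - σ))) = -(8 * η) by ring, mul_assoc]
  calc η / 6 * K ^ (-(4 * η)) / F * (N : ℝ) ^ (-δ)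
      ≤ η / 6 * K ^ (-(4 * η)) / F * (N : ℝ) ^ (-(8 * η) - η) := by
        gcongr
        linarith
    _ = η / 6 * K ^ (-(4 * η)) * (N : ℝ) ^ (-(8 * η)) / (F * (N : ℝ) ^ η) := by
        rw [Real.rpow_sub (by positivity), div_mul_div_comm]
    _ ≤ _ := (div_le_iff₀ (by positivity)).2 hlower

/-- Siegel's theorem. The constant is ineffective: it depends on a hypothetical real zero close
to `1` of the L-function of some quadratic character. -/
theorem exists_le_LFunction_one_re {δ : ℝ} (hδ : 0 < δ) :
    ∃ c : ℝ, 0 < c ∧ ∀ (N : ℕ) [NeZero N] (χ : DirichletCharacter ℂ N), χ ≠ 1 → χ ^ 2 = 1 →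
      c * (N : ℝ) ^ (-δ) ≤ (LFunction χ 1).re := by
  obtain ⟨δ₀, hδ₀, hZ⟩ := exists_entireZeta_re_pos
  set η := min (δ / 9) (min (1 / 8) (δ₀ / 2))
  have hη : 0 < η := by positivity
  have hηδ : η ≤ δ / 9 := min_le_left _ _
  have hη8 : η ≤ 1 / 8 := (min_le_right _ _).trans (min_le_left _ _)
  have hηδ₀ : η ≤ δ₀ / 2 := (min_le_right _ _).trans (min_le_right _ _)
  by_cases h : ∃ (M : ℕ) (_ : NeZero M) (ψ : DirichletCharacter ℂ M) (σ : ℝ),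
      ψ ≠ 1 ∧ ψ ^ 2 = 1 ∧ 1 - η ≤ σ ∧ σ < 1 ∧ LFunction ψ σ = 0
  · obtain ⟨M, _, ψ, σ, hψ, hψ2, hσ, hσ1, hzero⟩ := h
    obtain ⟨c₁, hc₁, h₁⟩ := exists_le_LFunction_one_re_of_mul_eq_one hψ hψ2 hδ
    obtain ⟨c₂, hc₂, h₂⟩ := exists_le_LFunction_one_re_of_mul_ne_one (δ := δ) hψ hψ2
      (by linarith) hσ1 hzero (by linarith)
    refine ⟨min c₁ c₂, lt_min hc₁ hc₂, fun N _ χ hχ hχ2 => ?_⟩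
    by_cases hmul : χ.mul ψ = 1
    · exact le_trans (by gcongr; exact min_le_left _ _) (h₁ N χ hχ hχ2 hmul)
    · exact le_trans (by gcongr; exact min_le_right _ _) (h₂ N χ hχ hχ2 hmul)
  · push Not at h
    obtain ⟨c, hc, hle⟩ := exists_le_LFunction_one_re_of_forall_ne_zero (σ := 1 - η) (δ := δ)
      (by linarith) (by linarith) (hZ _ (by linarith) (by linarith)).le (by linarith)
    exact ⟨c, hc, fun N hN χ hχ hχ2 => hle N χ hχ hχ2 fun τ => h N hN χ τ hχ hχ2⟩

end Siegel

/-! ### Quadratic characters and root counts -/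

section JacobiCharacter

lemma exists_eq_odd_prime_pow_mul {D : ℕ} (hD : ¬ IsSquare D) :
    ∃ p j w : ℕ, p.Prime ∧ ¬ p ∣ w ∧ D = p ^ (2 * j + 1) * w := by
  have hD0 : D ≠ 0 := by rintro rfl; exact hD ⟨0, rfl⟩
  obtain ⟨a, b, rfl, ha⟩ := Nat.sq_mul_squarefree D
  have ha1 : a ≠ 1 := by rintro rfl; exact hD ⟨b, by ring⟩
  obtain ⟨p, hp, a, rfl⟩ := Nat.exists_prime_and_dvd ha1
  have hpa : ¬ p ∣ a := by
    rintro ⟨c, rfl⟩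
    exact hp.not_isUnit (ha p ⟨c, by ring⟩)
  obtain ⟨j, c, hpc, rfl⟩ :=
    Nat.exists_eq_pow_mul_and_not_dvd (by rintro rfl; simp at hD0 : b ≠ 0) p hp.ne_one
  refine ⟨p, j, c ^ 2 * a, hp, fun h => ?_, by ring⟩
  exact ((hp.dvd_mul).1 h).elim (fun h => hpc (hp.dvd_of_dvd_pow h)) hpa

lemma exists_jacobiSym_two_eq_neg_one {w : ℕ} (hw : Odd w) :
    ∃ m, Odd m ∧ jacobiSym 2 m = -1 ∧ jacobiSym w m = 1 := by
  have hco : Nat.Coprime 8 w := (Nat.coprime_two_left.2 hw).pow_left 3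
  obtain ⟨m, (hm8 : m % 8 = 5), hmw⟩ := Nat.chineseRemainder hco 5 1
  have hm : Odd m := Nat.odd_iff.2 (by omega)
  refine ⟨m, hm, ?_, ?_⟩
  · rw [jacobiSym.at_two hm, ZMod.χ₈_nat_mod_eight, hm8]
    decide
  · have hmw' : (m : ℤ) % w = 1 % w := mod_cast hmw
    rw [← jacobiSym.quadratic_reciprocity_one_mod_four (by omega) hw, jacobiSym.mod_left, hmw',
      ← jacobiSym.mod_left, jacobiSym.one_left]

lemma exists_jacobiSym_prime_eq_neg_one {p w : ℕ} (hp : p.Prime) (hp2 : Odd p) (hpw : ¬ p ∣ w) :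
    ∃ m, Odd m ∧ jacobiSym p m = -1 ∧ jacobiSym w m = 1 := by
  have : Fact p.Prime := ⟨hp⟩
  obtain ⟨g, hg⟩ := FiniteField.exists_nonsquare (F := ZMod p) (by
    rw [ZMod.ringChar_zmod_n]; rintro rfl; exact absurd hp2 (by decide))
  have hco : Nat.Coprime (4 * w) p :=
    ((Nat.coprime_two_left.2 hp2).pow_left 2).mul_left ((hp.coprime_iff_not_dvd.2 hpw).symm)
  obtain ⟨m, hm4w, hmp⟩ := Nat.chineseRemainder hco 1 g.val
  have hm4 : m % 4 = 1 := Nat.ModEq.of_mul_right w hm4w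
  have hm : Odd m := Nat.odd_iff.2 (by omega)
  refine ⟨m, hm, ?_, ?_⟩
  · have hmg : ((m : ℤ) : ZMod p) = g := by simpa using (ZMod.natCast_eq_natCast_iff _ _ _).2 hmp
    rwa [← jacobiSym.quadratic_reciprocity_one_mod_four hm4 hp2,
      ← jacobiSym.legendreSym.to_jacobiSym, legendreSym.eq_neg_one_iff, hmg]
  · rw [jacobiSym.mod_right' w hm, show m % (4 * w) = 1 % (4 * w) from hm4w,
      ← jacobiSym.mod_right' w odd_one, jacobiSym.one_right]

lemma exists_jacobiSym_eq_neg_one {D : ℕ} (hD : ¬ IsSquare D) :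
    ∃ m, Odd m ∧ jacobiSym D m = -1 := by
  obtain ⟨p, j, w, hp, hpw, rfl⟩ := exists_eq_odd_prime_pow_mul hD
  obtain ⟨m, hm, hpm, hwm⟩ : ∃ m, Odd m ∧ jacobiSym p m = -1 ∧ jacobiSym w m = 1 := by
    rcases hp.eq_two_or_odd' with rfl | hp2
    · exact exists_jacobiSym_two_eq_neg_one
        (Nat.not_even_iff_odd.1 fun h => hpw (even_iff_two_dvd.1 h))
    · exact exists_jacobiSym_prime_eq_neg_one hp hp2 hpw
  refine ⟨m, hm, ?_⟩
  rw [Nat.cast_mul, Nat.cast_pow, jacobiSym.mul_left, jacobiSym.pow_left, hpm, hwm,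
    Odd.neg_one_pow ⟨j, rfl⟩, mul_one]

lemma odd_mod_four_mul_iff {D m : ℕ} : Odd (m % (4 * D)) ↔ Odd m := by
  rw [Nat.odd_iff, Nat.odd_iff, Nat.mod_mod_of_dvd _ ⟨2 * D, by ring⟩]

variable (D : ℕ) [NeZero D]

/-- The quadratic character `m ↦ (D / m)`, where `(D / m)` is the Jacobi symbol for odd `m` and
`0` for even `m`. Compared with the Kronecker symbol, the Euler factor at `2` is dropped, at the
cost of the modulus `4D`. -/
def jacobiChar : DirichletCharacter ℂ (4 * D) where
  toFun x := if Odd x.val then (jacobiSym D x.val : ℂ) else 0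
  map_one' := by
    have : Fact (1 < 4 * D) := ⟨by have := NeZero.pos D; omega⟩
    simp [ZMod.val_one]
  map_mul' x y := by
    simp only [ZMod.val_mul, odd_mod_four_mul_iff, Nat.odd_mul, mul_ite, ite_mul, zero_mul,
      mul_zero, ← ite_and]
    by_cases hx : Odd x.val <;> by_cases hy : Odd y.val <;>
      simp only [hx, hy, and_true, and_false, if_true, if_false]
    have : NeZero x.val := ⟨hx.pos.ne'⟩
    have : NeZero y.val := ⟨hy.pos.ne'⟩
    rw [← jacobiSym.mod_right' D (hx.mul hy), jacobiSym.mul_right, Int.cast_mul]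
  map_nonunit' x hx := by
    split_ifs with h
    · have : NeZero x.val := ⟨h.pos.ne'⟩
      rw [Int.cast_eq_zero, jacobiSym.eq_zero_iff_not_coprime, Int.gcd_natCast_natCast]
      intro hD
      apply hx
      rw [← ZMod.natCast_zmod_val x, ZMod.isUnit_iff_coprime]
      exact ((Nat.coprime_two_right.2 h).pow_right 2).mul_right (Nat.Coprime.symm hD)
    · rfl

variable {D}

lemma jacobiChar_natCast {m : ℕ} (hm : Odd m) : jacobiChar D m = jacobiSym D m := by
  change (if Odd (m : ZMod (4 * D)).val then (jacobiSym D (m : ZMod (4 * D)).val : ℂ) else 0) = _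
  rw [ZMod.val_natCast, if_pos (odd_mod_four_mul_iff.2 hm), ← jacobiSym.mod_right' D hm]

lemma jacobiChar_sq : jacobiChar D ^ 2 = 1 := by
  ext x
  obtain ⟨m, hm⟩ : ∃ m : ℕ, (m : ZMod (4 * D)) = x := ⟨_, ZMod.natCast_zmod_val _⟩
  have hu := (ZMod.isUnit_iff_coprime m (4 * D)).1 (hm ▸ x.isUnit)
  have hm2 : Odd m := Nat.coprime_two_right.1 (hu.coprime_dvd_right ⟨2 * D, by ring⟩)
  rw [MulChar.one_apply_coe, MulChar.pow_apply_coe, ← hm, jacobiChar_natCast hm2, ← Int.cast_pow,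
    jacobiSym.sq_one, Int.cast_one]
  rw [Int.gcd_natCast_natCast]
  exact Nat.Coprime.symm (hu.coprime_dvd_right ⟨4, by ring⟩)

lemma jacobiChar_ne_one (hD : ¬ IsSquare D) : jacobiChar D ≠ 1 := by
  obtain ⟨m, hm, hDm⟩ := exists_jacobiSym_eq_neg_one hD
  intro h
  have hval : (1 : DirichletCharacter ℂ (4 * D)) m = -1 := by
    rw [← h, jacobiChar_natCast hm, hDm, Int.cast_neg, Int.cast_one]
  by_cases hu : IsUnit (m : ZMod (4 * D))
  · rw [MulChar.one_apply hu] at hval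
    norm_num at hval
  · rw [MulChar.map_nonunit _ hu] at hval
    norm_num at hval

end JacobiCharacter

section RootCount

open Polynomial

/-- The number of roots of `X² - nX + 1` modulo `a`. -/
def rootCount (n : ℤ) (a : ℕ) : ℕ := Nat.card {t : ZMod a // t ^ 2 - n * t + 1 = 0}

variable {n : ℤ}

lemma rootCount_one : rootCount n 1 = 1 := by
  rw [rootCount, Nat.card_eq_one_iff_unique]
  have : Subsingleton (ZMod 1) := inferInstanceAs (Subsingleton (Fin 1))
  exact ⟨inferInstance, ⟨⟨0, Subsingleton.elim _ _⟩⟩⟩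

lemma rootCount_mul {a b : ℕ} (h : a.Coprime b) :
    rootCount n (a * b) = rootCount n a * rootCount n b := by
  rw [rootCount, rootCount, rootCount, ← Nat.card_prod]
  let e := ZMod.chineseRemainder h
  have he (x : ZMod (a * b)) : x ^ 2 - n * x + 1 = 0 ↔
      (e x).1 ^ 2 - n * (e x).1 + 1 = 0 ∧ (e x).2 ^ 2 - n * (e x).2 + 1 = 0 := by
    rw [← e.injective.eq_iff, Prod.ext_iff]
    simp
  exact Nat.card_congr <| (e.toEquiv.subtypeEquiv he).trans <|
    Equiv.subtypeProdEquivProd (p := fun t : ZMod a => t ^ 2 - n * t + 1 = 0)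
      (q := fun t : ZMod b => t ^ 2 - n * t + 1 = 0)

/-- The arithmetic function `a ↦ rootCount n a` restricted to the integers coprime to `N`. -/
def coprimeRootCount (n : ℤ) (N : ℕ) : ArithmeticFunction ℕ :=
  ⟨fun a => if a ≠ 0 ∧ a.Coprime N then rootCount n a else 0, by simp⟩

lemma coprimeRootCount_apply {N a : ℕ} (ha : a ≠ 0) :
    coprimeRootCount n N a = if a.Coprime N then rootCount n a else 0 := by
  simp [coprimeRootCount, ha]

lemma isMultiplicative_coprimeRootCount (n : ℤ) (N : ℕ) :
    (coprimeRootCount n N).IsMultiplicative := by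
  refine ArithmeticFunction.IsMultiplicative.iff_ne_zero.2 ⟨?_, fun {a b} ha hb hab => ?_⟩
  · rw [coprimeRootCount_apply one_ne_zero, if_pos (Nat.coprime_one_left N), rootCount_one]
  · rw [coprimeRootCount_apply ha, coprimeRootCount_apply hb,
      coprimeRootCount_apply (mul_ne_zero ha hb), rootCount_mul hab]
    simp only [Nat.coprime_mul_iff_left, ite_and, mul_ite, ite_mul, zero_mul, mul_zero]
    split_ifs <;> rfl

lemma nontrivial_roots_of_sq_eq {R : Type*} [CommRing R] [Nontrivial R] {b s : R}
    (h2 : IsUnit (2 : R)) (hs : IsUnit s) (h : s ^ 2 = b ^ 2 - 4) :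
    Nontrivial {t : R // t ^ 2 - b * t + 1 = 0} := by
  obtain ⟨i, hi⟩ := h2.exists_right_inv
  have h4 : 4 * i ^ 2 = 1 := by linear_combination (2 * i + 1) * hi
  have hroot {r : R} (hr : r ^ 2 = b ^ 2 - 4) :
      ((b + r) * i) ^ 2 - b * ((b + r) * i) + 1 = 0 := by
    linear_combination i ^ 2 * hr - h4 + b * (b + r) * i * hi
  refine ⟨⟨_, hroot h⟩, ⟨_, hroot (r := -s) (by rwa [neg_sq])⟩, fun heq => hs.ne_zero ?_⟩
  have heq' : (b + s) * i = (b + -s) * i := congrArg Subtype.val heq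
  linear_combination heq' - s * hi

lemma exists_isUnit_sq_eq_intCast {p : ℕ} [Fact p.Prime] (hp2 : p ≠ 2) {d : ℤ}
    (hd : legendreSym p d = 1) (k : ℕ) : ∃ s : ZMod (p ^ k), IsUnit s ∧ s ^ 2 = d := by
  have hd0 : (d : ZMod p) ≠ 0 := fun h => by simp [(legendreSym.eq_zero_iff p d).2 h] at hd
  obtain ⟨b, hb⟩ := (legendreSym.eq_one_iff p hd0).1 hd
  obtain ⟨c, rfl⟩ := ZMod.natCast_zmod_surjective b
  obtain ⟨q, hq⟩ : (p : ℤ) ∣ (c : ℤ) ^ 2 - d := by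
    rw [← ZMod.intCast_zmod_eq_zero_iff_dvd]
    simp [hb, sq]
  let x : ZMod (p ^ k) := c
  have hq' : x ^ 2 - d = p * q := by
    have := congrArg (Int.cast : ℤ → ZMod (p ^ k)) hq
    push_cast at this
    exact this
  have hx : IsUnit x := by
    refine (ZMod.isUnit_iff_coprime _ _).2 (Nat.Coprime.pow_right k ?_)
    rw [← ZMod.isUnit_iff_coprime, isUnit_iff_ne_zero]
    intro hc
    simp [hb, hc] at hd0
  have h2 : IsUnit (2 : ZMod (p ^ k)) := mod_cast (ZMod.isUnit_iff_coprime 2 _).2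
    (((Nat.coprime_primes Nat.prime_two Fact.out).2 hp2.symm).pow_right k)
  have hnil : IsNilpotent (aeval x (X ^ 2 - C (d : ZMod (p ^ k)))) := by
    refine ⟨k, ?_⟩
    rw [map_sub, map_pow, aeval_X, aeval_C, Algebra.algebraMap_self_apply, hq', mul_pow,
      ← Nat.cast_pow, ZMod.natCast_self, zero_mul]
  have hderiv : IsUnit (aeval x (derivative (X ^ 2 - C (d : ZMod (p ^ k))))) := by
    have : aeval x (derivative (X ^ 2 - C (d : ZMod (p ^ k)))) = 2 * x := by
      simp [one_add_one_eq_two]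
    rw [this]
    exact h2.mul hx
  obtain ⟨s, ⟨hsx, hs⟩, -⟩ := existsUnique_nilpotent_sub_and_aeval_eq_zero hnil hderiv
  refine ⟨s, ?_, by simpa [sub_eq_zero] using hs⟩
  rw [← add_sub_cancel x s, ← neg_sub x s]
  exact hsx.neg.isUnit_add_left_of_commute hx (.all _ _)

lemma two_le_rootCount_prime_pow {p : ℕ} [Fact p.Prime] (hp2 : p ≠ 2)
    (h : legendreSym p (n ^ 2 - 4) = 1) (k : ℕ) : 2 ≤ rootCount n (p ^ (k + 1)) := by
  have hp : p.Prime := Fact.out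
  have : NeZero (p ^ (k + 1)) := ⟨pow_ne_zero _ hp.ne_zero⟩
  have : Fact (1 < p ^ (k + 1)) := ⟨Nat.one_lt_pow k.succ_ne_zero hp.one_lt⟩
  obtain ⟨s, hunit, hs⟩ := exists_isUnit_sq_eq_intCast hp2 h (k + 1)
  have h2 : IsUnit (2 : ZMod (p ^ (k + 1))) := mod_cast (ZMod.isUnit_iff_coprime 2 _).2
    (((Nat.coprime_primes Nat.prime_two hp).2 hp2.symm).pow_right (k + 1))
  have := nontrivial_roots_of_sq_eq (b := (n : ZMod (p ^ (k + 1)))) h2 hunit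
    (hs.trans (by push_cast; rfl))
  exact Finite.one_lt_card

lemma two_le_coprimeRootCount_prime_pow {D : ℕ} [NeZero D] (hD : (D : ℤ) + 4 = n ^ 2) {p : ℕ}
    (hp : p.Prime) (h : jacobiChar D p = 1) (k : ℕ) :
    2 ≤ coprimeRootCount n (4 * D) (p ^ (k + 1)) := by
  have : Fact p.Prime := ⟨hp⟩
  have hcop : p.Coprime (4 * D) := by
    by_contra hc
    simp [MulChar.map_nonunit _ (mt (ZMod.isUnit_iff_coprime p _).1 hc)] at h
  have hodd : Odd p := Nat.coprime_two_right.1 (hcop.coprime_dvd_right ⟨2 * D, by ring⟩)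
  rw [coprimeRootCount_apply (pow_ne_zero _ hp.ne_zero), if_pos (hcop.pow_left _)]
  refine two_le_rootCount_prime_pow (by rintro rfl; exact absurd hodd (by decide)) ?_ k
  rw [jacobiChar_natCast hodd, ← jacobiSym.legendreSym.to_jacobiSym] at h
  rw [← hD, add_sub_cancel_right]
  exact_mod_cast h

end RootCount

section DirichletSeriesComparison

open DirichletCharacter ArithmeticFunction Filter MeasureTheory
open scoped ComplexOrder Topology

/-- The indicator function of the positive squares. -/
def squareIndicator : ArithmeticFunction ℕ :=
  ⟨fun m => if m ≠ 0 ∧ IsSquare m then 1 else 0, by simp⟩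

lemma squareIndicator_apply (m : ℕ) :
    squareIndicator m = if m ≠ 0 ∧ IsSquare m then 1 else 0 := rfl

lemma isSquare_mul_iff_of_coprime {m k : ℕ} (h : m.Coprime k) :
    IsSquare (m * k) ↔ IsSquare m ∧ IsSquare k := by
  refine ⟨fun ⟨r, hr⟩ => ?_, fun h => h.1.mul h.2⟩
  rw [← sq] at hr
  obtain ⟨a, ha⟩ := exists_eq_pow_of_mul_eq_pow (by rwa [Nat.isUnit_iff]) hr
  obtain ⟨b, hb⟩ := exists_eq_pow_of_mul_eq_pow (by rw [Nat.isUnit_iff]; exact h.symm)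
    ((mul_comm k m).trans hr)
  exact ⟨ha ▸ IsSquare.sq a, hb ▸ IsSquare.sq b⟩

lemma isMultiplicative_squareIndicator : squareIndicator.IsMultiplicative := by
  refine IsMultiplicative.iff_ne_zero.2 ⟨by simp [squareIndicator_apply], fun {m k} hm hk h => ?_⟩
  simp only [squareIndicator_apply, ne_eq, mul_eq_zero, hm, hk, isSquare_mul_iff_of_coprime h]
  split_ifs <;> simp_all

lemma squareIndicator_prime_pow_of_even {p : ℕ} (hp : p.Prime) {k : ℕ} (hk : Even k) :
    squareIndicator (p ^ k) = 1 := by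
  simp [squareIndicator_apply, hp.ne_zero, hk.isSquare_pow p]

lemma squareIndicator_prime_pow_le_add_two {p : ℕ} (hp : p.Prime) (k : ℕ) :
    squareIndicator (p ^ k) ≤ squareIndicator (p ^ (k + 2)) := by
  have h : IsSquare (p ^ k) → IsSquare (p ^ (k + 2)) := fun h => by
    rw [pow_add]
    exact h.mul (IsSquare.sq p)
  simp only [squareIndicator_apply, pow_ne_zero _ hp.ne_zero, ne_eq, not_false_eq_true, true_and]
  split_ifs <;> simp_all

lemma sum_squareIndicator_le (N : ℕ) :
    ∑ m ∈ Finset.Icc 1 N, (squareIndicator m : ℝ) ≤ √N := by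
  have hsub : {m ∈ Finset.Icc 1 N | m ≠ 0 ∧ IsSquare m} ⊆
      (Finset.Icc 1 N.sqrt).image (· ^ 2) := by
    intro m hm
    obtain ⟨hmN, hm0, k, rfl⟩ := Finset.mem_filter.1 hm
    refine Finset.mem_image.2 ⟨k, Finset.mem_Icc.2 ⟨?_, ?_⟩, sq k⟩
    · exact Nat.pos_of_ne_zero (left_ne_zero_of_mul hm0)
    · exact Nat.le_sqrt.2 (Finset.mem_Icc.1 hmN).2
  have hcard := (Finset.card_le_card hsub).trans Finset.card_image_le
  rw [Nat.card_Icc, Nat.add_sub_cancel] at hcard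
  calc ∑ m ∈ Finset.Icc 1 N, (squareIndicator m : ℝ)
      = ({m ∈ Finset.Icc 1 N | m ≠ 0 ∧ IsSquare m}.card : ℝ) := by
        simp [squareIndicator_apply, Finset.sum_boole]
    _ ≤ N.sqrt := mod_cast hcard
    _ ≤ √N := Real.nat_sqrt_le_real_sqrt

lemma mul_apply_prime_pow {A : Type*} [Semiring A] (f g : ArithmeticFunction A) {p : ℕ}
    (hp : p.Prime) (k : ℕ) :
    (f * g) (p ^ k) = ∑ i ∈ Finset.range (k + 1), f (p ^ i) * g (p ^ (k - i)) := by
  rw [ArithmeticFunction.mul_apply, Nat.sum_divisorsAntidiagonal fun i j => f i * g j,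
    Nat.sum_divisors_prime_pow hp]
  refine Finset.sum_congr rfl fun i hi => ?_
  rw [Nat.pow_div (Finset.mem_range_succ_iff.1 hi) hp.pos]

section Comparison

variable {R : ArithmeticFunction ℕ} {p : ℕ}

lemma succ_le_squareIndicator_mul_prime_pow (hR : R.IsMultiplicative) (hp : p.Prime)
    (h : ∀ k, 2 ≤ R (p ^ (k + 1))) (k : ℕ) : k + 1 ≤ (squareIndicator * R) (p ^ k) := by
  induction k using Nat.twoStepInduction with
  | zero => simp [isMultiplicative_squareIndicator.map_one, hR.map_one]
  | one =>
    have h0 := h 0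
    rw [mul_apply_prime_pow _ _ hp, Finset.sum_range_succ']
    simp only [pow_zero, isMultiplicative_squareIndicator.map_one]
    lia
  | more k ih _ =>
    have hle : ∑ i ∈ Finset.range (k + 1), squareIndicator (p ^ i) * R (p ^ (k - i)) ≤
        ∑ i ∈ Finset.range (k + 1), squareIndicator (p ^ (i + 2)) * R (p ^ (k + 2 - (i + 2))) :=
      Finset.sum_le_sum fun i _ => by
        rw [Nat.add_sub_add_right]
        exact Nat.mul_le_mul_right _ (squareIndicator_prime_pow_le_add_two hp i)
    have h1 := h (k + 1)
    rw [mul_apply_prime_pow _ _ hp] at ih ⊢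
    rw [Finset.sum_range_succ', Finset.sum_range_succ', pow_zero,
      isMultiplicative_squareIndicator.map_one, one_mul, Nat.sub_zero]
    lia

lemma le_squareIndicator_mul_prime_pow_of_even (hR : R.IsMultiplicative) (hp : p.Prime) {k : ℕ}
    (hk : Even k) : 1 ≤ (squareIndicator * R) (p ^ k) := by
  rw [mul_apply_prime_pow _ _ hp]
  refine le_trans ?_ (Finset.single_le_sum (fun _ _ => Nat.zero_le _)
    (Finset.self_mem_range_succ k))
  rw [squareIndicator_prime_pow_of_even hp hk, Nat.sub_self, pow_zero, hR.map_one, one_mul]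

variable {N : ℕ} {χ : DirichletCharacter ℂ N}

lemma zetaMul_prime_pow_of_eq_one (hp : p.Prime) (hχp : χ p = 1) (k : ℕ) :
    zetaMul χ (p ^ k) = k + 1 := by
  rw [zetaMul, coe_zeta_mul_apply, Nat.sum_divisors_prime_pow hp]
  simp [toArithmeticFunction, hp.ne_zero, hχp]

lemma one_mul_zetaMul_prime_pow_le (hχ : χ ^ 2 = 1) (hR : R.IsMultiplicative)
    (hp : p.Prime) (h : χ p = 1 → ∀ k, 2 ≤ R (p ^ (k + 1))) (k : ℕ) :
    (1 : DirichletCharacter ℂ N) ↑(p ^ k) * zetaMul χ (p ^ k) ≤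
      (squareIndicator * R) (p ^ k) := by
  rcases k.eq_zero_or_pos with rfl | hk
  · simp [χ.isMultiplicative_zetaMul.map_one, isMultiplicative_squareIndicator.map_one,
      hR.map_one]
  have hone (hp0 : χ p ≠ 0) : (1 : DirichletCharacter ℂ N) ↑(p ^ k) = 1 := by
    rw [Nat.cast_pow, map_pow, MulChar.one_apply (not_not.1 (mt (MulChar.map_nonunit χ) hp0)),
      one_pow]
  rcases MulChar.isQuadratic_iff_sq_eq_one.2 hχ p with hp0 | hp1 | hp1
  · rw [Nat.cast_pow, map_pow, MulChar.map_nonunit _ fun hu => (hu.map χ).ne_zero hp0,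
      zero_pow hk.ne', zero_mul]
    exact Nat.cast_nonneg _
  · rw [hone (by simp [hp1]), one_mul, zetaMul_prime_pow_of_eq_one hp hp1]
    exact_mod_cast succ_le_squareIndicator_mul_prime_pow hR hp (h hp1) k
  · rw [hone (by simp [hp1]), one_mul, zetaMul_prime_pow_of_eq_neg_one hp hp1]
    split_ifs with hk2
    · exact_mod_cast le_squareIndicator_mul_prime_pow_of_even hR hp hk2
    · exact Nat.cast_nonneg _

lemma isMultiplicative_one_convolution (χ : DirichletCharacter ℂ N) :
    (toArithmeticFunction ((1 : DirichletCharacter ℂ N) ·) *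
      toArithmeticFunction (χ ·)).IsMultiplicative :=
  (isMultiplicative_toArithmeticFunction _).mul (isMultiplicative_toArithmeticFunction _)

lemma one_convolution_apply (χ : DirichletCharacter ℂ N) (m : ℕ) :
    (toArithmeticFunction ((1 : DirichletCharacter ℂ N) ·) * toArithmeticFunction (χ ·)) m =
      (1 : DirichletCharacter ℂ N) m * zetaMul χ m :=
  toArithmeticFunction_mul_apply (fun n => by rw [← MulChar.mul_apply, one_mul]) m

lemma one_mul_zetaMul_nonneg (hχ : χ ^ 2 = 1) (m : ℕ) :
    0 ≤ (1 : DirichletCharacter ℂ N) m * zetaMul χ m := by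
  refine mul_nonneg ?_ (zetaMul_nonneg hχ m)
  by_cases hm : IsUnit (m : ZMod N)
  · simp [MulChar.one_apply hm]
  · simp [MulChar.map_nonunit _ hm]

lemma one_mul_zetaMul_le (hχ : χ ^ 2 = 1) (hR : R.IsMultiplicative)
    (h : ∀ p : ℕ, p.Prime → χ p = 1 → ∀ k, 2 ≤ R (p ^ (k + 1))) (m : ℕ) :
    (1 : DirichletCharacter ℂ N) m * zetaMul χ m ≤ (squareIndicator * R) m := by
  rcases eq_or_ne m 0 with rfl | hm
  · simp
  rw [← one_convolution_apply,
    (isMultiplicative_one_convolution χ).multiplicative_factorization _ hm,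
    (isMultiplicative_squareIndicator.mul hR).multiplicative_factorization _ hm, Finsupp.prod,
    Finsupp.prod, Nat.cast_prod]
  refine Finset.prod_le_prod (fun p _ => ?_) fun p hp => ?_
  · rw [one_convolution_apply]
    exact one_mul_zetaMul_nonneg hχ _
  · have hp' := Nat.prime_of_mem_primeFactors hp
    rw [one_convolution_apply]
    exact one_mul_zetaMul_prime_pow_le hχ hR hp' (h p hp') _

end Comparison

lemma norm_LSeries_le_of_le {u v : ℕ → ℂ} (hu : 0 ≤ u) (huv : u ≤ v) {σ : ℝ}
    (hv : LSeriesSummable v σ) : ‖LSeries u σ‖ ≤ ‖LSeries v σ‖ := by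
  have hle (m : ℕ) : ‖LSeries.term u σ m‖ ≤ ‖LSeries.term v σ m‖ :=
    LSeries.norm_term_le _ (CStarAlgebra.norm_le_norm_of_nonneg_of_le (hu m) (huv m))
  have hv' : LSeries v σ = ((∑' m, ‖LSeries.term v σ m‖ : ℝ) : ℂ) := by
    rw [LSeries, Complex.ofReal_tsum]
    exact tsum_congr fun m =>
      Complex.eq_coe_norm_of_nonneg (LSeries.term_nonneg ((hu.trans huv) m) σ)
  rw [hv', Complex.norm_of_nonneg (tsum_nonneg fun _ => norm_nonneg _)]
  have hsum := Summable.of_nonneg_of_le (fun _ => norm_nonneg _) hle hv.norm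
  exact (norm_tsum_le_tsum_norm hsum).trans (hsum.tsum_le_tsum hle hv.norm)

section PartialSummation

variable {f : ℕ → ℝ} {a b : ℝ}

lemma sum_isBigO_of_sum_le (hf : 0 ≤ f) (hb : 0 ≤ b)
    (hS : ∀ N : ℕ, ∑ m ∈ Finset.Icc 1 N, f m ≤ a * N + b * √N) :
    (fun N : ℕ => ∑ m ∈ Finset.Icc 1 N, f m) =O[atTop] fun N : ℕ => (N : ℝ) ^ (1 : ℝ) := by
  refine Asymptotics.IsBigO.of_bound (a + b) ?_
  filter_upwards [eventually_ge_atTop 1] with N hN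
  have hN' : (1 : ℝ) ≤ N := mod_cast hN
  have hsqrt : √N ≤ N := Real.sqrt_le_left (by positivity) |>.2 (by nlinarith)
  rw [Real.rpow_one, Real.norm_of_nonneg (Finset.sum_nonneg fun m _ => hf m),
    Real.norm_of_nonneg (by positivity), add_mul]
  exact (hS N).trans (by gcongr)

lemma norm_sum_floor_mul_cpow_le (hf : 0 ≤ f) (ha : 0 ≤ a) (hb : 0 ≤ b)
    (hS : ∀ N : ℕ, ∑ m ∈ Finset.Icc 1 N, f m ≤ a * N + b * √N) (σ : ℝ) {t : ℝ} (ht : 0 < t) :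
    ‖(∑ k ∈ Finset.Icc 1 ⌊t⌋₊, (f k : ℂ)) * (t : ℂ) ^ (-((σ : ℂ) + 1))‖ ≤
      a * t ^ (-σ) + b * t ^ (-σ - 1 / 2) := by
  have hfl : (⌊t⌋₊ : ℝ) ≤ t := Nat.floor_le ht.le
  rw [norm_mul, ← Complex.ofReal_sum, Complex.norm_of_nonneg (Finset.sum_nonneg fun m _ => hf m),
    Complex.norm_cpow_eq_rpow_re_of_pos ht]
  have hre : (-((σ : ℂ) + 1)).re = -σ - 1 := by
    simp
    ring
  calc (∑ k ∈ Finset.Icc 1 ⌊t⌋₊, f k) * t ^ (-((σ : ℂ) + 1)).re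
      ≤ (a * t + b * √t) * t ^ (-σ - 1) := by
        rw [hre]
        refine mul_le_mul_of_nonneg_right ((hS _).trans ?_) (by positivity)
        gcongr
    _ = a * (t ^ (1 : ℝ) * t ^ (-σ - 1)) + b * (t ^ (1 / 2 : ℝ) * t ^ (-σ - 1)) := by
        rw [Real.sqrt_eq_rpow, Real.rpow_one]
        ring
    _ = a * t ^ (-σ) + b * t ^ (-σ - 1 / 2) := by
        rw [← Real.rpow_add ht, ← Real.rpow_add ht]
        ring_nf

variable {σ : ℝ}

lemma LSeriesSummable_of_sum_le (hf : 0 ≤ f) (hb : 0 ≤ b)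
    (hS : ∀ N : ℕ, ∑ m ∈ Finset.Icc 1 N, f m ≤ a * N + b * √N) (hσ : 1 < σ) :
    LSeriesSummable (fun m => (f m : ℂ)) σ :=
  LSeriesSummable_of_sum_norm_bigO_and_nonneg (sum_isBigO_of_sum_le hf hb hS) hf zero_le_one
    (by simpa using hσ)

lemma norm_LSeries_le_of_sum_le (hf : 0 ≤ f) (ha : 0 ≤ a) (hb : 0 ≤ b)
    (hS : ∀ N : ℕ, ∑ m ∈ Finset.Icc 1 N, f m ≤ a * N + b * √N) (hσ : 1 < σ) :
    ‖LSeries (fun m => (f m : ℂ)) σ‖ ≤ σ * (a / (σ - 1) + b / (σ - 1 / 2)) := by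
  have ia := (integrableOn_Ioi_rpow_of_lt (a := -σ) (c := 1) (by linarith) one_pos).const_mul a
  have ib := (integrableOn_Ioi_rpow_of_lt (a := -σ - 1 / 2) (c := 1) (by linarith)
    one_pos).const_mul b
  have hint : ∫ t in Set.Ioi (1 : ℝ), (a * t ^ (-σ) + b * t ^ (-σ - 1 / 2)) =
      a / (σ - 1) + b / (σ - 1 / 2) := by
    rw [integral_add ia ib, integral_const_mul, integral_const_mul,
      integral_Ioi_rpow_of_lt (by linarith) one_pos, integral_Ioi_rpow_of_lt (by linarith) one_pos,
      Real.one_rpow, Real.one_rpow, ← neg_div_neg_eq (-1), ← neg_div_neg_eq (-1)]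
    ring_nf
  rw [LSeries_eq_mul_integral_of_nonneg f zero_le_one (by simpa using hσ)
    (sum_isBigO_of_sum_le hf hb hS) hf, norm_mul, Complex.norm_of_nonneg (by linarith), ← hint]
  refine mul_le_mul_of_nonneg_left (norm_integral_le_of_norm_le (ia.add ib) ?_) (by linarith)
  filter_upwards [ae_restrict_mem measurableSet_Ioi] with t ht
  exact norm_sum_floor_mul_cpow_le hf ha hb hS σ (zero_lt_one.trans ht)

end PartialSummation

variable {N : ℕ} {χ : DirichletCharacter ℂ N} {R : ArithmeticFunction ℕ} {a b : ℝ}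

lemma norm_LFunction_mul_LFunction_le [NeZero N] (hχ : χ ^ 2 = 1) (hR : R.IsMultiplicative)
    (h : ∀ p : ℕ, p.Prime → χ p = 1 → ∀ k, 2 ≤ R (p ^ (k + 1))) (ha : 0 ≤ a) (hb : 0 ≤ b)
    (hS : ∀ X : ℕ, ∑ m ∈ Finset.Icc 1 X, (R m : ℝ) ≤ a * X + b * √X) {σ : ℝ} (hσ : 1 < σ) :
    ‖LFunctionTrivChar N σ * LFunction χ σ‖ ≤
      σ * (1 / (σ - 1 / 2)) * (σ * (a / (σ - 1) + b / (σ - 1 / 2))) := by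
  have hQ : ∀ X : ℕ, ∑ m ∈ Finset.Icc 1 X, (squareIndicator m : ℝ) ≤ 0 * X + 1 * √X := by
    simpa using sum_squareIndicator_le
  have hQ0 : (0 : ℕ → ℝ) ≤ fun m => (squareIndicator m : ℝ) := fun m => Nat.cast_nonneg _
  have hR0 : (0 : ℕ → ℝ) ≤ fun m => (R m : ℝ) := fun m => Nat.cast_nonneg _
  have sQ : LSeriesSummable (squareIndicator : ArithmeticFunction ℂ) σ := by
    simpa using! LSeriesSummable_of_sum_le hQ0 zero_le_one hQ hσ
  have sR : LSeriesSummable (R : ArithmeticFunction ℂ) σ := by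
    simpa using! LSeriesSummable_of_sum_le hR0 hb hS hσ
  have nQ := norm_LSeries_le_of_sum_le hQ0 le_rfl zero_le_one hQ hσ
  have nR := norm_LSeries_le_of_sum_le hR0 ha hb hS hσ
  have hσ' : 1 < (σ : ℂ).re := by simpa using hσ
  rw [LFunctionTrivChar, ← (LSeriesHasSum_mul (LSeriesHasSum_toArithmeticFunction 1 hσ')
    (LSeriesHasSum_toArithmeticFunction χ hσ')).LSeries_eq]
  calc
    _ ≤ ‖LSeries ↑((squareIndicator : ArithmeticFunction ℂ) * (R : ArithmeticFunction ℂ)) σ‖ := by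
        refine norm_LSeries_le_of_le (fun m => ?_) (fun m => ?_) (LSeriesSummable_mul sQ sR)
        · rw [one_convolution_apply]
          exact one_mul_zetaMul_nonneg hχ m
        · rw [one_convolution_apply, ← natCoe_mul, natCoe_apply]
          exact one_mul_zetaMul_le hχ hR h m
    _ ≤ _ := by
        rw [LSeries_mul' sQ sR, norm_mul]
        have : 0 < σ - 1 / 2 := by linarith
        refine mul_le_mul ?_ ?_ (norm_nonneg _) (by positivity)
        · simpa using! nQ
        · simpa using! nR

lemma tendsto_ofReal_nhdsGT_one : Tendsto (fun σ : ℝ => (σ : ℂ)) (𝓝[>] 1) (𝓝[≠] 1) := by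
  refine tendsto_nhdsWithin_iff.2 ⟨?_, ?_⟩
  · simpa using (Complex.continuous_ofReal.tendsto 1).mono_left (nhdsWithin_le_nhds (s := .Ioi 1))
  · filter_upwards [self_mem_nhdsWithin] with σ (hσ : 1 < σ)
    exact Complex.ofReal_ne_one.2 hσ.ne'

theorem LFunction_one_re_mul_prod_le [NeZero N] (hχ1 : χ ≠ 1) (hχ : χ ^ 2 = 1)
    (hR : R.IsMultiplicative) (h : ∀ p : ℕ, p.Prime → χ p = 1 → ∀ k, 2 ≤ R (p ^ (k + 1)))
    (ha : 0 ≤ a) (hb : 0 ≤ b)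
    (hS : ∀ X : ℕ, ∑ m ∈ Finset.Icc 1 X, (R m : ℝ) ≤ a * X + b * √X) :
    (LFunction χ 1).re * ∏ p ∈ N.primeFactors, (1 - (p : ℝ)⁻¹) ≤ 2 * a := by
  have hle : ∀ᶠ σ : ℝ in 𝓝[>] 1, ‖(σ - 1) * LFunctionTrivChar N σ * LFunction χ σ‖ ≤
      σ / (σ - 1 / 2) * (σ * (a + b * (σ - 1) / (σ - 1 / 2))) := by
    filter_upwards [self_mem_nhdsWithin] with σ (hσ : 1 < σ)
    have hσ1 : 0 < σ - 1 := by linarith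
    have : 0 < σ - 1 / 2 := by linarith
    have hnorm : ‖(σ - 1 : ℂ)‖ = σ - 1 := by
      rw [← Complex.ofReal_one, ← Complex.ofReal_sub, Complex.norm_of_nonneg hσ1.le]
    rw [mul_assoc, norm_mul, hnorm]
    refine (mul_le_mul_of_nonneg_left (norm_LFunction_mul_LFunction_le hχ hR h ha hb hS hσ)
      hσ1.le).trans_eq ?_
    field_simp
  have hlim : Tendsto (fun σ : ℝ => ‖(σ - 1) * LFunctionTrivChar N σ * LFunction χ σ‖) (𝓝[>] 1)
      (𝓝 ‖(∏ p ∈ N.primeFactors, (1 - (p : ℂ)⁻¹)) * LFunction χ 1‖) :=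
    ((LFunctionTrivChar_residue_one.comp tendsto_ofReal_nhdsGT_one).mul
      (((differentiable_LFunction hχ1).continuous.tendsto 1).comp
        (tendsto_ofReal_nhdsGT_one.mono_right nhdsWithin_le_nhds))).norm
  have hlim' : Tendsto (fun σ : ℝ => σ / (σ - 1 / 2) * (σ * (a + b * (σ - 1) / (σ - 1 / 2))))
      (𝓝[>] 1) (𝓝 (1 / (1 - 1 / 2) * (1 * (a + b * (1 - 1) / (1 - 1 / 2))))) := by
    refine Tendsto.mono_left (ContinuousAt.tendsto
      (f := fun σ : ℝ => σ / (σ - 1 / 2) * (σ * (a + b * (σ - 1) / (σ - 1 / 2)))) ?_)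
      nhdsWithin_le_nhds
    fun_prop (disch := norm_num)
  have hprod : ∏ p ∈ N.primeFactors, (1 - (p : ℂ)⁻¹) =
      ((∏ p ∈ N.primeFactors, (1 - (p : ℝ)⁻¹) : ℝ) : ℂ) := by simp
  have hfin := le_of_tendsto_of_tendsto hlim hlim' hle
  rw [LFunction_one_eq_re hχ1 hχ, hprod, ← Complex.ofReal_mul, Complex.norm_real] at hfin
  rw [mul_comm]
  exact (le_abs_self _).trans (hfin.trans_eq (by ring))

end DirichletSeriesComparison

/-! ### Ideals and reduction -/

section IdealClass

open scoped nonZeroDivisors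

variable {R : Type*} [CommRing R] {I J : Ideal R} {x : R}

/-- An integral ideal is invertible if it is a unit among the fractional ideals of the fraction
field. -/
abbrev IsInvertibleIdeal (I : Ideal R) : Prop :=
  IsUnit (I : FractionalIdeal R⁰ (FractionRing R))

lemma isInvertibleIdeal_mul_iff :
    IsInvertibleIdeal (I * J) ↔ IsInvertibleIdeal I ∧ IsInvertibleIdeal J := by
  simp only [IsInvertibleIdeal, FractionalIdeal.coeIdeal_mul, IsUnit.mul_iff]

variable [IsDomain R]

open Classical in
/-- The class of an integral ideal in the class group, with the junk value `1` for ideals that are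
not invertible. -/
def idealClass (I : Ideal R) : ClassGroup R :=
  if h : IsInvertibleIdeal I then ClassGroup.mk (FractionRing R) h.unit else 1

lemma isInvertibleIdeal_span_singleton (hx : x ≠ 0) :
    IsInvertibleIdeal (Ideal.span {x}) := by
  have hx' : algebraMap R (FractionRing R) x ≠ 0 := by simpa using hx
  exact ⟨toPrincipalIdeal R (FractionRing R) (Units.mk0 _ hx'),
    by simp [FractionalIdeal.coeIdeal_span_singleton]⟩

lemma idealClass_eq_idealClass_iff (hI : IsInvertibleIdeal I) (hJ : IsInvertibleIdeal J) :
    idealClass I = idealClass J ↔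
      ∃ x y : R, x ≠ 0 ∧ y ≠ 0 ∧ Ideal.span {x} * I = Ideal.span {y} * J := by
  rw [idealClass, idealClass, dif_pos hI, dif_pos hJ]
  exact ClassGroup.mk_eq_mk_of_coe_ideal hI.unit_spec hJ.unit_spec

lemma exists_idealClass_eq (c : ClassGroup R) :
    ∃ I : Ideal R, IsInvertibleIdeal I ∧ idealClass I = c := by
  refine ClassGroup.induction (FractionRing R) (fun v => ?_) c
  have hv : IsInvertibleIdeal v.1.num := FractionalIdeal.isUnit_num.2 v.isUnit
  have hden : algebraMap R (FractionRing R) v.1.den ≠ 0 := by simp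
  refine ⟨v.1.num, hv, ?_⟩
  rw [idealClass, dif_pos hv, eq_comm, ClassGroup.mk_eq_mk]
  refine ⟨Units.mk0 _ hden, Units.ext ?_⟩
  rw [Units.val_mul, coe_toPrincipalIdeal, IsUnit.unit_spec,
    ← FractionalIdeal.den_mul_self_eq_num' R⁰ (FractionRing R) v.1, mul_comm]
  rfl

end IdealClass

section SpanPair

variable {R : Type*} [CommRing R] {m c x y : R}

lemma span_pair_mul_span_pair_eq_span_singleton (h : m ∣ x * y) (hco : IsCoprime m (x + y)) :
    Ideal.span {m, x} * Ideal.span {m, y} = Ideal.span {m} := by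
  rw [Ideal.span_pair_mul_span_pair]
  refine le_antisymm (Ideal.span_le.2 ?_) ((Ideal.span_singleton_le_iff_mem _).2 ?_)
  · rintro _ (rfl | rfl | rfl | rfl) <;> rw [SetLike.mem_coe, Ideal.mem_span_singleton]
    exacts [dvd_mul_right _ _, dvd_mul_right _ _, dvd_mul_left _ _, h]
  · obtain ⟨u, v, huv⟩ := hco
    have hm : u * (m * m) + v * (m * y + x * m) = m := by linear_combination m * huv
    suffices u * (m * m) + v * (m * y + x * m) ∈ Ideal.span {m * m, m * y, x * m, x * y} by
      rwa [hm] at this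
    refine add_mem (Ideal.mul_mem_left _ _ ?_) (Ideal.mul_mem_left _ _ (add_mem ?_ ?_)) <;>
      exact Ideal.subset_span (by simp)

lemma span_singleton_mul_span_pair_of_mul_eq (h : x * y = m * c) :
    Ideal.span {y} * Ideal.span {m, x} = Ideal.span {m} * Ideal.span {c, y} := by
  simp only [Ideal.span_mul_span', Set.singleton_mul, Set.image_pair]
  rw [mul_comm y x, h, Set.pair_comm, mul_comm y m]

end SpanPair

section RootIdeal

open QuadraticAlgebra
open scoped QuadraticAlgebra

/-- The value at `t` of the minimal polynomial `X² - qX - p` of `ω ∈ QuadraticAlgebra ℤ p q`. -/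
def omegaPoly (p q t : ℤ) : ℤ := t ^ 2 - q * t - p

/-- The ideal `(m, ω - t)` of `QuadraticAlgebra ℤ p q`. It has index `|m|` if `m` divides
`omegaPoly p q t`. -/
def rootIdeal (p q m t : ℤ) : Ideal (QuadraticAlgebra ℤ p q) :=
  Ideal.span {(m : QuadraticAlgebra ℤ p q), ω - (t : QuadraticAlgebra ℤ p q)}

variable {p q m t s : ℤ} {z : QuadraticAlgebra ℤ p q}

lemma omegaPoly_sub (t : ℤ) : omegaPoly p q (q - t) = omegaPoly p q t := by
  simp only [omegaPoly]; ring

lemma four_mul_omegaPoly (t : ℤ) : 4 * omegaPoly p q t = (2 * t - q) ^ 2 - (q ^ 2 + 4 * p) := by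
  simp only [omegaPoly]; ring

lemma omega_sub_mul_omega_sub (t : ℤ) :
    (ω - (t : QuadraticAlgebra ℤ p q)) * (ω - ((q - t : ℤ) : QuadraticAlgebra ℤ p q)) =
      ((-omegaPoly p q t : ℤ) : QuadraticAlgebra ℤ p q) := by
  ext <;> simp [omegaPoly, sq] <;> ring

lemma mem_rootIdeal (h : m ∣ omegaPoly p q t) :
    z ∈ rootIdeal p q m t ↔ m ∣ z.re + t * z.im := by
  rw [rootIdeal, Ideal.mem_span_pair]
  constructor
  · rintro ⟨a, b, rfl⟩
    obtain ⟨k, hk⟩ := h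
    refine ⟨a.re + t * a.im - b.im * k, ?_⟩
    simp
    linear_combination (-b.im) * hk + b.im * (omegaPoly.eq_1 p q t)
  · rintro ⟨k, hk⟩
    refine ⟨k, z.im, ?_⟩
    ext <;> simp
    linear_combination -hk

lemma rootIdeal_neg : rootIdeal p q (-m) t = rootIdeal p q m t := by
  simp only [rootIdeal, Int.cast_neg, Ideal.span_insert, Ideal.span_singleton_neg]

lemma rootIdeal_add_mul (k : ℤ) : rootIdeal p q m (t + m * k) = rootIdeal p q m t := by
  have h : ω - ((t + m * k : ℤ) : QuadraticAlgebra ℤ p q) =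
      ω - (t : QuadraticAlgebra ℤ p q) +
        ((-k : ℤ) : QuadraticAlgebra ℤ p q) * (m : QuadraticAlgebra ℤ p q) := by
    push_cast; ring
  rw [rootIdeal, rootIdeal, h, Ideal.span_pair_add_mul_left]

lemma map_starRingEnd_rootIdeal :
    (rootIdeal p q m t).map (starRingEnd _) = rootIdeal p q m (q - t) := by
  have h : star (ω - (t : QuadraticAlgebra ℤ p q)) =
      -(ω - ((q - t : ℤ) : QuadraticAlgebra ℤ p q)) := by
    ext <;> simp
  rw [rootIdeal, Ideal.map_span, Set.image_pair, map_intCast, starRingEnd_apply, h,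
    Ideal.span_insert, Ideal.span_singleton_neg, ← Ideal.span_insert, rootIdeal]

lemma rootIdeal_mul_rootIdeal_sub (h : m ∣ omegaPoly p q t) (hm : IsCoprime m (q ^ 2 + 4 * p)) :
    rootIdeal p q m t * rootIdeal p q m (q - t) =
      Ideal.span {(m : QuadraticAlgebra ℤ p q)} := by
  refine span_pair_mul_span_pair_eq_span_singleton ?_ ?_
  · rw [omega_sub_mul_omega_sub]
    exact Int.cast_dvd_cast _ _ (dvd_neg.2 h)
  · have hsq : (ω - (t : QuadraticAlgebra ℤ p q) + (ω - ((q - t : ℤ) : QuadraticAlgebra ℤ p q))) ^ 2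
        = ((q ^ 2 + 4 * p : ℤ) : QuadraticAlgebra ℤ p q) := by
      rw [sq]; ext <;> simp [sq] <;> ring
    rw [← IsCoprime.pow_right_iff two_pos, hsq]
    exact hm.intCast

lemma span_mul_rootIdeal {c : ℤ} (h : omegaPoly p q t = m * c) :
    Ideal.span {ω - ((q - t : ℤ) : QuadraticAlgebra ℤ p q)} * rootIdeal p q m t =
      Ideal.span {(m : QuadraticAlgebra ℤ p q)} * rootIdeal p q c (q - t) := by
  rw [← rootIdeal_neg (m := c)]
  refine span_singleton_mul_span_pair_of_mul_eq ?_
  rw [omega_sub_mul_omega_sub, h]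
  push_cast; ring

lemma rootIdeal_injective (h : m ∣ omegaPoly p q t) {l : ℤ} (h' : l ∣ omegaPoly p q s)
    (ht : 0 ≤ t) (htm : t < m) (hs : 0 ≤ s) (hsl : s < l)
    (heq : rootIdeal p q m t = rootIdeal p q l s) : m = l ∧ t = s := by
  have hdvd (z : QuadraticAlgebra ℤ p q) : m ∣ z.re + t * z.im ↔ l ∣ z.re + s * z.im := by
    rw [← mem_rootIdeal h, heq, mem_rootIdeal h']
  have hml : m = l := by
    refine Int.dvd_antisymm (by lia) (by lia) ?_ ?_
    · simpa using hdvd (l : QuadraticAlgebra ℤ p q)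
    · simpa using hdvd (m : QuadraticAlgebra ℤ p q)
  subst hml
  have hts : m ∣ -s + t := by simpa using (hdvd ⟨-s, 1⟩).2
  have := Int.eq_zero_of_abs_lt_dvd hts (by rw [abs_lt]; lia)
  exact ⟨rfl, by lia⟩

end RootIdeal

section NonsquareDiscriminant

open scoped QuadraticAlgebra

variable {p q : ℤ}

lemma omegaPoly_ne_zero (hΔ : ¬ IsSquare (q ^ 2 + 4 * p)) (t : ℤ) : omegaPoly p q t ≠ 0 := by
  refine fun h => hΔ ⟨2 * t - q, ?_⟩
  linear_combination (-4) * h + four_mul_omegaPoly (p := p) (q := q) t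

lemma quadraticAlgebra_norm_eq_zero_iff (hΔ : ¬ IsSquare (q ^ 2 + 4 * p))
    {z : QuadraticAlgebra ℤ p q} : z.norm = 0 ↔ z = 0 := by
  refine ⟨fun h => ?_, fun h => by rw [h, QuadraticAlgebra.norm_zero]⟩
  rw [QuadraticAlgebra.norm_def] at h
  have hsq : (2 * z.re + q * z.im) ^ 2 = (q ^ 2 + 4 * p) * z.im ^ 2 := by
    linear_combination 4 * h
  have him : z.im = 0 := by
    by_contra him
    obtain ⟨k, hk⟩ : z.im ∣ 2 * z.re + q * z.im :=
      (Int.pow_dvd_pow_iff two_ne_zero).1 (hsq ▸ dvd_mul_left _ _)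
    refine hΔ ⟨k, mul_right_cancel₀ (pow_ne_zero 2 him) ?_⟩
    rw [← hsq, hk]
    ring
  have hre : z.re = 0 := by simpa [him] using h
  ext <;> simp [hre, him]

instance [hΔ : Fact (¬ IsSquare (q ^ 2 + 4 * p))] : IsDomain (QuadraticAlgebra ℤ p q) :=
  have : NoZeroDivisors (QuadraticAlgebra ℤ p q) := ⟨fun {a b} hab => by
    simpa [quadraticAlgebra_norm_eq_zero_iff hΔ.out] using congrArg QuadraticAlgebra.norm hab⟩
  NoZeroDivisors.to_isDomain _

lemma isInvertibleIdeal_rootIdeal {m t : ℤ} [Fact (¬ IsSquare (q ^ 2 + 4 * p))]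
    (h : m ∣ omegaPoly p q t) (hm : IsCoprime m (q ^ 2 + 4 * p)) (hm0 : m ≠ 0) :
    IsInvertibleIdeal (rootIdeal p q m t) := by
  have : IsInvertibleIdeal (rootIdeal p q m t * rootIdeal p q m (q - t)) := by
    rw [rootIdeal_mul_rootIdeal_sub h hm]
    exact isInvertibleIdeal_span_singleton (by simpa using hm0)
  exact (isInvertibleIdeal_mul_iff.1 this).1

end NonsquareDiscriminant

section NormalForm

open QuadraticAlgebra
open scoped QuadraticAlgebra

variable {p q : ℤ}

/-- The ideal of `ℤ` formed by the coefficients of `ω` in the elements of an ideal `I`. -/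
def imIdeal (I : Ideal (QuadraticAlgebra ℤ p q)) : Ideal ℤ where
  carrier := {y | ∃ z ∈ I, z.im = y}
  add_mem' := by
    rintro _ _ ⟨z, hz, rfl⟩ ⟨w, hw, rfl⟩
    exact ⟨z + w, I.add_mem hz hw, by simp⟩
  zero_mem' := ⟨0, I.zero_mem, by simp⟩
  smul_mem' := by
    rintro c _ ⟨z, hz, rfl⟩
    exact ⟨c * z, I.mul_mem_left _ hz, by simp⟩

variable {I : Ideal (QuadraticAlgebra ℤ p q)} {g : ℤ}

-- `(ω z).im = z.re + q * z.im`, so `g` divides `z.re` because it divides `z.im` and `(ω z).im`.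
lemma exists_eq_mul_of_mem (hg : imIdeal I = Ideal.span {g}) {z : QuadraticAlgebra ℤ p q}
    (hz : z ∈ I) : ∃ x : QuadraticAlgebra ℤ p q, z = g * x := by
  have him {z} (hz : z ∈ I) : g ∣ z.im := by
    rw [← Ideal.mem_span_singleton, ← hg]
    exact ⟨z, hz, rfl⟩
  have hω : g ∣ z.re + q * z.im := by simpa using him (I.mul_mem_left ω hz)
  obtain ⟨l, hl⟩ := him hz
  obtain ⟨r, hr⟩ := (Int.dvd_add_left ((him hz).mul_left _)).1 hω
  exact ⟨⟨r, l⟩, by ext <;> simp [hr, hl]⟩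

lemma exists_eq_span_mul_rootIdeal (hΔ : ¬ IsSquare (q ^ 2 + 4 * p)) (hI : I ≠ ⊥) :
    ∃ g m t : ℤ, g ≠ 0 ∧ m ≠ 0 ∧ m ∣ omegaPoly p q t ∧
      I = Ideal.span {(g : QuadraticAlgebra ℤ p q)} * rootIdeal p q m t := by
  obtain ⟨g, hg⟩ := (IsPrincipalIdealRing.principal (imIdeal I)).principal
  obtain ⟨m', hm'⟩ := (IsPrincipalIdealRing.principal
    (I.comap (Int.castRingHom (QuadraticAlgebra ℤ p q)))).principal
  have hint {k : ℤ} : (k : QuadraticAlgebra ℤ p q) ∈ I ↔ m' ∣ k := by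
    rw [← Ideal.mem_span_singleton, ← Ideal.submodule_span_eq, ← hm']
    rfl
  have hg0 : g ≠ 0 := by
    rintro rfl
    refine hI ((Submodule.eq_bot_iff I).2 fun z hz => ?_)
    obtain ⟨x, rfl⟩ := exists_eq_mul_of_mem hg hz
    simp
  obtain ⟨w, hw, hwg⟩ : ∃ z ∈ I, z.im = g :=
    show g ∈ imIdeal I from hg ▸ Ideal.mem_span_singleton_self g
  obtain ⟨x, rfl⟩ := exists_eq_mul_of_mem hg hw
  obtain ⟨y, hy⟩ := exists_eq_mul_of_mem hg (hint.2 dvd_rfl)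
  have hx : x = ω - ((-x.re : ℤ) : QuadraticAlgebra ℤ p q) := by
    ext
    · simp
    · simpa [hg0] using hwg
  have hm : m' = g * y.re := by simpa using congrArg re hy
  have hdvd {k : ℤ} (hk : ((g * k : ℤ) : QuadraticAlgebra ℤ p q) ∈ I) : y.re ∣ k := by
    rw [hint, hm] at hk
    exact Int.dvd_of_mul_dvd_mul_left hg0 hk
  have hf : y.re ∣ omegaPoly p q (-x.re) := by
    rw [← dvd_neg]
    refine hdvd ?_
    rw [Int.cast_mul, ← omega_sub_mul_omega_sub, ← hx, ← mul_assoc]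
    exact I.mul_mem_right _ hw
  refine ⟨g, y.re, -x.re, hg0, fun h0 => ?_, hf, le_antisymm (fun z hz => ?_) ?_⟩
  · exact omegaPoly_ne_zero hΔ _ (zero_dvd_iff.1 (h0 ▸ hf))
  · obtain ⟨v, rfl⟩ := exists_eq_mul_of_mem hg hz
    refine Ideal.mem_span_singleton_mul.2 ⟨v, (mem_rootIdeal hf).2 (hdvd ?_), rfl⟩
    have him : x.im = 1 := by simpa using congrArg im hx
    convert I.sub_mem hz (I.mul_mem_left v.im hw)
    ext <;> simp [him] <;> ring
  · rw [rootIdeal, Ideal.span_mul_span', Set.singleton_mul, Set.image_pair, Ideal.span_le,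
      Set.pair_subset_iff, ← Int.cast_mul, ← hm, ← hx]
    exact ⟨hint.2 dvd_rfl, hw⟩

end NormalForm

section Reduction

open scoped QuadraticAlgebra

variable {p q : ℤ}

lemma exists_abs_two_mul_sub_le {m : ℤ} (hm : 0 < m) (q t : ℤ) :
    ∃ k, |2 * (t + m * k) - q| ≤ m := by
  refine ⟨-((2 * t - q + m) / (2 * m)), ?_⟩
  have h1 := Int.emod_nonneg (2 * t - q + m) (by lia : 2 * m ≠ 0)
  have h2 := Int.emod_lt_of_pos (2 * t - q + m) (by lia : 0 < 2 * m)
  rw [Int.emod_def] at h1 h2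
  rw [abs_le]
  constructor <;> linarith

lemma exists_lt_span_mul_rootIdeal_eq (hΔ : ¬ IsSquare (q ^ 2 + 4 * p))
    (hpos : 0 ≤ q ^ 2 + 4 * p) {m t : ℤ} (hm : 0 < m) (h : m ∣ omegaPoly p q t)
    (ht : |2 * t - q| ≤ m) (hf : 0 ≤ omegaPoly p q t) :
    ∃ c : ℤ, 0 < c ∧ c < m ∧ c ∣ omegaPoly p q (q - t) ∧ ∃ x : QuadraticAlgebra ℤ p q,
      x ≠ 0 ∧ Ideal.span {x} * rootIdeal p q m t =
        Ideal.span {(m : QuadraticAlgebra ℤ p q)} * rootIdeal p q c (q - t) := by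
  have hf0 : 0 < omegaPoly p q t := hf.lt_of_ne (omegaPoly_ne_zero hΔ t).symm
  obtain ⟨c, hc⟩ := h
  have hc0 : 0 < c := pos_of_mul_pos_right (hc ▸ hf0) hm.le
  have hcm : c < m := by
    have hsq : (2 * t - q) ^ 2 ≤ m ^ 2 := sq_le_sq.2 (ht.trans (le_abs_self m))
    have hdisc := four_mul_omegaPoly (p := p) (q := q) t
    nlinarith
  refine ⟨c, hc0, hcm, omegaPoly_sub (p := p) t ▸ hc ▸ dvd_mul_left c m, _, fun h0 => ?_,
    span_mul_rootIdeal hc⟩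
  simpa using congrArg QuadraticAlgebra.im h0

-- Gauss reduction: as long as the value of `omegaPoly` stays positive, the step above lowers `m`.
lemma exists_span_mul_rootIdeal_eq_of_neg (hΔ : ¬ IsSquare (q ^ 2 + 4 * p))
    (hpos : 0 ≤ q ^ 2 + 4 * p) {m t : ℤ} (hm : 0 < m) (h : m ∣ omegaPoly p q t) :
    ∃ a s : ℤ, 0 < a ∧ a ∣ omegaPoly p q s ∧ omegaPoly p q s < 0 ∧
      ∃ x y : QuadraticAlgebra ℤ p q, x ≠ 0 ∧ y ≠ 0 ∧
        Ideal.span {x} * rootIdeal p q m t = Ideal.span {y} * rootIdeal p q a s := by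
  have := Fact.mk hΔ
  induction hk : m.toNat using Nat.strong_induction_on generalizing m t with
  | _ k ih =>
    subst hk
    obtain ⟨j, hj⟩ := exists_abs_two_mul_sub_le hm q t
    have hs : m ∣ omegaPoly p q (t + m * j) := by
      have : omegaPoly p q (t + m * j) = omegaPoly p q t + m * (j * (2 * t + m * j - q)) := by
        simp only [omegaPoly]; ring
      exact this ▸ dvd_add h (dvd_mul_right _ _)
    rw [← rootIdeal_add_mul j]
    generalize t + m * j = s at hj hs
    obtain hneg | hnonneg := lt_or_ge (omegaPoly p q s) 0
    · exact ⟨m, s, hm, hs, hneg, 1, 1, one_ne_zero, one_ne_zero, rfl⟩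
    obtain ⟨c, hc0, hcm, hc, x, hx, hxc⟩ :=
      exists_lt_span_mul_rootIdeal_eq hΔ hpos hm hs hj hnonneg
    obtain ⟨a, r, ha, har, hr, u, v, hu, hv, huv⟩ := ih _ (by lia) hc0 hc rfl
    refine ⟨a, r, ha, har, hr, u * x, m * v, mul_ne_zero hu hx,
      mul_ne_zero (by simpa using hm.ne') hv, ?_⟩
    rw [← Ideal.span_singleton_mul_span_singleton, mul_assoc, hxc, mul_left_comm, huv,
      ← mul_assoc, Ideal.span_singleton_mul_span_singleton]

theorem exists_idealClass_rootIdeal_eq [hΔ : Fact (¬ IsSquare (q ^ 2 + 4 * p))]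
    (hpos : 0 ≤ q ^ 2 + 4 * p) (c : ClassGroup (QuadraticAlgebra ℤ p q)) :
    ∃ a t : ℤ, 0 < a ∧ a ∣ omegaPoly p q t ∧ omegaPoly p q t < 0 ∧
      idealClass (rootIdeal p q a t) = c := by
  obtain ⟨I, hI, rfl⟩ := exists_idealClass_eq c
  have hI0 : I ≠ ⊥ := by
    rintro rfl
    simp [IsInvertibleIdeal] at hI
  obtain ⟨g, m, t, hg, hm, hmt, rfl⟩ := exists_eq_span_mul_rootIdeal hΔ.out hI0
  have habs : rootIdeal p q |m| t = rootIdeal p q m t := by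
    obtain h | h := abs_choice m <;> simp only [h, rootIdeal_neg]
  obtain ⟨a, s, ha, has, hs, x, y, hx, hy, hxy⟩ :=
    exists_span_mul_rootIdeal_eq_of_neg hΔ.out hpos (abs_pos.2 hm) ((abs_dvd _ _).2 hmt)
  rw [habs] at hxy
  have hJ : IsInvertibleIdeal (rootIdeal p q a s) := by
    refine (isInvertibleIdeal_mul_iff (I := Ideal.span {y})).1 (hxy ▸ ?_) |>.2
    exact isInvertibleIdeal_mul_iff.2
      ⟨isInvertibleIdeal_span_singleton hx, (isInvertibleIdeal_mul_iff.1 hI).2⟩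
  refine ⟨a, s, ha, has, hs, (idealClass_eq_idealClass_iff hJ hI).2 ⟨g * y, x, ?_, hx, ?_⟩⟩
  · exact mul_ne_zero (by simpa using hg) hy
  · rw [← Ideal.span_singleton_mul_span_singleton, mul_assoc, ← hxy, mul_left_comm]

end Reduction

section UpperBound

variable {p q : ℤ} {T : Finset ℤ}

lemma surjective_idealClass_rootIdeal [Fact (¬ IsSquare (q ^ 2 + 4 * p))]
    (hpos : 0 ≤ q ^ 2 + 4 * p) (hT : ∀ t, omegaPoly p q t < 0 → t ∈ T) :
    Function.Surjective fun x : T.sigma fun t => (omegaPoly p q t).natAbs.divisors =>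
      idealClass (rootIdeal p q x.1.2 x.1.1) := by
  intro c
  obtain ⟨a, t, ha, hat, ht, rfl⟩ := exists_idealClass_rootIdeal_eq hpos c
  lift a to ℕ using ha.le
  exact ⟨⟨⟨t, a⟩, by simp [hT t ht, ← Int.natCast_dvd, hat, ht.ne]⟩, rfl⟩

lemma finite_classGroup_and_card_le [Fact (¬ IsSquare (q ^ 2 + 4 * p))]
    (hpos : 0 ≤ q ^ 2 + 4 * p) (hT : ∀ t, omegaPoly p q t < 0 → t ∈ T) :
    Finite (ClassGroup (QuadraticAlgebra ℤ p q)) ∧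
      Nat.card (ClassGroup (QuadraticAlgebra ℤ p q)) ≤
        ∑ t ∈ T, (omegaPoly p q t).natAbs.divisors.card := by
  have hsurj := surjective_idealClass_rootIdeal hpos hT
  refine ⟨Finite.of_surjective _ hsurj, (Nat.card_le_card_of_surjective _ hsurj).trans_eq ?_⟩
  rw [Nat.card_eq_fintype_card, Fintype.card_coe, Finset.card_sigma]

variable {n : ℤ}

lemma not_isSquare_sq_sub_four (hn : 3 ≤ n) : ¬ IsSquare (n ^ 2 + 4 * (-1)) := by
  rintro ⟨k, hk⟩
  rw [← abs_mul_abs_self] at hk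
  have h1 : |k| < n := by nlinarith [abs_nonneg k]
  have h2 : n - 1 < |k| := by nlinarith [abs_nonneg k]
  lia

instance [hn : Fact (3 ≤ n)] : Fact (¬ IsSquare (n ^ 2 + 4 * (-1))) :=
  ⟨not_isSquare_sq_sub_four hn.out⟩

/-- The quadratic order `ℤ[ω]`, `ω² = nω - 1`, of discriminant `n² - 4`; its generator `ω` is a
unit of norm `1`. -/
abbrev NormOneOrder (n : ℤ) := QuadraticAlgebra ℤ (-1) n

lemma mem_Ioo_of_omegaPoly_neg (hn : 3 ≤ n) {t : ℤ} (ht : omegaPoly (-1) n t < 0) :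
    t ∈ Finset.Ioo 0 n := by
  rw [omegaPoly] at ht
  rw [Finset.mem_Ioo]
  constructor <;> nlinarith

lemma natAbs_omegaPoly_le {t : ℤ} (ht : t ∈ Finset.Ioo 0 n) :
    ((omegaPoly (-1) n t).natAbs : ℝ) ≤ (n : ℝ) ^ 2 := by
  rw [Finset.mem_Ioo] at ht
  have h : |omegaPoly (-1) n t| ≤ n ^ 2 := by
    rw [omegaPoly, abs_le]
    constructor <;> nlinarith
  rw [Nat.cast_natAbs]
  exact_mod_cast h

instance [hn : Fact (3 ≤ n)] : Finite (ClassGroup (NormOneOrder n)) :=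
  (finite_classGroup_and_card_le (by nlinarith [hn.out])
    fun _ => mem_Ioo_of_omegaPoly_neg hn.out).1

theorem exists_card_classGroup_le {δ : ℝ} (hδ : 0 < δ) :
    ∃ C : ℝ, 0 < C ∧ ∀ (n : ℤ) [Fact (3 ≤ n)],
      (Nat.card (ClassGroup (NormOneOrder n)) : ℝ) ≤ C * (n : ℝ) ^ (1 + 2 * δ) := by
  obtain ⟨C, hC, hdiv⟩ := exists_card_divisors_le hδ
  refine ⟨C, hC, fun n hn => ?_⟩
  have hn0 : (0 : ℝ) < n := by exact_mod_cast (by linarith [hn.out] : 0 < n)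
  calc (Nat.card (ClassGroup (NormOneOrder n)) : ℝ)
      ≤ ∑ t ∈ Finset.Ioo 0 n, ((omegaPoly (-1) n t).natAbs.divisors.card : ℝ) := by
        exact_mod_cast (finite_classGroup_and_card_le (by nlinarith [hn.out])
          fun _ => mem_Ioo_of_omegaPoly_neg hn.out).2
    _ ≤ ∑ _t ∈ Finset.Ioo 0 n, C * (n : ℝ) ^ (2 * δ) := by
        refine Finset.sum_le_sum fun t ht => (hdiv _ ?_).trans ?_
        · exact Int.natAbs_ne_zero.2 (omegaPoly_ne_zero (not_isSquare_sq_sub_four hn.out) t)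
        · rw [Real.rpow_mul hn0.le, Real.rpow_two]
          gcongr
          exact natAbs_omegaPoly_le ht
    _ = ((n - 1 : ℤ) : ℝ) * (C * (n : ℝ) ^ (2 * δ)) := by
        rw [Finset.sum_const, Int.card_Ioo, nsmul_eq_mul, sub_zero, ← Int.cast_natCast,
          Int.toNat_of_nonneg (by linarith [hn.out])]
    _ ≤ n * (C * (n : ℝ) ^ (2 * δ)) := by
        gcongr
        linarith
    _ = C * (n : ℝ) ^ (1 + 2 * δ) := by
        rw [Real.rpow_add hn0, Real.rpow_one]
        ring

end UpperBound

/-! ### Ideals in a fixed class -/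

section EqualClasses

open QuadraticAlgebra
open scoped QuadraticAlgebra

variable {p q a t a₀ t₀ : ℤ} {α : QuadraticAlgebra ℤ p q}

lemma exists_span_mul_rootIdeal_eq_of_idealClass_eq [Fact (¬ IsSquare (q ^ 2 + 4 * p))]
    (h : IsInvertibleIdeal (rootIdeal p q a t)) (h₀ : IsInvertibleIdeal (rootIdeal p q a₀ t₀))
    (ha₀ : a₀ ≠ 0) (heq : idealClass (rootIdeal p q a₀ t₀) = idealClass (rootIdeal p q a t)) :
    ∃ α : QuadraticAlgebra ℤ p q, α ≠ 0 ∧ Ideal.span {α} * rootIdeal p q a₀ t₀ =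
      Ideal.span {(a₀ : QuadraticAlgebra ℤ p q)} * rootIdeal p q a t := by
  obtain ⟨x, y, hx, hy, hxy⟩ := (idealClass_eq_idealClass_iff h₀ h).1 heq
  have hmem : x * (a₀ : QuadraticAlgebra ℤ p q) ∈ Ideal.span {y} * rootIdeal p q a t :=
    hxy ▸ Ideal.mul_mem_mul (Ideal.mem_span_singleton_self x) (Ideal.subset_span (.inl rfl))
  obtain ⟨α, -, hα⟩ := Ideal.mem_span_singleton_mul.1 hmem
  refine ⟨α, ?_, ?_⟩
  · rintro rfl
    exact mul_ne_zero hx (by simpa using ha₀) (hα.symm.trans (mul_zero y))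
  · rw [← Ideal.span_singleton_mul_right_inj hy, ← mul_assoc,
      Ideal.span_singleton_mul_span_singleton, hα, ← Ideal.span_singleton_mul_span_singleton,
      mul_right_comm, hxy, mul_right_comm, mul_assoc]

-- `a₀` divides `α * (ω - t₀)`, in particular its coefficient at `ω`.
lemma dvd_of_span_mul_rootIdeal_eq (heq : Ideal.span {α} * rootIdeal p q a₀ t₀ =
      Ideal.span {(a₀ : QuadraticAlgebra ℤ p q)} * rootIdeal p q a t) :
    a₀ ∣ α.re + (q - t₀) * α.im := by
  have hmem : α * (ω - (t₀ : QuadraticAlgebra ℤ p q)) ∈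
      Ideal.span {(a₀ : QuadraticAlgebra ℤ p q)} * rootIdeal p q a t :=
    heq ▸ Ideal.mul_mem_mul (Ideal.mem_span_singleton_self α) (Ideal.subset_span (.inr rfl))
  obtain ⟨z, -, hz⟩ := Ideal.mem_span_singleton_mul.1 hmem
  have him : a₀ * z.im = α.re + -(α.im * t₀) + q * α.im := by simpa using congrArg im hz
  exact ⟨z.im, by linear_combination -him⟩

-- Multiply the equality of ideals by its conjugate.
lemma span_norm_mul_eq (h : a ∣ omegaPoly p q t) (ha : IsCoprime a (q ^ 2 + 4 * p))
    (h₀ : a₀ ∣ omegaPoly p q t₀) (hcop₀ : IsCoprime a₀ (q ^ 2 + 4 * p))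
    (heq : Ideal.span {α} * rootIdeal p q a₀ t₀ =
      Ideal.span {(a₀ : QuadraticAlgebra ℤ p q)} * rootIdeal p q a t) :
    Ideal.span {((α.norm * a₀ : ℤ) : QuadraticAlgebra ℤ p q)} =
      Ideal.span {((a₀ * a₀ * a : ℤ) : QuadraticAlgebra ℤ p q)} := by
  have hconj := congrArg (Ideal.map (starRingEnd (QuadraticAlgebra ℤ p q))) heq
  rw [Ideal.map_mul, Ideal.map_mul, map_starRingEnd_rootIdeal, map_starRingEnd_rootIdeal,
    Ideal.map_span, Ideal.map_span, Set.image_singleton, Set.image_singleton, map_intCast,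
    starRingEnd_apply] at hconj
  have hmul := congrArg₂ (· * ·) heq hconj
  simp only [mul_mul_mul_comm _ (rootIdeal p q _ _), rootIdeal_mul_rootIdeal_sub h ha,
    rootIdeal_mul_rootIdeal_sub h₀ hcop₀, Ideal.span_singleton_mul_span_singleton,
    ← algebraMap_norm_eq_mul_star, algebraMap_int_eq, eq_intCast] at hmul
  exact_mod_cast hmul

lemma abs_norm_le_of_span_mul_rootIdeal_eq (h : a ∣ omegaPoly p q t)
    (ha : IsCoprime a (q ^ 2 + 4 * p)) (ha0 : a ≠ 0) (h₀ : a₀ ∣ omegaPoly p q t₀)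
    (hcop₀ : IsCoprime a₀ (q ^ 2 + 4 * p)) (ha₀ : a₀ ≠ 0)
    (heq : Ideal.span {α} * rootIdeal p q a₀ t₀ =
      Ideal.span {(a₀ : QuadraticAlgebra ℤ p q)} * rootIdeal p q a t) :
    |α.norm| ≤ |a₀ * a| := by
  have hdvd : ((α.norm * a₀ : ℤ) : QuadraticAlgebra ℤ p q) ∣ ((a₀ * a₀ * a : ℤ) : _) := by
    rw [← Ideal.mem_span_singleton, span_norm_mul_eq h ha h₀ hcop₀ heq]
    exact Ideal.mem_span_singleton_self _
  obtain ⟨z, hz⟩ := hdvd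
  have hre : a₀ * a₀ * a = α.norm * a₀ * z.re := by simpa using congrArg re hz
  refine Int.le_of_dvd (abs_pos.2 (mul_ne_zero ha₀ ha0)) ((abs_dvd_abs _ _).2 ⟨z.re, ?_⟩)
  exact mul_left_cancel₀ ha₀ (by linear_combination hre)

end EqualClasses

section RealEmbedding

open QuadraticAlgebra
open scoped QuadraticAlgebra

variable {n : ℤ} {θ ε : ℝ} {α : NormOneOrder n}

/-- The homomorphism from `ℤ[ω]`, `ω² = nω - 1`, to `ℝ` that sends `ω` to a given real root `θ` of
`X² - nX + 1`. -/
def realEmbedding (h : θ ^ 2 = n * θ - 1) : NormOneOrder n →ₐ[ℤ] ℝ :=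
  lift ⟨θ, by simp only [zsmul_eq_mul]; push_cast; linear_combination h⟩

lemma realEmbedding_apply (h : θ ^ 2 = n * θ - 1) (z : NormOneOrder n) :
    realEmbedding h z = z.re + z.im * θ := by
  simp [realEmbedding, lift_apply_apply]

lemma realEmbedding_mul_realEmbedding_inv (h : ε ^ 2 = n * ε - 1)
    (h' : ε⁻¹ ^ 2 = n * ε⁻¹ - 1) (z : NormOneOrder n) :
    realEmbedding h z * realEmbedding h' z = z.norm := by
  have hε : ε ≠ 0 := by
    rintro rfl
    simp at h
  have hn : ε + ε⁻¹ = n := by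
    field_simp
    linear_combination h
  rw [realEmbedding_apply, realEmbedding_apply, norm_def]
  push_cast
  linear_combination (z.re * z.im : ℝ) * hn + (z.im ^ 2 : ℝ) * mul_inv_cancel₀ hε

lemma realEmbedding_sub_realEmbedding_inv (h : ε ^ 2 = n * ε - 1)
    (h' : ε⁻¹ ^ 2 = n * ε⁻¹ - 1) (z : NormOneOrder n) :
    realEmbedding h z - realEmbedding h' z = z.im * (ε - ε⁻¹) := by
  rw [realEmbedding_apply, realEmbedding_apply]
  ring

/-- The generator `ω` of `ℤ[ω]`, `ω² = nω - 1`, as a unit. -/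
def omegaUnit (n : ℤ) : (NormOneOrder n)ˣ :=
  .mkOfMulEqOne ω ⟨n, -1⟩ (by ext <;> simp)

lemma realEmbedding_omegaUnit_zpow (h : θ ^ 2 = n * θ - 1) (k : ℤ) :
    realEmbedding h ((omegaUnit n ^ k : (NormOneOrder n)ˣ) : NormOneOrder n) = θ ^ k := by
  have hω : realEmbedding h (omegaUnit n : NormOneOrder n) = θ := by
    simp [omegaUnit, realEmbedding_apply]
  calc realEmbedding h ((omegaUnit n ^ k : (NormOneOrder n)ˣ) : NormOneOrder n)
      = Units.map (realEmbedding h : NormOneOrder n →* ℝ) (omegaUnit n ^ k) := rfl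
    _ = θ ^ k := by rw [map_zpow, Units.val_zpow_eq_zpow_val, Units.coe_map, MonoidHom.coe_coe, hω]

lemma exists_zpow_mul_mem_Ico {u v : ℝ} (hε : 1 < ε) (hu : 0 < u) (hv : 0 < v) :
    ∃ k : ℤ, u * ε ^ k ∈ Set.Ico (v * ε⁻¹ ^ k) (ε ^ 2 * (v * ε⁻¹ ^ k)) := by
  have hε0 : 0 < ε := one_pos.trans hε
  obtain ⟨k, hk, hk'⟩ := exists_mem_Ico_zpow (div_pos hu hv) (one_lt_pow₀ hε two_ne_zero)
  rw [le_div_iff₀ hv, sq, mul_zpow] at hk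
  rw [div_lt_iff₀ hv, zpow_add_one₀ (by positivity), sq, mul_zpow] at hk'
  have hεk : 0 < ε ^ k := zpow_pos hε0 k
  refine ⟨-k, ?_, ?_⟩ <;> simp only [inv_zpow, zpow_neg, inv_inv, ← div_eq_mul_inv]
  · rw [le_div_iff₀ hεk]
    linarith
  · rw [div_lt_iff₀ hεk]
    linarith

lemma exists_unit_mul_abs_mem_Ico (hε : 1 < ε) (h : ε ^ 2 = n * ε - 1)
    (h' : ε⁻¹ ^ 2 = n * ε⁻¹ - 1) (hα : α.norm ≠ 0) :
    ∃ u : (NormOneOrder n)ˣ, |realEmbedding h (α * u)| ∈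
      Set.Ico |realEmbedding h' (α * u)| (ε ^ 2 * |realEmbedding h' (α * u)|) := by
  have hmul : realEmbedding h α * realEmbedding h' α ≠ 0 := by
    rw [realEmbedding_mul_realEmbedding_inv]
    exact_mod_cast hα
  obtain ⟨k, hk⟩ := exists_zpow_mul_mem_Ico hε (abs_pos.2 (left_ne_zero_of_mul hmul))
    (abs_pos.2 (right_ne_zero_of_mul hmul))
  have hε0 : 0 ≤ ε := by linarith
  refine ⟨omegaUnit n ^ k, ?_⟩
  rwa [map_mul, map_mul, realEmbedding_omegaUnit_zpow, realEmbedding_omegaUnit_zpow, abs_mul,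
    abs_mul, abs_of_nonneg (zpow_nonneg hε0 k), abs_of_nonneg (zpow_nonneg (inv_nonneg.2 hε0) k)]

end RealEmbedding

section LatticePoints

lemma card_Icc_ceil_floor_le {x y : ℝ} (h : x ≤ y) :
    ((Finset.Icc ⌈x⌉ ⌊y⌋).card : ℝ) ≤ y - x + 1 := by
  rw [Int.card_Icc, ← Int.cast_natCast, Int.toNat_eq_max, Int.cast_max]
  push_cast
  exact max_le (by linarith [Int.floor_le y, Int.le_ceil x]) (by linarith)

lemma exists_finset_of_dvd_of_abs_add_le {a : ℤ} (ha : 0 < a) (b : ℤ) (c : ℝ) {V : ℝ}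
    (hV : 0 ≤ V) : ∃ S : Finset ℤ, (∀ x : ℤ, a ∣ x + b → |x + c| ≤ V → x ∈ S) ∧
      (S.card : ℝ) ≤ 2 * V / a + 1 := by
  have ha' : (0 : ℝ) < a := by exact_mod_cast ha
  refine ⟨(Finset.Icc ⌈(b - c - V) / a⌉ ⌊(b - c + V) / a⌋).image fun k => a * k - b, ?_, ?_⟩
  · rintro x ⟨k, hk⟩ hx
    obtain rfl : x = a * k - b := by linarith
    push_cast at hx
    rw [abs_le] at hx
    refine Finset.mem_image_of_mem _ (Finset.mem_Icc.2 ⟨Int.ceil_le.2 ?_, Int.le_floor.2 ?_⟩)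
    · rw [div_le_iff₀ ha']
      linarith
    · rw [le_div_iff₀ ha']
      linarith
  · calc _ ≤ _ := Nat.cast_le.2 Finset.card_image_le
      _ ≤ (b - c + V) / a - (b - c - V) / a + 1 :=
        card_Icc_ceil_floor_le (by gcongr; linarith)
      _ = 2 * V / a + 1 := by ring

lemma exists_finset_lattice_box {p q a : ℤ} (ha : 0 < a) (b : ℤ) (θ : ℝ) {B V : ℝ} (hB : 0 ≤ B)
    (hV : 0 ≤ V) : ∃ S : Finset (QuadraticAlgebra ℤ p q),
      (∀ α, a ∣ α.re + b * α.im → |(α.im : ℝ)| ≤ B → |α.re + α.im * θ| ≤ V → α ∈ S) ∧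
      (S.card : ℝ) ≤ (2 * B + 1) * (2 * V / a + 1) := by
  choose S hS hcard using fun y : ℤ => exists_finset_of_dvd_of_abs_add_le ha (b * y) (y * θ) hV
  refine ⟨(Finset.Icc ⌈-B⌉ ⌊B⌋).biUnion fun y => (S y).image fun x => ⟨x, y⟩,
    fun α hα him hre => ?_, ?_⟩
  · rw [abs_le] at him
    exact Finset.mem_biUnion.2 ⟨α.im,
      Finset.mem_Icc.2 ⟨Int.ceil_le.2 him.1, Int.le_floor.2 him.2⟩,
      Finset.mem_image_of_mem _ (hS _ _ hα hre)⟩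
  · calc _ ≤ ∑ y ∈ Finset.Icc ⌈-B⌉ ⌊B⌋, ((S y).card : ℝ) := by
          exact_mod_cast Finset.card_biUnion_le.trans
            (Finset.sum_le_sum fun y _ => Finset.card_image_le)
      _ ≤ (Finset.Icc ⌈-B⌉ ⌊B⌋).card * (2 * V / a + 1) := by
          rw [← nsmul_eq_mul]
          exact Finset.sum_le_card_nsmul _ _ _ fun y _ => hcard y
      _ ≤ (2 * B + 1) * (2 * V / a + 1) := by
          gcongr
          exact (card_Icc_ceil_floor_le (by linarith)).trans_eq (by ring)

lemma exists_dyadic_bound {u v T : ℝ} {J : ℕ} (hv : 0 ≤ v) (h : u ∈ Set.Ico v (4 ^ J * v))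
    (hT : u * v ≤ T) : ∃ j < J, u ≤ 2 ^ (j + 1) * √T ∧ v ≤ √T / 2 ^ j := by
  have hv0 : 0 < v := by
    refine hv.lt_of_ne ?_
    rintro rfl
    simp at h
  have hu0 : 0 < u := hv0.trans_le h.1
  obtain ⟨j, hj, hj'⟩ :=
    exists_nat_pow_near ((one_le_div hv0).2 h.1) (by norm_num : (1 : ℝ) < 4)
  rw [le_div_iff₀ hv0] at hj
  rw [div_lt_iff₀ hv0] at hj'
  have hs : √T ^ 2 = T := Real.sq_sqrt (by nlinarith)
  have h4 (i : ℕ) : ((2 : ℝ) ^ i) ^ 2 = 4 ^ i := by rw [pow_right_comm]; norm_num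
  refine ⟨j, ?_, ?_, ?_⟩
  · exact (pow_lt_pow_iff_right₀ (by norm_num)).1
      (lt_of_mul_lt_mul_right (hj.trans_lt h.2) hv)
  · rw [← pow_le_pow_iff_left₀ hu0.le (by positivity) two_ne_zero, mul_pow, hs, h4]
    calc u ^ 2 = u * u := sq u
      _ ≤ u * (4 ^ (j + 1) * v) := by gcongr
      _ = 4 ^ (j + 1) * (u * v) := by ring
      _ ≤ 4 ^ (j + 1) * T := by gcongr
  · rw [le_div_iff₀ (by positivity),
      ← pow_le_pow_iff_left₀ (by positivity) (by positivity) two_ne_zero, mul_pow, hs, h4]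
    calc v ^ 2 * 4 ^ j = v * (4 ^ j * v) := by ring
      _ ≤ v * u := by gcongr
      _ ≤ T := by linarith

variable {n a : ℤ} {ε : ℝ}

-- The points are covered by `J` boxes, one for each dyadic range of `|e α| / |e' α|`.
lemma exists_finset_of_abs_norm_le (hε : 1 < ε) (h : ε ^ 2 = n * ε - 1)
    (h' : ε⁻¹ ^ 2 = n * ε⁻¹ - 1) {J : ℕ} (hJ : ε ^ 2 ≤ 4 ^ J) (ha : 0 < a) (b : ℤ) (T : ℝ) :
    ∃ S : Finset (NormOneOrder n),
      (∀ α, a ∣ α.re + b * α.im → |realEmbedding h α| ∈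
        Set.Ico |realEmbedding h' α| (ε ^ 2 * |realEmbedding h' α|) →
        |(α.norm : ℝ)| ≤ T → α ∈ S) ∧
      (S.card : ℝ) ≤ ∑ j ∈ Finset.range J,
        (2 * (2 ^ (j + 2) * √T / (ε - ε⁻¹)) + 1) * (2 * (√T / 2 ^ j) / a + 1) := by
  have hr : 0 < ε - ε⁻¹ := sub_pos.2 ((inv_lt_one_of_one_lt₀ hε).trans hε)
  choose S hS hcard using fun j : ℕ =>
    exists_finset_lattice_box (p := -1) (q := n) ha b ε⁻¹
      (B := 2 ^ (j + 2) * √T / (ε - ε⁻¹)) (V := √T / 2 ^ j) (by positivity) (by positivity)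
  refine ⟨(Finset.range J).biUnion S, fun α hα hIco hT => ?_, ?_⟩
  · rw [← realEmbedding_mul_realEmbedding_inv h h', abs_mul] at hT
    obtain ⟨j, hj, hu, hv⟩ := exists_dyadic_bound (abs_nonneg _)
      ⟨hIco.1, hIco.2.trans_le (by gcongr)⟩ hT
    refine Finset.mem_biUnion.2 ⟨j, Finset.mem_range.2 hj, hS j α hα ?_ ?_⟩
    · rw [le_div_iff₀ hr]
      calc |(α.im : ℝ)| * (ε - ε⁻¹) = |realEmbedding h α - realEmbedding h' α| := by
            rw [realEmbedding_sub_realEmbedding_inv, abs_mul, abs_of_pos hr]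
        _ ≤ |realEmbedding h α| + |realEmbedding h' α| := abs_sub _ _
        _ ≤ 2 ^ (j + 1) * √T + 2 ^ (j + 1) * √T := add_le_add hu (hIco.1.trans hu)
        _ = 2 ^ (j + 2) * √T := by ring
    · rwa [← realEmbedding_apply h']
  · calc _ ≤ ∑ j ∈ Finset.range J, ((S j).card : ℝ) := by
          exact_mod_cast Finset.card_biUnion_le
      _ ≤ _ := Finset.sum_le_sum fun j _ => hcard j

-- Multiply out; only the product of the two leading terms is linear in `X`.
lemma exists_sum_mul_sqrt_mul_le {r a : ℝ} (hr : 0 < r) (ha : 0 < a) (J : ℕ) :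
    ∃ B : ℝ, 0 ≤ B ∧ ∀ X : ℝ, 1 ≤ X → ∑ j ∈ Finset.range J,
      (2 * (2 ^ (j + 2) * √(a * X) / r) + 1) * (2 * (√(a * X) / 2 ^ j) / a + 1) ≤
        16 * J / r * X + B * √X := by
  refine ⟨∑ j ∈ Finset.range J, (2 * (2 ^ (j + 2) * √a / r) + 2 * (√a / 2 ^ j) / a + 1),
    by positivity, fun X hX => ?_⟩
  have hterm (j : ℕ) :
      (2 * (2 ^ (j + 2) * √(a * X) / r) + 1) * (2 * (√(a * X) / 2 ^ j) / a + 1) ≤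
        16 / r * X + (2 * (2 ^ (j + 2) * √a / r) + 2 * (√a / 2 ^ j) / a + 1) * √X := by
    have hmain : 2 * (2 ^ (j + 2) * (√a * √X) / r) * (2 * (√a * √X / 2 ^ j) / a) =
        16 / r * X := by
      field_simp
      rw [Real.sq_sqrt ha.le, Real.sq_sqrt (by linarith)]
      ring
    rw [Real.sqrt_mul ha.le]
    linear_combination hmain + Real.one_le_sqrt.2 hX
  calc _ ≤ _ := Finset.sum_le_sum fun j _ => hterm j
    _ = _ := by
      rw [Finset.sum_add_distrib, Finset.sum_const, Finset.card_range, nsmul_eq_mul,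
        ← Finset.sum_mul]
      ring

end LatticePoints

section RootPairs

variable {p q : ℤ} {X : ℕ}

open Classical in
/-- The pairs `(a, t)` with `t < a ≤ X` that describe the ideals `rootIdeal p q a t` of index `a`
coprime to the discriminant. -/
def rootPairs (p q : ℤ) (X : ℕ) : Finset (Σ _ : ℕ, ℕ) :=
  (Finset.Icc 1 X).sigma fun a =>
    {t ∈ Finset.range a | IsCoprime (a : ℤ) (q ^ 2 + 4 * p) ∧ (a : ℤ) ∣ omegaPoly p q t}

lemma mem_rootPairs {x : Σ _ : ℕ, ℕ} : x ∈ rootPairs p q X ↔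
    x.1 ∈ Finset.Icc 1 X ∧ x.2 < x.1 ∧ IsCoprime (x.1 : ℤ) (q ^ 2 + 4 * p) ∧
      (x.1 : ℤ) ∣ omegaPoly p q x.2 := by
  simp [rootPairs]

-- Distinct pairs give distinct ideals, so each `α` determines at most one of them.
lemma card_le_card_of_span_mul_rootIdeal_eq [Fact (¬ IsSquare (q ^ 2 + 4 * p))] {a₀ t₀ : ℤ}
    (ha₀ : a₀ ≠ 0) {F : Finset (Σ _ : ℕ, ℕ)} (hF : F ⊆ rootPairs p q X)
    {S : Finset (QuadraticAlgebra ℤ p q)}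
    (h : ∀ x ∈ F, ∃ α ∈ S, Ideal.span {α} * rootIdeal p q a₀ t₀ =
      Ideal.span {(a₀ : QuadraticAlgebra ℤ p q)} * rootIdeal p q x.1 x.2) :
    F.card ≤ S.card := by
  refine Finset.card_le_card_of_forall_subsingleton _ h fun α _ x hx y hy => ?_
  have heq := hx.2.symm.trans hy.2
  rw [Ideal.span_singleton_mul_right_inj (by simpa using ha₀)] at heq
  obtain ⟨-, hxlt, -, hxdvd⟩ := mem_rootPairs.1 (hF hx.1)
  obtain ⟨-, hylt, -, hydvd⟩ := mem_rootPairs.1 (hF hy.1)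
  obtain ⟨h1, h2⟩ := rootIdeal_injective hxdvd hydvd (Int.natCast_nonneg _)
    (Int.ofNat_lt.2 hxlt) (Int.natCast_nonneg _) (Int.ofNat_lt.2 hylt) heq
  exact Sigma.ext (Int.ofNat_inj.1 h1) (heq_of_eq (Int.ofNat_inj.1 h2))

lemma isInvertibleIdeal_of_mem_rootPairs [Fact (¬ IsSquare (q ^ 2 + 4 * p))]
    {x : Σ _ : ℕ, ℕ} (hx : x ∈ rootPairs p q X) :
    IsInvertibleIdeal (rootIdeal p q x.1 x.2) := by
  obtain ⟨hX, -, hcop, hdvd⟩ := mem_rootPairs.1 hx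
  refine isInvertibleIdeal_rootIdeal hdvd hcop ?_
  have := (Finset.mem_Icc.1 hX).1
  lia

end RootPairs

section FiberBound

variable {n : ℤ} {ε : ℝ}

lemma exists_span_mul_rootIdeal_eq_of_mem_rootPairs [hn : Fact (3 ≤ n)] (hε : 1 < ε)
    (h : ε ^ 2 = n * ε - 1) (h' : ε⁻¹ ^ 2 = n * ε⁻¹ - 1) {X₀ X : ℕ} {x₀ x : Σ _ : ℕ, ℕ}
    (hx₀ : x₀ ∈ rootPairs (-1) n X₀) (hx : x ∈ rootPairs (-1) n X)
    (heq : idealClass (rootIdeal (-1) n x₀.1 x₀.2) = idealClass (rootIdeal (-1) n x.1 x.2)) :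
    ∃ α : NormOneOrder n, Ideal.span {α} * rootIdeal (-1) n x₀.1 x₀.2 =
        Ideal.span {((x₀.1 : ℤ) : NormOneOrder n)} * rootIdeal (-1) n x.1 x.2 ∧
      (x₀.1 : ℤ) ∣ α.re + (n - x₀.2) * α.im ∧
      |realEmbedding h α| ∈ Set.Ico |realEmbedding h' α| (ε ^ 2 * |realEmbedding h' α|) ∧
      |(α.norm : ℝ)| ≤ x₀.1 * X := by
  obtain ⟨hX₀, -, hcop₀, hdvd₀⟩ := mem_rootPairs.1 hx₀
  obtain ⟨hX, -, hcop, hdvd⟩ := mem_rootPairs.1 hx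
  rw [Finset.mem_Icc] at hX₀ hX
  have ha₀ : (x₀.1 : ℤ) ≠ 0 := by lia
  obtain ⟨β, hβ, hβeq⟩ := exists_span_mul_rootIdeal_eq_of_idealClass_eq
    (isInvertibleIdeal_of_mem_rootPairs hx) (isInvertibleIdeal_of_mem_rootPairs hx₀) ha₀ heq
  obtain ⟨u, hu⟩ := exists_unit_mul_abs_mem_Ico hε h h'
    ((quadraticAlgebra_norm_eq_zero_iff (not_isSquare_sq_sub_four hn.out)).not.2 hβ)
  rw [← Ideal.span_singleton_mul_right_unit u.isUnit] at hβeq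
  refine ⟨β * u, hβeq, dvd_of_span_mul_rootIdeal_eq hβeq, hu, ?_⟩
  have hnorm := abs_norm_le_of_span_mul_rootIdeal_eq hdvd hcop (by lia) hdvd₀ hcop₀ ha₀ hβeq
  calc |((β * u).norm : ℝ)| ≤ x₀.1 * x.1 := by
        rw [abs_of_nonneg (by positivity : (0 : ℤ) ≤ x₀.1 * x.1)] at hnorm
        exact_mod_cast hnorm
    _ ≤ x₀.1 * X := by
        gcongr
        exact hX.2

open Classical in
lemma exists_card_filter_idealClass_le [Fact (3 ≤ n)] (hε : 1 < ε) (h : ε ^ 2 = n * ε - 1)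
    (h' : ε⁻¹ ^ 2 = n * ε⁻¹ - 1) {J : ℕ} (hJ : ε ^ 2 ≤ 4 ^ J)
    (c : ClassGroup (NormOneOrder n)) : ∃ B : ℝ, 0 ≤ B ∧ ∀ X : ℕ,
      (({x ∈ rootPairs (-1) n X | idealClass (rootIdeal (-1) n x.1 x.2) = c}.card : ℕ) : ℝ) ≤
        16 * J / (ε - ε⁻¹) * X + B * √X := by
  have hr : 0 < ε - ε⁻¹ := sub_pos.2 ((inv_lt_one_of_one_lt₀ hε).trans hε)
  by_cases hc : ∃ X₀, ∃ x₀ ∈ rootPairs (-1) n X₀, idealClass (rootIdeal (-1) n x₀.1 x₀.2) = c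
  swap
  · refine ⟨0, le_rfl, fun X => ?_⟩
    rw [Finset.filter_false_of_mem fun x hx hxc => hc ⟨X, x, hx, hxc⟩, Finset.card_empty,
      Nat.cast_zero]
    positivity
  obtain ⟨X₀, x₀, hx₀, rfl⟩ := hc
  have ha₀ : 0 < x₀.1 := (Finset.mem_Icc.1 (mem_rootPairs.1 hx₀).1).1
  obtain ⟨B, hB, hsum⟩ := exists_sum_mul_sqrt_mul_le hr (Nat.cast_pos.2 ha₀) J
  refine ⟨B, hB, fun X => ?_⟩
  obtain rfl | hX := X.eq_zero_or_pos
  · simp [rootPairs]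
  obtain ⟨S, hS, hcard⟩ := exists_finset_of_abs_norm_le hε h h' hJ (Int.natCast_pos.2 ha₀)
    (n - x₀.2) (x₀.1 * X)
  refine (Nat.cast_le.2 (card_le_card_of_span_mul_rootIdeal_eq (S := S) (a₀ := x₀.1) (t₀ := x₀.2)
    (by lia) (Finset.filter_subset _ _) fun x hx => ?_)).trans (hcard.trans ?_)
  · rw [Finset.mem_filter] at hx
    obtain ⟨α, hα, hdvd, hIco, hnorm⟩ :=
      exists_span_mul_rootIdeal_eq_of_mem_rootPairs hε h h' hx₀ hx.1 hx.2.symm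
    exact ⟨α, hS α hdvd hIco hnorm, hα⟩
  · exact_mod_cast hsum X (Nat.one_le_cast.2 hX)

end FiberBound

/-! ### The class number -/

section LowerBound

variable {n : ℤ} {X : ℕ}

lemma rootCount_le_card_filter {a : ℕ} (ha : a ≠ 0) :
    rootCount n a ≤ ({t ∈ Finset.range a | (a : ℤ) ∣ omegaPoly (-1) n (t : ℕ)}).card := by
  have : NeZero a := ⟨ha⟩
  rw [rootCount, Nat.card_eq_fintype_card, ← Finset.card_univ]
  refine Finset.card_le_card_of_injOn (fun t => t.1.val) (fun t _ => ?_)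
    fun t _ s _ hts => Subtype.ext (ZMod.val_injective a hts)
  rw [Finset.mem_coe, Finset.mem_filter, Finset.mem_range]
  refine ⟨ZMod.val_lt t.1, (ZMod.intCast_zmod_eq_zero_iff_dvd _ a).1 ?_⟩
  simpa [omegaPoly] using t.2

lemma sum_coprimeRootCount_le_card_rootPairs {D : ℕ} (hD : (D : ℤ) + 4 = n ^ 2) :
    ∑ m ∈ Finset.Icc 1 X, coprimeRootCount n (4 * D) m ≤ (rootPairs (-1) n X).card := by
  rw [rootPairs, Finset.card_sigma]
  refine Finset.sum_le_sum fun a ha => ?_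
  have ha0 : a ≠ 0 := Nat.one_le_iff_ne_zero.1 (Finset.mem_Icc.1 ha).1
  rw [coprimeRootCount_apply ha0]
  split_ifs with hcop
  · have hcop' : IsCoprime (a : ℤ) (n ^ 2 + 4 * (-1)) := by
      rw [← hD, mul_neg_one, add_neg_cancel_right, Nat.isCoprime_iff_coprime]
      exact hcop.coprime_mul_left_right
    simpa only [hcop', true_and] using rootCount_le_card_filter ha0
  · exact zero_le

lemma exists_card_rootPairs_le [Fact (3 ≤ n)] {ε : ℝ} (hε : 1 < ε) (h : ε ^ 2 = n * ε - 1)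
    (h' : ε⁻¹ ^ 2 = n * ε⁻¹ - 1) {J : ℕ} (hJ : ε ^ 2 ≤ 4 ^ J) : ∃ B : ℝ, 0 ≤ B ∧ ∀ X : ℕ,
      ((rootPairs (-1) n X).card : ℝ) ≤
        Nat.card (ClassGroup (NormOneOrder n)) * (16 * J / (ε - ε⁻¹)) * X + B * √X := by
  classical
  have := Fintype.ofFinite (ClassGroup (NormOneOrder n))
  choose B hB hcard using exists_card_filter_idealClass_le hε h h' hJ
  refine ⟨∑ c, B c, Finset.sum_nonneg fun c _ => hB c, fun X => ?_⟩
  rw [Finset.card_eq_sum_card_fiberwise (t := Finset.univ)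
    (f := fun x => idealClass (rootIdeal (-1) n x.1 x.2))
    fun _ _ => Finset.mem_coe.2 (Finset.mem_univ _)]
  push_cast
  refine (Finset.sum_le_sum fun c _ => hcard c X).trans_eq ?_
  rw [Finset.sum_add_distrib, Finset.sum_const, Finset.card_univ, Nat.card_eq_fintype_card,
    Finset.sum_mul, nsmul_eq_mul, mul_assoc]

lemma LFunction_jacobiChar_one_re_mul_prod_le [Fact (3 ≤ n)] {D : ℕ} [NeZero D]
    (hsq : ¬ IsSquare D) (hD : (D : ℤ) + 4 = n ^ 2) {ε : ℝ} (hε : 1 < ε)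
    (h : ε ^ 2 = n * ε - 1) (h' : ε⁻¹ ^ 2 = n * ε⁻¹ - 1) {J : ℕ} (hJ : ε ^ 2 ≤ 4 ^ J) :
    ((jacobiChar D).LFunction 1).re * ∏ p ∈ (4 * D).primeFactors, (1 - (p : ℝ)⁻¹) ≤
      2 * (Nat.card (ClassGroup (NormOneOrder n)) * (16 * J / (ε - ε⁻¹))) := by
  obtain ⟨B, hB, hcard⟩ := exists_card_rootPairs_le hε h h' hJ
  have hr : 0 < ε - ε⁻¹ := sub_pos.2 ((inv_lt_one_of_one_lt₀ hε).trans hε)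
  refine LFunction_one_re_mul_prod_le (jacobiChar_ne_one hsq) jacobiChar_sq
    (isMultiplicative_coprimeRootCount n (4 * D))
    (fun p hp hχ => two_le_coprimeRootCount_prime_pow hD hp hχ) (by positivity) hB
    fun X => le_trans ?_ (hcard X)
  exact_mod_cast sum_coprimeRootCount_le_card_rootPairs hD

lemma exists_real_root {x : ℝ} (hx : 3 ≤ x) :
    ∃ ε : ℝ, 1 < ε ∧ ε ≤ x ∧ x / 2 ≤ ε - ε⁻¹ ∧ ε ^ 2 = x * ε - 1 ∧ ε⁻¹ ^ 2 = x * ε⁻¹ - 1 := by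
  have hs : √(x ^ 2 - 4) ^ 2 = x ^ 2 - 4 := Real.sq_sqrt (by nlinarith)
  have hxs : x / 2 ≤ √(x ^ 2 - 4) := Real.le_sqrt_of_sq_le (by nlinarith)
  have hinv : ((x + √(x ^ 2 - 4)) / 2)⁻¹ = (x - √(x ^ 2 - 4)) / 2 := by
    refine inv_eq_of_mul_eq_one_right ?_
    linear_combination (-1 / 4) * hs
  refine ⟨(x + √(x ^ 2 - 4)) / 2, by linarith, ?_, ?_, ?_, ?_⟩
  · nlinarith
  · rw [hinv]
    linarith
  · linear_combination (1 / 4) * hs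
  · rw [hinv]
    linear_combination (1 / 4) * hs

lemma exists_sq_le_four_pow {δ : ℝ} (hδ : 0 < δ) :
    ∃ C : ℝ, 0 < C ∧ ∀ x : ℝ, 1 ≤ x → ∃ J : ℕ, x ^ 2 ≤ 4 ^ J ∧ (J : ℝ) ≤ C * x ^ δ := by
  refine ⟨(δ * Real.log 2)⁻¹ + 1, by positivity, fun x hx => ?_⟩
  refine ⟨⌈Real.logb 2 x⌉₊, ?_, ?_⟩
  · have : x ≤ 2 ^ ⌈Real.logb 2 x⌉₊ := by
      rw [← Real.rpow_natCast, ← Real.logb_le_iff_le_rpow one_lt_two (by linarith)]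
      exact Nat.le_ceil _
    calc x ^ 2 ≤ (2 ^ ⌈Real.logb 2 x⌉₊) ^ 2 := by gcongr
      _ = 4 ^ ⌈Real.logb 2 x⌉₊ := by rw [pow_right_comm]; norm_num
  · calc (⌈Real.logb 2 x⌉₊ : ℝ) ≤ Real.logb 2 x + 1 :=
          (Nat.ceil_lt_add_one (Real.logb_nonneg one_lt_two hx)).le
      _ ≤ x ^ δ / δ / Real.log 2 + x ^ δ := by
          rw [Real.logb]
          gcongr
          · exact Real.log_le_rpow_div (by linarith) hδ
          · exact Real.one_le_rpow hx hδ.le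
      _ = ((δ * Real.log 2)⁻¹ + 1) * x ^ δ := by
          field_simp

lemma exists_le_LFunction_jacobiChar_one_re_mul_prod {δ : ℝ} (hδ : 0 < δ) :
    ∃ c : ℝ, 0 < c ∧ ∀ (D : ℕ) [NeZero D], ¬ IsSquare D →
      c * ((4 * D : ℕ) : ℝ) ^ (-(2 * δ)) ≤
        ((jacobiChar D).LFunction 1).re * ∏ p ∈ (4 * D).primeFactors, (1 - (p : ℝ)⁻¹) := by
  obtain ⟨c, hc, hL⟩ := exists_le_LFunction_one_re hδ
  obtain ⟨d, hd, hprod⟩ := exists_le_prod_one_sub_inv hδ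
  refine ⟨c * d, by positivity, fun D _ hD => ?_⟩
  have hN : (0 : ℝ) < (4 * D : ℕ) := Nat.cast_pos.2 (Nat.pos_of_neZero _)
  calc c * d * ((4 * D : ℕ) : ℝ) ^ (-(2 * δ))
      = c * ((4 * D : ℕ) : ℝ) ^ (-δ) * (d * ((4 * D : ℕ) : ℝ) ^ (-δ)) := by
        rw [two_mul, neg_add, Real.rpow_add hN]
        ring
    _ ≤ _ := by
        have := hL (4 * D) (jacobiChar D) (jacobiChar_ne_one hD) jacobiChar_sq
        exact mul_le_mul this (hprod _ (NeZero.ne _)) (by positivity)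
          (le_trans (by positivity) this)

lemma exists_natCast_add_four_eq_sq (hn : 3 ≤ n) :
    ∃ D : ℕ, D ≠ 0 ∧ ¬ IsSquare D ∧ (D : ℤ) + 4 = n ^ 2 := by
  obtain ⟨D, hD⟩ := Int.eq_ofNat_of_zero_le (by nlinarith : 0 ≤ n ^ 2 - 4)
  refine ⟨D, ?_, fun ⟨k, hk⟩ => not_isSquare_sq_sub_four hn ⟨k, ?_⟩, by linarith⟩
  · rintro rfl
    rw [Nat.cast_zero] at hD
    nlinarith
  · rw [hk] at hD
    push_cast at hD
    linarith

lemma exists_le_card_classGroup_mul_rpow {δ : ℝ} (hδ : 0 < δ) :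
    ∃ c : ℝ, 0 < c ∧ ∀ (n : ℤ) [Fact (3 ≤ n)],
      c * (n : ℝ) ^ (-(8 * δ)) ≤
        Nat.card (ClassGroup (NormOneOrder n)) * (n : ℝ) ^ (δ - 1) := by
  obtain ⟨c, hc, hlower⟩ := exists_le_LFunction_jacobiChar_one_re_mul_prod hδ
  obtain ⟨C, hC, hpow⟩ := exists_sq_le_four_pow hδ
  refine ⟨c / (64 * C), by positivity, fun n hn => ?_⟩
  have hn3 : (3 : ℝ) ≤ n := by exact_mod_cast hn.out
  have hn0 : (0 : ℝ) < n := by linarith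
  obtain ⟨D, hD0, hsq, hD⟩ := exists_natCast_add_four_eq_sq hn.out
  have : NeZero D := ⟨hD0⟩
  have hDn : ((4 * D : ℕ) : ℝ) ≤ (n : ℝ) ^ 4 := by
    have : (D : ℝ) + 4 = (n : ℝ) ^ 2 := by exact_mod_cast hD
    push_cast
    nlinarith
  obtain ⟨ε, hε, hεn, hεr, h, h'⟩ := exists_real_root hn3
  obtain ⟨J, hJ, hJC⟩ := hpow n (by linarith)
  have hJ' : ε ^ 2 ≤ 4 ^ J := le_trans (by gcongr) hJ
  rw [div_mul_eq_mul_div, div_le_iff₀ (by positivity)]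
  calc c * (n : ℝ) ^ (-(8 * δ)) = c * ((n : ℝ) ^ 4) ^ (-(2 * δ)) := by
        rw [← Real.rpow_natCast, ← Real.rpow_mul hn0.le]
        congr 2
        push_cast
        ring
    _ ≤ c * ((4 * D : ℕ) : ℝ) ^ (-(2 * δ)) := by
        gcongr c * ?_
        have hpos : (0 : ℝ) < (4 * D : ℕ) := Nat.cast_pos.2 (Nat.pos_of_neZero _)
        exact Real.rpow_le_rpow_of_nonpos hpos hDn (by linarith)
    _ ≤ 2 * (Nat.card (ClassGroup (NormOneOrder n)) * (16 * J / (ε - ε⁻¹))) :=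
        (hlower D hsq).trans (LFunction_jacobiChar_one_re_mul_prod_le hsq hD hε h h' hJ')
    _ ≤ 2 * (Nat.card (ClassGroup (NormOneOrder n)) * (16 * (C * (n : ℝ) ^ δ) / (n / 2))) := by
        gcongr
    _ = Nat.card (ClassGroup (NormOneOrder n)) * (n : ℝ) ^ (δ - 1) * (64 * C) := by
        rw [Real.rpow_sub_one hn0.ne']
        ring

theorem exists_le_card_classGroup {δ : ℝ} (hδ : 0 < δ) :
    ∃ c : ℝ, 0 < c ∧ ∀ (n : ℤ) [Fact (3 ≤ n)],
      c * (n : ℝ) ^ (1 - 9 * δ) ≤ Nat.card (ClassGroup (NormOneOrder n)) := by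
  obtain ⟨c, hc, hle⟩ := exists_le_card_classGroup_mul_rpow hδ
  refine ⟨c, hc, fun n hn => ?_⟩
  have hn0 : (0 : ℝ) < n := Int.cast_pos.2 (by linarith [hn.out])
  calc c * (n : ℝ) ^ (1 - 9 * δ) = c * (n : ℝ) ^ (-(8 * δ)) * (n : ℝ) ^ (1 - δ) := by
        rw [mul_assoc, ← Real.rpow_add hn0]
        ring_nf
    _ ≤ Nat.card (ClassGroup (NormOneOrder n)) * (n : ℝ) ^ (δ - 1) * (n : ℝ) ^ (1 - δ) := by
        exact mul_le_mul_of_nonneg_right (hle n) (by positivity)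
    _ = Nat.card (ClassGroup (NormOneOrder n)) := by
        rw [mul_assoc, ← Real.rpow_add hn0, sub_add_sub_cancel, sub_self, Real.rpow_zero, mul_one]

end LowerBound

section ComplexEmbedding

open QuadraticAlgebra
open scoped QuadraticAlgebra

lemma sqrtD_sq (d : ℤ) : sqrtD d ^ 2 = d := by
  rw [sqrtD]
  split_ifs with hd
  · rw [← Complex.ofReal_pow, Real.sq_sqrt (Int.cast_nonneg hd), Complex.ofReal_intCast]
  · have hd' : (0 : ℝ) ≤ -d := by exact_mod_cast (by lia : 0 ≤ -d)
    rw [mul_pow, Complex.I_sq, ← Complex.ofReal_pow, Real.sq_sqrt hd']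
    push_cast
    ring

variable (p q : ℤ)

/-- The embedding of `ℤ[ω]`, `ω² = qω + p`, into `ℂ` that sends `ω` to `(q + √Δ) / 2`, where
`Δ = q² + 4p`. -/
def complexEmbedding : QuadraticAlgebra ℤ p q →ₐ[ℤ] ℂ :=
  lift ⟨(q + sqrtD (q ^ 2 + 4 * p)) / 2, by
    have := sqrtD_sq (q ^ 2 + 4 * p)
    simp only [zsmul_eq_mul]
    push_cast at this ⊢
    linear_combination this / 4⟩

lemma complexEmbedding_apply (z : QuadraticAlgebra ℤ p q) :
    complexEmbedding p q z = z.re + z.im * ((q + sqrtD (q ^ 2 + 4 * p)) / 2) := by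
  simp [complexEmbedding, lift_apply_apply]

lemma complexEmbedding_injective [hΔ : Fact (¬ IsSquare (q ^ 2 + 4 * p))] :
    Function.Injective (complexEmbedding p q) := by
  rw [injective_iff_map_eq_zero]
  intro z hz
  rw [← quadraticAlgebra_norm_eq_zero_iff hΔ.out]
  have hnorm : complexEmbedding p q (algebraMap ℤ _ z.norm) = 0 := by
    rw [algebraMap_norm_eq_mul_star, map_mul, hz, zero_mul]
  simpa using hnorm

lemma exists_omegaD_eq_complexEmbedding_omega_add :
    ∃ j : ℤ, omegaD (q ^ 2 + 4 * p) = complexEmbedding p q ω + j := by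
  obtain ⟨j, hj⟩ := Int.even_mul_pred_self q
  refine ⟨j + 2 * p, ?_⟩
  have hj' : (q : ℂ) * (q - 1) = j + j := by exact_mod_cast hj
  rw [omegaD, complexEmbedding_apply]
  push_cast
  simp only [omega_re, omega_im, Int.cast_zero, Int.cast_one, one_mul, zero_add]
  linear_combination hj' / 2

lemma range_complexEmbedding :
    (complexEmbedding p q : QuadraticAlgebra ℤ p q →+* ℂ).range = QOrder (q ^ 2 + 4 * p) := by
  obtain ⟨j, hj⟩ := exists_omegaD_eq_complexEmbedding_omega_add p q
  apply le_antisymm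
  · rintro _ ⟨z, rfl⟩
    have hω : complexEmbedding p q ω ∈ QOrder (q ^ 2 + 4 * p) := by
      rw [← sub_eq_of_eq_add hj]
      exact sub_mem (Subring.subset_closure rfl) (intCast_mem _ j)
    have hz : complexEmbedding p q z = z.re + z.im * complexEmbedding p q ω := by
      simp [complexEmbedding_apply]
    exact hz ▸ add_mem (intCast_mem _ _) (mul_mem (intCast_mem _ _) hω)
  · rw [QOrder, Subring.closure_le, Set.singleton_subset_iff]
    exact ⟨(ω : QuadraticAlgebra ℤ p q) + j, by simp [hj]⟩

theorem classNumber_eq_card_classGroup [Fact (¬ IsSquare (q ^ 2 + 4 * p))] :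
    classNumber (q ^ 2 + 4 * p) = Nat.card (ClassGroup (QuadraticAlgebra ℤ p q)) := by
  let f : QuadraticAlgebra ℤ p q →+* ℂ := complexEmbedding p q
  have e : QuadraticAlgebra ℤ p q ≃+* f.range := RingEquiv.ofBijective f.rangeRestrict
    ⟨fun _ _ h => complexEmbedding_injective p q (congrArg Subtype.val h),
      f.rangeRestrict_surjective⟩
  exact (Nat.card_congr (ClassGroup.mulEquiv
    (e.trans (RingEquiv.subringCongr (range_complexEmbedding p q)))).toEquiv).symm

end ComplexEmbedding

section LogAsymptotics

open Filter Topology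

lemma tendsto_log_sub_log_div_log {ι : Type*} {l : Filter ι} {f x : ι → ℝ}
    (hx : Tendsto x l atTop)
    (hlower : ∀ δ : ℝ, 0 < δ → ∃ c : ℝ, 0 < c ∧ ∀ᶠ i in l, c * x i ^ (1 - δ) ≤ f i)
    (hupper : ∀ δ : ℝ, 0 < δ → ∃ C : ℝ, 0 < C ∧ ∀ᶠ i in l, f i ≤ C * x i ^ (1 + δ)) :
    Tendsto (fun i => (Real.log (f i) - Real.log (x i)) / Real.log (x i)) l (𝓝 0) := by
  refine (Asymptotics.isLittleO_iff.2 fun δ hδ => ?_).tendsto_div_nhds_zero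
  obtain ⟨c, hc, hcf⟩ := hlower (δ / 2) (half_pos hδ)
  obtain ⟨C, hC, hfC⟩ := hupper (δ / 2) (half_pos hδ)
  have hlog : Tendsto (fun i => δ / 2 * Real.log (x i)) l atTop :=
    (Real.tendsto_log_atTop.comp hx).const_mul_atTop (half_pos hδ)
  filter_upwards [hcf, hfC, hx.eventually_gt_atTop 1, hlog.eventually_ge_atTop (-Real.log c),
    hlog.eventually_ge_atTop (Real.log C)] with i hcf hfC hx hlogc hlogC
  have hx0 : 0 < x i := by linarith
  have hcpos : 0 < c * x i ^ (1 - δ / 2) := by positivity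
  have hlog_lower := Real.log_le_log hcpos hcf
  have hlog_upper := Real.log_le_log (hcpos.trans_le hcf) hfC
  rw [Real.log_mul hc.ne' (by positivity), Real.log_rpow hx0] at hlog_lower
  rw [Real.log_mul hC.ne' (by positivity), Real.log_rpow hx0] at hlog_upper
  rw [Real.norm_of_nonneg (Real.log_pos hx).le, Real.norm_eq_abs, abs_le]
  constructor <;> linarith

end LogAsymptotics

/-- For `Δ⁺ₙ = n² - 4`, `log h(Δ⁺ₙ) = log n + o(log n)` as `n → ∞`. -/
theorem log_classNumber_sub_asymptotic :
    Filter.Tendsto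
      (fun n : ℕ =>
        (Real.log (classNumber ((n : ℤ) ^ 2 - 4)) - Real.log n) / Real.log n)
      Filter.atTop (nhds 0) := by
  have hclass : ∀ (n : ℤ) [Fact (3 ≤ n)],
      classNumber (n ^ 2 - 4) = Nat.card (ClassGroup (NormOneOrder n)) := fun n _ => by
    rw [← classNumber_eq_card_classGroup, mul_neg_one, ← sub_eq_add_neg]
  refine tendsto_log_sub_log_div_log tendsto_natCast_atTop_atTop (fun δ hδ => ?_) fun δ hδ => ?_
  · obtain ⟨c, hc, hle⟩ := exists_le_card_classGroup (δ := δ / 9) (by positivity)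
    refine ⟨c, hc, (Filter.eventually_ge_atTop 3).mono fun n hn => ?_⟩
    have : Fact ((3 : ℤ) ≤ n) := ⟨mod_cast hn⟩
    simpa only [hclass, Int.cast_natCast, mul_div_cancel₀ δ (by norm_num : (9 : ℝ) ≠ 0)]
      using hle n
  · obtain ⟨C, hC, hle⟩ := exists_card_classGroup_le (δ := δ / 2) (by positivity)
    refine ⟨C, hC, (Filter.eventually_ge_atTop 3).mono fun n hn => ?_⟩
    have : Fact ((3 : ℤ) ≤ n) := ⟨mod_cast hn⟩
    simpa only [hclass, Int.cast_natCast, mul_div_cancel₀ δ (two_ne_zero' ℝ)] using hle n
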